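/- arXiv:1812.03435 — 2 statements merged into one kernel-verified Lean document; each statement's English description precedes it below -/
import Mathlib

section
/- Let S be a simple N-module. The following conditions are equivalent: (1) there exists t ∈ ℤ_+ such that the actions of L_i and G_{i−1/2} on S are locally finite for all i ≥ t; (2) there exists t ∈ ℤ_+ such that the actions of L_i and G_{i−1/2} on S are locally nilpotent for all i ≥ t; (3) there exists t ∈ ℤ_+ such that S is a locally finite m^(t)-module; (4) there exists t ∈ ℤ_+ such that S is a locally nilpotent m^(t)-module; (5) S is a highest weight module, or there exist ℓ ∈ ℂ, t ∈ ℤ_+ and a simple b-module V such that the action of L_t on V is injective, L_i V = 0 for all i > t, and S ≅ Ind_ℓ(V). -/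
/-- A module over the Neveu–Schwarz algebra. `L m` is the action of `L_m`,
`G j` is the action of `G_{j - 1/2”}`, `C` is the action of the central element `c`. -/
structure NSRep : Type 1 where
  carrier : Type
  [isAddCommGroup : AddCommGroup carrier]
  [isModule : Module ℂ carrier]
  L : ℤ → carrier →ₗ[ℂ] carrier
  G : ℤ → carrier →ₗ[ℂ] carrier
  C : carrier →ₗ[ℂ] carrier
  commC_L : ∀ (m : ℤ) (v : carrier), C (L m v) = L m (C v)
  commC_G : ∀ (j : ℤ) (v : carrier), C (G j v) = G j (C v)
  rel_LL : ∀ (m n : ℤ) (v : carrier),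
    L m (L n v) - L n (L m v)
      = ((m : ℂ) - n) • L (m + n) v
        + (if m + n = 0 then ((m : ℂ) ^ 3 - m) / 12 else 0) • C v
  rel_LG : ∀ (m j : ℤ) (v : carrier),
    L m (G j v) - G j (L m v) = (((m : ℂ) - 2 * j + 1) / 2) • G (m + j) v
  rel_GG : ∀ (j k : ℤ) (v : carrier),
    G j (G k v) + G k (G j v)
      = (2 : ℂ) • L (j + k - 1) v
        + (if j + k = 1 then ((j : ℂ) ^ 2 - j) / 3 else 0) • C v

attribute [instance] NSRep.isAddCommGroup NSRep.isModule

def NSRep.Invariant (M : NSRep) (p : Submodule ℂ M.carrier) : Prop :=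
  (∀ (m : ℤ), ∀ v ∈ p, M.L m v ∈ p) ∧ (∀ (j : ℤ), ∀ v ∈ p, M.G j v ∈ p) ∧
    (∀ v ∈ p, M.C v ∈ p)

def NSRep.IsSimple (M : NSRep) : Prop :=
  (∃ v : M.carrier, v ≠ 0) ∧
    ∀ p : Submodule ℂ M.carrier, M.Invariant p → p = ⊥ ∨ p = ⊤

def NSRep.IsRestricted (M : NSRep) : Prop :=
  ∀ v : M.carrier, ∃ N : ℤ, ∀ i : ℤ, N ≤ i → M.L i v = 0 ∧ M.G i v = 0

def NSRep.HasCentralCharge (M : NSRep) (ℓ : ℂ) : Prop :=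
  ∀ v : M.carrier, M.C v = ℓ • v

/-- A module over the subalgebra `b = ⊕_{i ≥ 0} ℂ L_i ⊕ ⊕_{i ≥ 1} ℂ G_{i-1/2}`.
`L i` is the action of `L_i` and `G j` is the action of `G_{j + 1/2}`. -/
structure BRep : Type 1 where
  carrier : Type
  [isAddCommGroup : AddCommGroup carrier]
  [isModule : Module ℂ carrier]
  L : ℕ → carrier →ₗ[ℂ] carrier
  G : ℕ → carrier →ₗ[ℂ] carrier
  rel_LL : ∀ (m n : ℕ) (v : carrier),
    L m (L n v) - L n (L m v) = ((m : ℂ) - n) • L (m + n) v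
  rel_LG : ∀ (m j : ℕ) (v : carrier),
    L m (G j v) - G j (L m v) = (((m : ℂ) - 2 * j - 1) / 2) • G (m + j) v
  rel_GG : ∀ (j k : ℕ) (v : carrier),
    G j (G k v) + G k (G j v) = (2 : ℂ) • L (j + k + 1) v

attribute [instance] BRep.isAddCommGroup BRep.isModule

def BRep.Invariant (V : BRep) (p : Submodule ℂ V.carrier) : Prop :=
  (∀ (i : ℕ), ∀ v ∈ p, V.L i v ∈ p) ∧ (∀ (j : ℕ), ∀ v ∈ p, V.G j v ∈ p)

def BRep.IsSimple (V : BRep) : Prop :=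
  (∃ v : V.carrier, v ≠ 0) ∧
    ∀ p : Submodule ℂ V.carrier, V.Invariant p → p = ⊥ ∨ p = ⊤

/-- `ι` is a homomorphism of `b`-modules from the `b`-module `V` to the restriction
of the Neveu–Schwarz module `M` to `b` (under which `BRep.G j = G_{j+1/2}`
corresponds to `NSRep.G (j+1)`). -/
def IsBLinear (V : BRep) (M : NSRep) (ι : V.carrier →ₗ[ℂ] M.carrier) : Prop :=
  (∀ (i : ℕ) (v : V.carrier), ι (V.L i v) = M.L (i : ℤ) (ι v)) ∧
    (∀ (j : ℕ) (v : V.carrier), ι (V.G j v) = M.G ((j : ℤ) + 1) (ι v))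

def IsNSHom (M W : NSRep) (F : M.carrier →ₗ[ℂ] W.carrier) : Prop :=
  (∀ (m : ℤ) (v : M.carrier), F (M.L m v) = W.L m (F v)) ∧
    (∀ (j : ℤ) (v : M.carrier), F (M.G j v) = W.G j (F v)) ∧
    (∀ v : M.carrier, F (M.C v) = W.C (F v))

/-- `M`, together with the `b`-module map `ι : V → M`, is the induced module
`Ind_ℓ(V) = U(N) ⊗_{U(b)} V / (c - ℓ)`, characterized by its universal property. -/
def IsInduced (ℓ : ℂ) (V : BRep) (M : NSRep) (ι : V.carrier →ₗ[ℂ] M.carrier) : Prop :=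
  IsBLinear V M ι ∧ M.HasCentralCharge ℓ ∧
    ∀ W : NSRep, W.HasCentralCharge ℓ →
      ∀ f : V.carrier →ₗ[ℂ] W.carrier, IsBLinear V W f →
        ∃! F : M.carrier →ₗ[ℂ] W.carrier, IsNSHom M W F ∧ F.comp ι = f

/-- The module `M` is generated by the vector `v`. -/
def NSRep.GeneratedBy (M : NSRep) (v : M.carrier) : Prop :=
  ∀ p : Submodule ℂ M.carrier, M.Invariant p → v ∈ p → p = ⊤

/-- `M` is a highest weight module over the Neveu–Schwarz algebra: it is generated by a
nonzero vector `v` with `L_0 v = h v`, `c v = ℓ v` and `N_+ v = 0` (recall `N_+` is spanned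
by the `L_n`, `n > 0`, and the `G_{j - 1/2}`, `j ≥ 1`). -/
def NSRep.IsHighestWeight (M : NSRep) : Prop :=
  ∃ (v : M.carrier) (h ℓ : ℂ), v ≠ 0 ∧ M.L 0 v = h • v ∧ M.C v = ℓ • v ∧
    (∀ n : ℤ, 0 < n → M.L n v = 0) ∧ (∀ j : ℤ, 1 ≤ j → M.G j v = 0) ∧
    M.GeneratedBy v

/-- The action of `f` is locally nilpotent: every `v` is killed by some positive power. -/
def LocallyNilpotentEnd {α : Type} [AddCommGroup α] [Module ℂ α] (f : α →ₗ[ℂ] α) : Prop :=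
  ∀ v : α, ∃ n : ℕ, 0 < n ∧ ((f : Module.End ℂ α) ^ n) v = 0

/-- The action of `f` is locally finite: for every `v`, the span of `{fⁿ v : n ∈ ℤ_+}` is
finite dimensional. -/
def LocallyFiniteEnd {α : Type} [AddCommGroup α] [Module ℂ α] (f : α →ₗ[ℂ] α) : Prop :=
  ∀ v : α, FiniteDimensional ℂ
    (Submodule.span ℂ {w : α | ∃ n : ℕ, 0 < n ∧ w = ((f : Module.End ℂ α) ^ n) v})

/-- The set of operators on `M` by which the subalgebra
`m^{(t)} = ⊕_{m>t} ℂ L_m ⊕ ⊕_{m>t} ℂ G_{m-1/2}` acts. -/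
def NSRep.mOps (M : NSRep) (t : ℕ) : Set (M.carrier →ₗ[ℂ] M.carrier) :=
  {f | ∃ m : ℤ, (t : ℤ) < m ∧ (f = M.L m ∨ f = M.G m)}

/-- `S` is a locally finite `m^{(t)}`-module: for every `v`, the span of all vectors obtained
by applying a nonempty finite sequence of operators from `m^{(t)}` to `v` (that is,
`∑_{n ∈ ℤ_+} (m^{(t)})ⁿ v`) is finite dimensional. -/
def NSRep.MLocallyFinite (M : NSRep) (t : ℕ) : Prop :=
  ∀ v : M.carrier, FiniteDimensional ℂ (Submodule.span ℂ
    {w : M.carrier | ∃ ops : List (M.carrier →ₗ[ℂ] M.carrier), ops ≠ [] ∧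
      (∀ f ∈ ops, f ∈ M.mOps t) ∧ w = ops.foldr (fun f x => f x) v})

/-- `S` is a locally nilpotent `m^{(t)}`-module: for every `v` there is `n ∈ ℤ_+` such that
every product of `n` operators from `m^{(t)}` kills `v`. -/
def NSRep.MLocallyNilpotent (M : NSRep) (t : ℕ) : Prop :=
  ∀ v : M.carrier, ∃ n : ℕ, 0 < n ∧
    ∀ ops : List (M.carrier →ₗ[ℂ] M.carrier), ops.length = n →
      (∀ f ∈ ops, f ∈ M.mOps t) → ops.foldr (fun f x => f x) v = 0

/-!
All five conditions say that `S` is restricted: every vector is killed by all generators of large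
degree.

If `L_t` is locally finite for one `t > 0`, then all `L_i` with `i ≥ t` map a given
finite-dimensional space into a common one, so some linear combination of them vanishes there.
Brackets first turn it into a relation `∑ a_i L_{i+n} v = 0` for all large `n` and then remove its
terms one at a time, until `L_n v = 0`, and hence `G_n v = 0`, for all large `n`.

Number the generators `e_k` by twice their degree and let `T ≥ 0` be minimal such that some nonzero
vector of the restricted module `S` is killed by all `e_m` with `m > T`; let `W` be the space of
these vectors. Words in the negative generators applied to vectors of `W` are filtered by a weight
for which the leading term of `[e_{T+k}, e_{-k}]` is a multiple of `e_T` and `e_T` is central in the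
associated graded space, so that `e_{T+k}` and `e_{-k}` act there as Weyl or Clifford pairs. Hence a
submodule generated by a part of `W` on which `e_T` stays injective in the graded space meets `W` in
that part only. For `T > 0` this identifies `S` with the module induced from `W`. For `T = 0` and
`v` in `W`, either `L_0` has an eigenvector among the combinations of the `L_0^n v`, or these are
independent and `L_0 v` generates a submodule which does not contain `v`.
-/

namespace NSRep

variable (M : NSRep)

/-- The generators of the Neveu–Schwarz algebra in a single sequence indexed by twice their
degree: `e (2m) = L_m` and `e (2r) = G_r` for half-integral `r`. -/
noncomputable def e (k : ℤ) : Module.End ℂ M.carrier :=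
  if Even k then M.L (k / 2) else M.G ((k + 1) / 2)

lemma e_two_mul (m : ℤ) : M.e (2 * m) = M.L m := by
  rw [e, if_pos (even_two_mul m)]
  congr 1
  lia

lemma e_two_mul_sub_one (j : ℤ) : M.e (2 * j - 1) = M.G j := by
  rw [e, if_neg (by grind)]
  congr 1
  lia

lemma C_e (k : ℤ) (v : M.carrier) : M.C (M.e k v) = M.e k (M.C v) := by
  rw [e]
  split_ifs
  · exact M.commC_L _ _
  · exact M.commC_G _ _

/-- The space of vectors killed by all `e m` with `m > n`. -/
noncomputable def annihilated (n : ℤ) : Submodule ℂ M.carrier :=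
  ⨅ m ∈ Set.Ioi n, LinearMap.ker (M.e m)

variable {M} in
lemma mem_annihilated {n : ℤ} {v : M.carrier} :
    v ∈ M.annihilated n ↔ ∀ m, n < m → M.e m v = 0 := by
  simp [annihilated]

lemma annihilated_mono : Monotone M.annihilated := fun _ _ h _ hv ↦
  mem_annihilated.2 fun m hm ↦ mem_annihilated.1 hv m (h.trans_lt hm)

variable {M} in
lemma invariant_of_e {p : Submodule ℂ M.carrier} (he : ∀ k, ∀ v ∈ p, M.e k v ∈ p)
    (hC : ∀ v ∈ p, M.C v ∈ p) : M.Invariant p :=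
  ⟨fun m ↦ M.e_two_mul m ▸ he _, fun j ↦ M.e_two_mul_sub_one j ▸ he _, hC⟩

variable {M} in
lemma Invariant.e_mem {p : Submodule ℂ M.carrier} (hp : M.Invariant p) (k : ℤ) {v : M.carrier}
    (hv : v ∈ p) : M.e k v ∈ p := by
  rw [e]
  split_ifs
  · exact hp.1 _ v hv
  · exact hp.2.1 _ v hv

/-- The sign in the supercommutator of `e k` and `e l`. -/
def superSign (k l : ℤ) : ℂ := if Even k ∨ Even l then 1 else -1

/-- The coefficient of `e (k + l)` in the supercommutator of `e k` and `e l`. -/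
noncomputable def structureConst (k l : ℤ) : ℂ :=
  if Even k then if Even l then ((k : ℂ) - l) / 2 else ((k : ℂ) - 2 * l) / 4
  else if Even l then (2 * (k : ℂ) - l) / 4 else 2

/-- The coefficient of `c` in the supercommutator of `e k` and `e l`. -/
noncomputable def centralConst (k l : ℤ) : ℂ :=
  if k + l = 0 then
    if Even k then (((k : ℂ) / 2) ^ 3 - k / 2) / 12 else ((((k : ℂ) + 1) / 2) ^ 2 - (k + 1) / 2) / 3
  else 0

lemma superSign_of_even_left {k : ℤ} (hk : Even k) (l : ℤ) : superSign k l = 1 :=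
  if_pos (.inl hk)

lemma centralConst_of_add_ne_zero {k l : ℤ} (h : k + l ≠ 0) : centralConst k l = 0 :=
  if_neg h

lemma structureConst_ne_zero {k l : ℤ} (hl : l < 0) (hk : 0 < k) (heven : Even (k + l)) :
    structureConst k l ≠ 0 := by
  rw [structureConst]
  split_ifs with hke hle hle
  · have : (k : ℂ) - l ≠ 0 := sub_ne_zero.2 (by exact_mod_cast (by lia : k ≠ l))
    exact div_ne_zero this two_ne_zero
  · grind
  · grind
  · norm_num

lemma e_e (k l : ℤ) (v : M.carrier) :
    M.e k (M.e l v) = superSign k l • M.e l (M.e k v) + structureConst k l • M.e (k + l) v +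
      centralConst k l • M.C v := by
  have parity (k : ℤ) : (∃ m, k = 2 * m) ∨ ∃ j, k = 2 * j - 1 :=
    (Int.even_or_odd' k).elim fun m h ↦ h.imp (⟨m, ·⟩) fun h ↦ ⟨m + 1, by lia⟩
  have odd (j : ℤ) : ¬ Even (2 * j - 1) := by grind
  simp only [superSign, structureConst, centralConst]
  obtain ⟨m, rfl⟩ | ⟨j, rfl⟩ := parity k <;> obtain ⟨n, rfl⟩ | ⟨i, rfl⟩ := parity l
  · rw [← mul_add]
    simp only [e_two_mul, even_two_mul, mul_eq_zero, OfNat.ofNat_ne_zero, false_or, or_self,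
      if_true]
    push_cast
    linear_combination (norm := (split_ifs <;> module)) M.rel_LL m n v
  · rw [show 2 * m + (2 * i - 1) = 2 * (m + i) - 1 by ring, if_neg (c := _ = (0 : ℤ)) (by lia)]
    simp only [e_two_mul, e_two_mul_sub_one, even_two_mul, odd, true_or, if_true, if_false]
    push_cast
    linear_combination (norm := module) M.rel_LG m i v
  · rw [show 2 * j - 1 + 2 * n = 2 * (n + j) - 1 by ring, if_neg (c := _ = (0 : ℤ)) (by lia)]
    simp only [e_two_mul, e_two_mul_sub_one, even_two_mul, odd, or_true, if_true, if_false]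
    push_cast
    linear_combination (norm := module) -M.rel_LG n j v
  · rw [show 2 * j - 1 + (2 * i - 1) = 2 * (j + i - 1) by ring,
      if_congr (show 2 * (j + i - 1) = 0 ↔ j + i = 1 by lia) rfl rfl]
    simp only [e_two_mul, e_two_mul_sub_one, odd, or_self, if_false]
    push_cast
    linear_combination (norm := (split_ifs <;> module)) M.rel_GG j i v

end NSRep

/-! ### Weyl and Clifford pairs -/

section Weyl

variable {K Q : Type*} [Field K] [AddCommGroup Q] [Module K Q]

/-- A pair of operators with a supercommutation relation `D x = ε x D + c z`, `z` central, such
that moving `D` past `x ^ (n + 1)` gives a nonzero multiple of `x ^ n z` unless `x ^ (n + 1) = 0`.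
It is a Weyl pair for `ε = 1` and a Clifford pair for `ε = -1`. -/
structure IsWeylPair (x D z : Module.End K Q) (ε c : K) : Prop where
  lower_raise : ∀ v, D (x v) = ε • x (D v) + c • z v
  comm_raise : Commute z x
  comm_lower : Commute z D
  nondegenerate : ∀ n : ℕ, c * ∑ i ∈ Finset.range (n + 1), ε ^ i ≠ 0 ∨ x ^ (n + 1) = 0

/-- The sum of the spaces `x ^ n U`. -/
def powerSpan (x : Module.End K Q) (U : Submodule K Q) : Submodule K Q :=
  ⨆ n : ℕ, U.map (x ^ n)

/-- A space of vacuum vectors for the lowering operator `D`, on which `z` acts injectively. -/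
structure IsVacuumSpace (D z : Module.End K Q) (U : Submodule K Q) : Prop where
  lower_eq_zero : ∀ u ∈ U, D u = 0
  central_mem : ∀ u ∈ U, z u ∈ U
  eq_zero_of_central : ∀ u ∈ U, z u = 0 → u = 0

variable {x D z : Module.End K Q} {ε c : K} {U : Submodule K Q}

lemma le_powerSpan (x : Module.End K Q) (U : Submodule K Q) : U ≤ powerSpan x U :=
  (Submodule.map_id U).symm.le.trans (le_iSup (fun n : ℕ ↦ U.map (x ^ n)) 0)

lemma powerSpan_le {P : Submodule K Q} (hUP : U ≤ P) (hx : P ≤ P.comap x) : powerSpan x U ≤ P := by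
  refine iSup_le fun n ↦ ?_
  induction n with
  | zero => simpa [Module.End.one_eq_id] using hUP
  | succ n ih =>
    rw [pow_succ', Module.End.mul_eq_comp, Submodule.map_comp]
    exact (Submodule.map_mono ih).trans (Submodule.map_le_iff_le_comap.2 hx)

lemma powerSpan_le_comap (x : Module.End K Q) (U : Submodule K Q) :
    powerSpan x U ≤ (powerSpan x U).comap x := by
  refine iSup_le fun n ↦ Submodule.map_le_iff_le_comap.2 fun u hu ↦ ?_
  refine Submodule.mem_iSup_of_mem (n + 1) ⟨u, hu, ?_⟩
  rw [pow_succ', Module.End.mul_apply]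

lemma powerSpan_le_comap_of_comm {y : Module.End K Q} (hxy : ∃ η : K, y * x = η • (x * y))
    (hU : U ≤ U.comap y) : powerSpan x U ≤ (powerSpan x U).comap y := by
  obtain ⟨η, hη⟩ := hxy
  have comm (n : ℕ) : y * x ^ n = η ^ n • (x ^ n * y) := by
    induction n with
    | zero => simp
    | succ n ih =>
      rw [pow_succ, ← mul_assoc, ih, smul_mul_assoc, mul_assoc, hη, mul_smul_comm, smul_smul,
        ← pow_succ, mul_assoc]
  refine iSup_le fun n ↦ Submodule.map_le_iff_le_comap.2 fun u hu ↦ ?_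
  rw [Submodule.mem_comap, Submodule.mem_comap, ← Module.End.mul_apply, comm]
  exact Submodule.smul_mem _ _ (Submodule.mem_iSup_of_mem n ⟨y u, hU hu, rfl⟩)

namespace IsVacuumSpace

variable (hU : IsVacuumSpace D z U)
include hU

lemma central_pow_mem {u : Q} (hu : u ∈ U) (n : ℕ) : (z ^ n) u ∈ U := by
  induction n with
  | zero => exact hu
  | succ n ih => rw [pow_succ', Module.End.mul_apply]; exact hU.central_mem _ ih

lemma eq_zero_of_central_pow {u : Q} (hu : u ∈ U) {n : ℕ} (h : (z ^ n) u = 0) : u = 0 := by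
  induction n with
  | zero => exact h
  | succ n ih =>
    rw [pow_succ', Module.End.mul_apply] at h
    exact ih (hU.eq_zero_of_central _ (hU.central_pow_mem hu n) h)

end IsVacuumSpace

namespace IsWeylPair

variable (h : IsWeylPair x D z ε c)
include h

lemma lower_raise_pow {u : Q} (hu : D u = 0) (n : ℕ) :
    D ((x ^ (n + 1)) u) = (c * ∑ i ∈ Finset.range (n + 1), ε ^ i) • (x ^ n) (z u) := by
  induction n with
  | zero => simp [h.lower_raise, hu]
  | succ n ih =>
    have hz : z ((x ^ (n + 1)) u) = (x ^ (n + 1)) (z u) :=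
      LinearMap.congr_fun (h.comm_raise.pow_right (n + 1)) u
    rw [pow_succ' x, Module.End.mul_apply, h.lower_raise, ih, hz, map_smul,
      ← Module.End.mul_apply, ← pow_succ', smul_smul, ← add_smul]
    congr 1
    rw [geom_sum_succ (n := n + 1)]
    ring

lemma lower_pow_raise_pow (n : ℕ) :
    ∃ a : K, (a ≠ 0 ∨ x ^ n = 0) ∧ ∀ u, D u = 0 → (D ^ n) ((x ^ n) u) = a • (z ^ n) u := by
  induction n with
  | zero => exact ⟨1, by simp⟩
  | succ n ih =>
    obtain ⟨a, ha, ih⟩ := ih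
    refine ⟨(c * ∑ i ∈ Finset.range (n + 1), ε ^ i) * a, ?_, fun u hu ↦ ?_⟩
    · rcases ha with ha | ha
      · exact (h.nondegenerate n).imp_left (mul_ne_zero · ha)
      · exact .inr (by rw [pow_succ, ha, zero_mul])
    · have hzu : D (z u) = 0 := by
        rw [← Module.End.mul_apply, ← h.comm_lower.eq, Module.End.mul_apply, hu, map_zero]
      rw [pow_succ D, Module.End.mul_apply, h.lower_raise_pow hu, map_smul, ih _ hzu, smul_smul,
        pow_succ z, Module.End.mul_apply]

variable (hU : IsVacuumSpace D z U)
include hU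

lemma lower_pow_succ_eq_zero {n : ℕ} {w : Q} (hw : w ∈ partialSups (fun i ↦ U.map (x ^ i)) n) :
    (D ^ (n + 1)) w = 0 := by
  suffices partialSups (fun i ↦ U.map (x ^ i)) n ≤ LinearMap.ker (D ^ (n + 1)) from this hw
  refine partialSups_le _ _ _ fun i hi ↦ Submodule.map_le_iff_le_comap.2 fun u hu ↦ ?_
  obtain ⟨a, -, ha⟩ := h.lower_pow_raise_pow i
  rw [Submodule.mem_comap, LinearMap.mem_ker, show n + 1 = n - i + 1 + i by lia, pow_add,
    Module.End.mul_apply, ha u (hU.lower_eq_zero u hu), map_smul, pow_succ, Module.End.mul_apply,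
    hU.lower_eq_zero _ (hU.central_pow_mem hu i), map_zero, smul_zero]

lemma mem_partialSups_of_central_lower_pow {n : ℕ} {w : Q}
    (hw : w ∈ partialSups (fun i ↦ U.map (x ^ i)) (n + 1)) (h0 : z ((D ^ (n + 1)) w) = 0) :
    w ∈ partialSups (fun i ↦ U.map (x ^ i)) n := by
  rw [partialSups_add_one] at hw
  obtain ⟨w', hw', _, ⟨u, hu, rfl⟩, rfl⟩ := Submodule.mem_sup.1 hw
  refine add_mem hw' ?_
  obtain ⟨a, ha, hDx⟩ := h.lower_pow_raise_pow (n + 1)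
  rw [map_add, h.lower_pow_succ_eq_zero hU hw', zero_add, hDx u (hU.lower_eq_zero u hu), map_smul,
    ← Module.End.mul_apply, ← pow_succ'] at h0
  rcases ha with ha | ha
  · rw [hU.eq_zero_of_central_pow hu ((smul_eq_zero.1 h0).resolve_left ha), map_zero]
    exact zero_mem _
  · rw [ha, LinearMap.zero_apply]
    exact zero_mem _

lemma mem_of_central_lower_pow {w : Q} (hw : w ∈ powerSpan x U)
    (h0 : ∀ n : ℕ, z ((D ^ (n + 1)) w) = 0) : w ∈ U := by
  rw [powerSpan, ← iSup_partialSups_eq,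
    Submodule.mem_iSup_of_directed _ (partialSups _).monotone.directed_le] at hw
  obtain ⟨n, hw⟩ := hw
  induction n with
  | zero => simpa using hw
  | succ n ih => exact ih (h.mem_partialSups_of_central_lower_pow hU hw (h0 n))

lemma mem_of_lower_eq_zero {w : Q} (hw : w ∈ powerSpan x U) (hD : D w = 0) : w ∈ U :=
  h.mem_of_central_lower_pow hU hw fun n ↦ by
    rw [pow_succ, Module.End.mul_apply, hD, map_zero, map_zero]

lemma eq_zero_of_central_powerSpan {w : Q} (hw : w ∈ powerSpan x U) (hz : z w = 0) : w = 0 := by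
  refine hU.eq_zero_of_central w (h.mem_of_central_lower_pow hU hw fun n ↦ ?_) hz
  rw [← Module.End.mul_apply, (h.comm_lower.pow_right (n + 1)).eq, Module.End.mul_apply, hz,
    map_zero]

end IsWeylPair

/-- A sequence of Weyl and Clifford pairs with common central element `z`, different members of
which commute up to scalars. -/
structure IsWeylSystem (x D : ℕ → Module.End K Q) (z : Module.End K Q) : Prop where
  pair : ∀ k, ∃ ε c : K, IsWeylPair (x k) (D k) z ε c
  raise_raise : ∀ k l, ∃ η : K, x k * x l = η • (x l * x k)
  lower_raise : ∀ k l, k ≠ l → ∃ η : K, D k * x l = η • (x l * D k)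

/-- The sum of the spaces `x (n - 1) ^ aₙ₋₁ ⋯ x 0 ^ a₀ U`. -/
def monomialSpan (x : ℕ → Module.End K Q) (U : Submodule K Q) : ℕ → Submodule K Q
  | 0 => U
  | n + 1 => powerSpan (x n) (monomialSpan x U n)

lemma monomialSpan_mono (x : ℕ → Module.End K Q) (U : Submodule K Q) :
    Monotone (monomialSpan x U) :=
  monotone_nat_of_le_succ fun n ↦ le_powerSpan (x n) _

namespace IsWeylSystem

variable {x D : ℕ → Module.End K Q} (h : IsWeylSystem x D z)
include h

lemma raise_mem_iSup_monomialSpan (k : ℕ) {w : Q} (hw : w ∈ ⨆ n, monomialSpan x U n) :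
    x k w ∈ ⨆ n, monomialSpan x U n := by
  have stable (n : ℕ) (hn : k < n) : monomialSpan x U n ≤ (monomialSpan x U n).comap (x k) := by
    induction n, hn using Nat.le_induction with
    | base => exact powerSpan_le_comap _ _
    | succ n _ ih => exact powerSpan_le_comap_of_comm (h.raise_raise k n) ih
  rw [Submodule.mem_iSup_of_directed _ (monomialSpan_mono x U).directed_le] at hw
  obtain ⟨n, hw⟩ := hw
  have hw' := monomialSpan_mono x U (le_max_left n (k + 1)) hw
  exact Submodule.mem_iSup_of_mem _ (stable _ (by lia) hw')

lemma isVacuumSpace_monomialSpan (hU : ∀ k, IsVacuumSpace (D k) z U) (n : ℕ) {k : ℕ} (hk : n ≤ k) :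
    IsVacuumSpace (D k) z (monomialSpan x U n) := by
  induction n generalizing k with
  | zero => exact hU k
  | succ n ih =>
    obtain ⟨ε, c, hp⟩ := h.pair n
    obtain ⟨η, hη⟩ := h.lower_raise k n (by lia)
    refine ⟨powerSpan_le (P := LinearMap.ker (D k)) (ih (by lia)).lower_eq_zero fun v hv ↦ ?_,
      powerSpan_le_comap_of_comm ⟨1, by rw [hp.comm_raise.eq, one_smul]⟩ (ih le_rfl).central_mem,
      fun u ↦ hp.eq_zero_of_central_powerSpan (ih le_rfl)⟩
    rw [Submodule.mem_comap, LinearMap.mem_ker, ← Module.End.mul_apply, hη, LinearMap.smul_apply,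
      Module.End.mul_apply, LinearMap.mem_ker.1 hv, map_zero, smul_zero]

theorem mem_of_lower_eq_zero (hU : ∀ k, IsVacuumSpace (D k) z U) {w : Q}
    (hw : w ∈ ⨆ n, monomialSpan x U n) (hD : ∀ k, D k w = 0) : w ∈ U := by
  rw [Submodule.mem_iSup_of_directed _ (monomialSpan_mono x U).directed_le] at hw
  obtain ⟨n, hw⟩ := hw
  induction n with
  | zero => exact hw
  | succ n ih =>
    obtain ⟨ε, c, hp⟩ := h.pair n
    exact ih (hp.mem_of_lower_eq_zero (h.isVacuumSpace_monomialSpan hU n le_rfl) hw (hD n))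

end IsWeylSystem

end Weyl

/-! ### Filtrations by weight -/

/-- Weights for the generators `e k` in an ordered group, adapted to the top index `T`. Every
bracket of two generators of index `< 0` or `≥ T` has strictly smaller weight than its two factors
together, except the brackets `[e (T + k), e (-k)]`, which keep the weight and produce a multiple of
`e T`. So in the associated graded space `e T` is central and these pairs become Weyl or Clifford
pairs. `cone` is a well-ordered monoid of weights which contains those of all negative
generators. -/
structure Weighting (Γ : Type*) [AddCommGroup Γ] [LinearOrder Γ] [IsOrderedAddMonoid Γ]
    (T : ℤ) where
  deg : ℤ → Γ
  cone : AddSubmonoid Γ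
  isWF_cone : (cone : Set Γ).IsWF
  deg_mem_cone : ∀ {k}, k < 0 → deg k ∈ cone
  deg_add_le : ∀ {k l}, l < 0 → deg (k + l) ≤ deg k + deg l
  deg_add_lt : ∀ {k l}, (k < 0 ∨ T ≤ k) → (l < 0 ∨ T ≤ l) → k + l ≠ T → deg (k + l) < deg k + deg l
  deg_add_eq : ∀ {k l}, l < 0 → k + l = T → deg k + deg l = deg T
  deg_zero_nonneg : 0 ≤ deg 0
  deg_add_neg_pos : ∀ {k}, T ≤ k → 0 < deg k + deg (-k)

/-- A family of spaces of vacuum vectors, placed in prescribed weights, from which the negative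
generators will create a submodule of `M`. -/
structure NSRep.Vacuum (M : NSRep) {Γ : Type*} [AddCommGroup Γ] [LinearOrder Γ]
    [IsOrderedAddMonoid Γ] {T : ℤ} (ω : Weighting Γ T) where
  space : Γ → Submodule ℂ M.carrier
  mem_cone : ∀ {a v}, v ∈ space a → v ≠ 0 → a ∈ ω.cone
  e_mem : ∀ {m a v}, 0 ≤ m → m ≤ T → v ∈ space a → M.e m v ∈ space (a + ω.deg m)
  e_eq_zero : ∀ {m a v}, T < m → v ∈ space a → M.e m v = 0
  C_mem : ∀ {a v}, v ∈ space a → M.C v ∈ space a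

namespace NSRep.Vacuum

variable {M : NSRep} {Γ : Type*} [AddCommGroup Γ] [LinearOrder Γ] [IsOrderedAddMonoid Γ] {T : ℤ}
  {ω : Weighting Γ T} (V : M.Vacuum ω)

/-- `V.IsWord a w` says that `w` arises from a vacuum vector by applying negative generators, with
total weight `a`. -/
inductive IsWord : Γ → M.carrier → Prop
  | base {a v} : a ∈ ω.cone → v ∈ V.space a → IsWord a v
  | step {a w k} : k < 0 → IsWord a w → IsWord (a + ω.deg k) (M.e k w)

/-- The span of the words whose weight lies in `A`. For `A = Iic a` this is the filtration of the
span of all words by weight. -/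
def wordSpan (A : Set Γ) : Submodule ℂ M.carrier :=
  Submodule.span ℂ {w | ∃ a ∈ A, V.IsWord a w}

variable {V} {A B : Set Γ} {a b : Γ} {v w : M.carrier}

lemma IsWord.mem_cone (h : V.IsWord a w) : a ∈ ω.cone := by
  induction h with
  | base ha _ => exact ha
  | step hk _ ih => exact add_mem ih (ω.deg_mem_cone hk)

lemma wordSpan_mono (hAB : A ⊆ B) : V.wordSpan A ≤ V.wordSpan B :=
  Submodule.span_mono fun _ ⟨a, ha, hw⟩ ↦ ⟨a, hAB ha, hw⟩

lemma IsWord.mem_wordSpan (h : V.IsWord a w) (ha : a ∈ A) : w ∈ V.wordSpan A :=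
  Submodule.subset_span ⟨a, ha, h⟩

lemma mem_wordSpan_of_mem_space (hv : v ∈ V.space a) (ha : a ∈ A) : v ∈ V.wordSpan A := by
  by_cases h0 : v = 0
  · exact h0 ▸ zero_mem _
  · exact (IsWord.base (V.mem_cone hv h0) hv).mem_wordSpan ha

lemma exists_mem_wordSpan_Iic (hw : w ∈ V.wordSpan A) (h0 : w ≠ 0) :
    ∃ a ∈ A, a ∈ ω.cone ∧ w ∈ V.wordSpan (Set.Iic a) := by
  suffices w = 0 ∨ ∃ a ∈ A, a ∈ ω.cone ∧ w ∈ V.wordSpan (Set.Iic a) from this.resolve_left h0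
  clear h0
  induction hw using Submodule.span_induction with
  | mem w h =>
    obtain ⟨a, ha, hw⟩ := h
    exact .inr ⟨a, ha, hw.mem_cone, hw.mem_wordSpan Set.self_mem_Iic⟩
  | zero => exact .inl rfl
  | add v w _ _ hv hw =>
    obtain rfl | ⟨a, ha, hac, hva⟩ := hv
    · rwa [zero_add]
    obtain rfl | ⟨b, hb, hbc, hwb⟩ := hw
    · exact .inr ⟨a, ha, hac, by rwa [add_zero]⟩
    have hvm := wordSpan_mono (Set.Iic_subset_Iic.2 (le_max_left a b)) hva
    have hwm := wordSpan_mono (Set.Iic_subset_Iic.2 (le_max_right a b)) hwb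
    refine .inr ⟨max a b, ?_, ?_, add_mem hvm hwm⟩ <;> rcases max_choice a b with h | h <;> rwa [h]
  | smul c w _ hw =>
    exact hw.imp (by rintro rfl; exact smul_zero c)
      fun ⟨a, ha, hac, hw⟩ ↦ ⟨a, ha, hac, Submodule.smul_mem _ c hw⟩

lemma map_mem_wordSpan (f : Module.End ℂ M.carrier)
    (h : ∀ a ∈ A, ∀ w, V.IsWord a w → f w ∈ V.wordSpan B) (hw : w ∈ V.wordSpan A) :
    f w ∈ V.wordSpan B := by
  suffices V.wordSpan A ≤ (V.wordSpan B).comap f from this hw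
  exact Submodule.span_le.2 fun w ⟨a, ha, hw⟩ ↦ h a ha w hw

lemma e_mem_wordSpan_of_neg {k : ℤ} (hk : k < 0) (hw : w ∈ V.wordSpan (Set.Iic a)) :
    M.e k w ∈ V.wordSpan (Set.Iic (a + ω.deg k)) :=
  map_mem_wordSpan (M.e k) (fun _ hb _ h ↦ (h.step hk).mem_wordSpan (add_le_add_left hb _)) hw

lemma IsWord.C_mem (h : V.IsWord a w) : M.C w ∈ V.wordSpan (Set.Iic a) := by
  induction h with
  | base _ hv => exact mem_wordSpan_of_mem_space (V.C_mem hv) Set.self_mem_Iic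
  | step hk _ ih => rw [C_e]; exact e_mem_wordSpan_of_neg hk ih

lemma IsWord.e_mem (h : V.IsWord a w) (m : ℤ) : M.e m w ∈ V.wordSpan (Set.Iic (a + ω.deg m)) := by
  rcases lt_or_ge m 0 with hm | hm
  · exact (h.step hm).mem_wordSpan Set.self_mem_Iic
  induction h generalizing m with
  | base _ hv =>
    rcases le_or_gt m T with hmT | hmT
    · exact mem_wordSpan_of_mem_space (V.e_mem hm hmT hv) Set.self_mem_Iic
    · exact V.e_eq_zero hmT hv ▸ zero_mem _
  | @step a w k hk hw ih =>
    have hsum : M.e (m + k) w ∈ V.wordSpan (Set.Iic (a + ω.deg (m + k))) := by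
      rcases lt_or_ge (m + k) 0 with hneg | hnonneg
      · exact (hw.step hneg).mem_wordSpan Set.self_mem_Iic
      · exact ih _ hnonneg
    have hle : a + ω.deg (m + k) ≤ a + ω.deg k + ω.deg m := by
      rw [add_assoc, add_comm (ω.deg k)]
      exact add_le_add_right (ω.deg_add_le hk) a
    rw [e_e]
    refine add_mem (add_mem (Submodule.smul_mem _ _ ?_) (Submodule.smul_mem _ _ ?_)) ?_
    · rw [add_right_comm]
      exact e_mem_wordSpan_of_neg hk (ih m hm)
    · exact wordSpan_mono (Set.Iic_subset_Iic.2 hle) hsum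
    · by_cases hmk : m + k = 0
      · rw [hmk] at hle
        exact Submodule.smul_mem _ _ (wordSpan_mono (Set.Iic_subset_Iic.2
          ((le_add_of_nonneg_right ω.deg_zero_nonneg).trans hle)) hw.C_mem)
      · rw [centralConst_of_add_ne_zero hmk, zero_smul]
        exact zero_mem _

lemma e_mem_wordSpan_Iic (m : ℤ) (hw : w ∈ V.wordSpan (Set.Iic a)) :
    M.e m w ∈ V.wordSpan (Set.Iic (a + ω.deg m)) :=
  map_mem_wordSpan (M.e m) (fun _ hb _ h ↦ wordSpan_mono
    (Set.Iic_subset_Iic.2 (add_le_add_left hb _)) (h.e_mem m)) hw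

lemma e_mem_wordSpan_Iio (m : ℤ) (hw : w ∈ V.wordSpan (Set.Iio a)) :
    M.e m w ∈ V.wordSpan (Set.Iio (a + ω.deg m)) :=
  map_mem_wordSpan (M.e m) (fun _ hb _ h ↦ wordSpan_mono
    (Set.Iic_subset_Iio.2 (add_lt_add_left hb _)) (h.e_mem m)) hw

lemma C_mem_wordSpan_Iic (hw : w ∈ V.wordSpan (Set.Iic a)) : M.C w ∈ V.wordSpan (Set.Iic a) :=
  map_mem_wordSpan M.C (fun _ hb _ h ↦ wordSpan_mono (Set.Iic_subset_Iic.2 hb) h.C_mem) hw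

lemma invariant_wordSpan_univ : M.Invariant (V.wordSpan Set.univ) :=
  invariant_of_e
    (fun m _ hv ↦ map_mem_wordSpan (M.e m)
      (fun _ _ _ h ↦ wordSpan_mono (Set.subset_univ _) (h.e_mem m)) hv)
    (fun _ hv ↦ map_mem_wordSpan M.C
      (fun _ _ _ h ↦ wordSpan_mono (Set.subset_univ _) h.C_mem) hv)

lemma supercommutator_mem {k l : ℤ} (hk : k < 0 ∨ T ≤ k) (hl : l < 0 ∨ T ≤ l)
    (hw : w ∈ V.wordSpan (Set.Iic a)) :
    M.e k (M.e l w) - superSign k l • M.e l (M.e k w) -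
        (if k + l = T then structureConst k l else 0) • M.e T w ∈
      V.wordSpan (Set.Iio (a + (ω.deg k + ω.deg l))) := by
  have hC : centralConst k l • M.C w ∈ V.wordSpan (Set.Iio (a + (ω.deg k + ω.deg l))) := by
    by_cases hkl : k + l = 0
    · refine Submodule.smul_mem _ _ (wordSpan_mono ?_ (C_mem_wordSpan_Iic hw))
      refine Set.Iic_subset_Iio.2 (lt_add_of_pos_right a ?_)
      obtain rfl : l = -k := by lia
      rcases hk with hk | hk
      · simpa [add_comm] using ω.deg_add_neg_pos (hl.resolve_left (by lia))
      · exact ω.deg_add_neg_pos hk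
    · rw [centralConst_of_add_ne_zero hkl, zero_smul]
      exact zero_mem _
  rw [M.e_e k l, add_assoc, add_sub_cancel_left]
  split_ifs with hT
  · rwa [hT, add_sub_cancel_left]
  · rw [zero_smul, sub_zero]
    refine add_mem (Submodule.smul_mem _ _ (wordSpan_mono ?_ (e_mem_wordSpan_Iic _ hw))) hC
    exact Set.Iic_subset_Iio.2 (add_lt_add_right (ω.deg_add_lt hk hl hT) a)

end NSRep.Vacuum

namespace NSRep.Vacuum

variable {M : NSRep} {Γ : Type*} [AddCommGroup Γ] [LinearOrder Γ] [IsOrderedAddMonoid Γ] {T : ℤ}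
  {ω : Weighting Γ T} (V : M.Vacuum ω)

/-- The families of vectors `f a` lying in step `a` of the weight filtration. -/
def filteredFamilies : Submodule ℂ (Γ → M.carrier) :=
  Submodule.pi Set.univ fun a ↦ V.wordSpan (Set.Iic a)

/-- The families of vectors `f a` lying strictly below step `a` of the weight filtration. -/
def negligible : Submodule ℂ V.filteredFamilies :=
  (Submodule.pi Set.univ fun a ↦ V.wordSpan (Set.Iio a)).comap V.filteredFamilies.subtype

/-- The graded space of the weight filtration, completed to the product of its pieces. -/
abbrev Graded : Type _ := V.filteredFamilies ⧸ V.negligible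

/-- The operator `e m` on families, raising weights by `ω.deg m`. -/
noncomputable def familyOp (m : ℤ) : V.filteredFamilies →ₗ[ℂ] V.filteredFamilies where
  toFun f := ⟨fun a ↦ M.e m (f.1 (a - ω.deg m)), fun a _ ↦ by
    simpa using e_mem_wordSpan_Iic m (f.2 (a - ω.deg m) trivial)⟩
  map_add' f g := Subtype.ext (funext fun a ↦ map_add _ _ _)
  map_smul' c f := Subtype.ext (funext fun a ↦ map_smul _ _ _)

/-- The operator induced by `e m` on the graded space. -/
noncomputable def gradedOp (m : ℤ) : Module.End ℂ V.Graded :=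
  V.negligible.mapQ V.negligible (V.familyOp m) fun f hf a _ ↦ by
    simpa [familyOp] using e_mem_wordSpan_Iio m (hf (a - ω.deg m) trivial)

/-- The class in the graded space of a vector in step `a` of the filtration. -/
def symbol (a : Γ) : V.wordSpan (Set.Iic a) →ₗ[ℂ] V.Graded :=
  V.negligible.mkQ ∘ₗ
    ((LinearMap.single ℂ (fun _ ↦ M.carrier) a).comp (Submodule.subtype _)).codRestrict
      V.filteredFamilies fun w b _ ↦ by
        rcases eq_or_ne b a with rfl | h
        · simp
        · simp [h]

/-- The image of the vacuum spaces in the graded space. -/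
def gradedVacuum : Submodule ℂ V.Graded :=
  ((Submodule.pi Set.univ V.space).comap V.filteredFamilies.subtype).map V.negligible.mkQ

variable {V}

lemma gradedOp_supercommutator {k l : ℤ} (hk : k < 0 ∨ T ≤ k) (hl : l < 0 ∨ T ≤ l)
    (hT : k + l = T → l < 0) (q : V.Graded) :
    V.gradedOp k (V.gradedOp l q) = superSign k l • V.gradedOp l (V.gradedOp k q) +
      (if k + l = T then structureConst k l else 0) • V.gradedOp T q := by
  obtain ⟨f, rfl⟩ := V.negligible.mkQ_surjective q
  refine (Submodule.Quotient.eq V.negligible (x := V.familyOp k (V.familyOp l f))).2 fun a _ ↦ ?_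
  have key := supercommutator_mem hk hl (f.2 (a - (ω.deg k + ω.deg l)) trivial)
  rw [sub_add_cancel, sub_sub] at key
  suffices M.e k (M.e l (f.1 (a - ω.deg k - ω.deg l))) -
      (superSign k l • M.e l (M.e k (f.1 (a - ω.deg l - ω.deg k))) +
        (if k + l = T then structureConst k l else 0) • M.e T (f.1 (a - ω.deg T))) ∈
      V.wordSpan (Set.Iio a) from this
  rw [sub_sub a, sub_sub a, add_comm (ω.deg l)]
  split_ifs at key ⊢ with h
  · rwa [← ω.deg_add_eq (hT h) h]
  · simpa only [zero_smul] using key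

lemma commute_gradedOp_top (hT : 0 ≤ T) (hTe : Even T) {l : ℤ} (hl : l < 0 ∨ T < l) :
    Commute (V.gradedOp T) (V.gradedOp l) := LinearMap.ext fun q ↦ by
  have hl0 : l ≠ 0 := by lia
  simpa [superSign_of_even_left hTe, hl0] using
    gradedOp_supercommutator (V := V) (k := T) (.inr le_rfl) (hl.imp_right le_of_lt) (by lia) q

lemma gradedOp_mul_gradedOp {k l : ℤ} (hk : k < 0 ∨ T ≤ k) (hl : l < 0) (h : k + l ≠ T) :
    V.gradedOp k * V.gradedOp l = superSign k l • (V.gradedOp l * V.gradedOp k) :=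
  LinearMap.ext fun q ↦ by
    simpa [h] using gradedOp_supercommutator (V := V) hk (.inl hl) (by simp [h]) q

lemma gradedOp_sq_of_odd {k : ℤ} (hT : 0 ≤ T) (hk : k < 0) (hodd : ¬ Even k) :
    V.gradedOp k ^ 2 = 0 := LinearMap.ext fun q ↦ by
  have h := gradedOp_supercommutator (V := V) (.inl hk) (.inl hk) (by lia) q
  rw [superSign, if_neg (by simpa using hodd), if_neg (by lia)] at h
  suffices V.gradedOp k (V.gradedOp k q) = 0 from this
  linear_combination (norm := module) (1 / 2 : ℂ) • h

lemma isWeylPair_gradedOp (hT : 0 ≤ T) (hTe : Even T) {k : ℤ} (hk : k < 0) :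
    IsWeylPair (V.gradedOp k) (V.gradedOp (T - k)) (V.gradedOp T) (superSign (T - k) k)
      (structureConst (T - k) k) where
  lower_raise q := by
    simpa using gradedOp_supercommutator (V := V) (k := T - k) (.inr (by lia)) (.inl hk)
      (fun _ ↦ hk) q
  comm_raise := commute_gradedOp_top hT hTe (.inl hk)
  comm_lower := commute_gradedOp_top hT hTe (.inr (by lia))
  nondegenerate n := by
    have hc : structureConst (T - k) k ≠ 0 := structureConst_ne_zero hk (by lia) (by simpa)
    by_cases hke : Even k
    · left
      rw [superSign, if_pos (.inr hke)]
      simpa [hc] using Nat.cast_add_one_ne_zero (R := ℂ) n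
    · rcases n.eq_zero_or_pos with rfl | hn
      · simp [hc]
      · right
        rw [show n + 1 = 2 + (n - 1) by lia, pow_add, gradedOp_sq_of_odd hT hk hke, zero_mul]

lemma isWeylSystem_gradedOp (hT : 0 ≤ T) (hTe : Even T) :
    IsWeylSystem (fun k : ℕ ↦ V.gradedOp (-(k + 1))) (fun k ↦ V.gradedOp (T - -(k + 1)))
      (V.gradedOp T) where
  pair k := ⟨_, _, isWeylPair_gradedOp hT hTe (by lia)⟩
  raise_raise k l := ⟨_, gradedOp_mul_gradedOp (.inl (by lia)) (by lia) (by lia)⟩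
  lower_raise k l hkl := ⟨_, gradedOp_mul_gradedOp (.inr (by lia)) (by lia) (by lia)⟩

lemma isVacuumSpace_gradedVacuum (hT : 0 ≤ T)
    (hinj : ∀ a, ∀ v ∈ V.space a, M.e T v ∈ V.wordSpan (Set.Iio (a + ω.deg T)) →
      v ∈ V.wordSpan (Set.Iio a)) {m : ℤ} (hm : T < m) :
    IsVacuumSpace (V.gradedOp m) (V.gradedOp T) V.gradedVacuum where
  lower_eq_zero := by
    rintro _ ⟨f, hf, rfl⟩
    refine (Submodule.Quotient.mk_eq_zero _ (x := V.familyOp m f)).2 fun a _ ↦ ?_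
    have h0 : M.e m (f.1 (a - ω.deg m)) = 0 := V.e_eq_zero hm (hf _ trivial)
    exact (congrArg (· ∈ _) h0).mpr (zero_mem _)
  central_mem := by
    rintro _ ⟨f, hf, rfl⟩
    refine ⟨V.familyOp T f, fun a _ ↦ ?_, rfl⟩
    simpa [familyOp] using V.e_mem hT le_rfl (hf (a - ω.deg T) trivial)
  eq_zero_of_central := by
    rintro _ ⟨f, hf, rfl⟩ h0
    refine (Submodule.Quotient.mk_eq_zero _).2 fun a _ ↦ hinj a _ (hf a trivial) ?_
    have := (Submodule.Quotient.mk_eq_zero _ (x := V.familyOp T f)).1 h0 (a + ω.deg T) trivial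
    simpa [familyOp] using this

lemma symbol_eq_zero {a : Γ} (w : V.wordSpan (Set.Iic a)) (hw : w.1 ∈ V.wordSpan (Set.Iio a)) :
    V.symbol a w = 0 := by
  refine (Submodule.Quotient.mk_eq_zero V.negligible).2 fun b _ ↦ ?_
  suffices Pi.single (M := fun _ ↦ M.carrier) a w.1 b ∈ V.wordSpan (Set.Iio b) from this
  rcases eq_or_ne b a with rfl | h
  · rwa [Pi.single_eq_same]
  · rw [Pi.single_eq_of_ne h]
    exact zero_mem _

lemma gradedOp_symbol (m : ℤ) {a : Γ} (w : V.wordSpan (Set.Iic a)) :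
    V.gradedOp m (V.symbol a w) = V.symbol (a + ω.deg m) ⟨M.e m w, e_mem_wordSpan_Iic m w.2⟩ := by
  refine congrArg V.negligible.mkQ (Subtype.ext (funext fun b ↦ ?_))
  suffices M.e m (Pi.single (M := fun _ ↦ M.carrier) a w.1 (b - ω.deg m)) =
    Pi.single (M := fun _ ↦ M.carrier) (a + ω.deg m) (M.e m w) b from this
  simp only [Pi.single_apply, sub_eq_iff_eq_add]
  split_ifs
  · rfl
  · exact map_zero _

lemma IsWord.symbol_mem (hT : 0 ≤ T) (hTe : Even T) {a : Γ} {w : M.carrier} (hw : V.IsWord a w) :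
    V.symbol a ⟨w, hw.mem_wordSpan Set.self_mem_Iic⟩ ∈
      ⨆ n, monomialSpan (fun k : ℕ ↦ V.gradedOp (-(k + 1))) V.gradedVacuum n := by
  induction hw with
  | @base a v _ hv =>
    refine Submodule.mem_iSup_of_mem 0 ⟨_, fun b _ ↦ ?_, rfl⟩
    suffices Pi.single (M := fun _ ↦ M.carrier) a v b ∈ V.space b from this
    rcases eq_or_ne b a with rfl | h
    · rwa [Pi.single_eq_same]
    · rw [Pi.single_eq_of_ne h]
      exact zero_mem _
  | @step a w k hk hw ih =>
    obtain ⟨n, rfl⟩ : ∃ n : ℕ, k = -(n + 1) := ⟨(-k - 1).toNat, by lia⟩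
    have h := (isWeylSystem_gradedOp (V := V) hT hTe).raise_mem_iSup_monomialSpan n ih
    rwa [gradedOp_symbol] at h

lemma symbol_mem_iSup_monomialSpan (hT : 0 ≤ T) (hTe : Even T) {a : Γ} {w : M.carrier}
    (hw : w ∈ V.wordSpan (Set.Iic a)) :
    V.symbol a ⟨w, hw⟩ ∈
      ⨆ n, monomialSpan (fun k : ℕ ↦ V.gradedOp (-(k + 1))) V.gradedVacuum n := by
  induction hw using Submodule.span_induction with
  | mem w h =>
    obtain ⟨b, hba, hw⟩ := h
    rcases (Set.mem_Iic.1 hba).eq_or_lt with rfl | hlt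
    · exact hw.symbol_mem hT hTe
    · rw [symbol_eq_zero _ (hw.mem_wordSpan hlt)]
      exact zero_mem _
  | zero =>
    rw [symbol_eq_zero _ (zero_mem _)]
    exact zero_mem _
  | add v w hv hw ihv ihw => exact map_add (V.symbol a) ⟨v, hv⟩ ⟨w, hw⟩ ▸ add_mem ihv ihw
  | smul c w hw ih => exact map_smul (V.symbol a) c ⟨w, hw⟩ ▸ Submodule.smul_mem _ c ih

variable {a : Γ} {w : M.carrier}

lemma exists_space_sub_mem (hT : 0 ≤ T) (hTe : Even T)
    (hinj : ∀ a, ∀ v ∈ V.space a, M.e T v ∈ V.wordSpan (Set.Iio (a + ω.deg T)) →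
      v ∈ V.wordSpan (Set.Iio a))
    (hw : w ∈ V.wordSpan (Set.Iic a)) (hK : w ∈ M.annihilated T) :
    ∃ v ∈ V.space a, w - v ∈ V.wordSpan (Set.Iio a) := by
  obtain ⟨f, hf, hfw⟩ := (isWeylSystem_gradedOp hT hTe).mem_of_lower_eq_zero
    (fun k ↦ isVacuumSpace_gradedVacuum hT hinj (by lia))
    (symbol_mem_iSup_monomialSpan hT hTe hw) fun k ↦ by
      rw [gradedOp_symbol]
      refine symbol_eq_zero _ ?_
      exact (congrArg (· ∈ _) (mem_annihilated.1 hK _ (by lia))).mpr (zero_mem _)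
  refine ⟨f.1 a, hf a trivial, ?_⟩
  have h : Pi.single (M := fun _ ↦ M.carrier) a w a - f.1 a ∈ V.wordSpan (Set.Iio a) :=
    (Submodule.Quotient.eq V.negligible).1 hfw.symm a trivial
  rwa [Pi.single_eq_same] at h

theorem mem_iSup_space (hT : 0 ≤ T) (hTe : Even T)
    (hinj : ∀ a, ∀ v ∈ V.space a, M.e T v ∈ V.wordSpan (Set.Iio (a + ω.deg T)) →
      v ∈ V.wordSpan (Set.Iio a))
    (hw : w ∈ V.wordSpan Set.univ) (hK : w ∈ M.annihilated T) : w ∈ ⨆ a, V.space a := by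
  by_cases h0 : w = 0
  · exact h0 ▸ zero_mem _
  obtain ⟨a, -, ha, hw⟩ := exists_mem_wordSpan_Iic hw h0
  clear h0
  refine ω.isWF_cone.induction ha (P := fun a ↦ ∀ w ∈ M.annihilated T,
    w ∈ V.wordSpan (Set.Iic a) → w ∈ ⨆ a, V.space a) (fun a _ ih w hK hw ↦ ?_) w hK hw
  obtain ⟨v, hv, hwv⟩ := exists_space_sub_mem hT hTe hinj hw hK
  have hvK : v ∈ M.annihilated T := mem_annihilated.2 fun m hm ↦ V.e_eq_zero hm hv
  rw [← sub_add_cancel w v]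
  refine add_mem ?_ (Submodule.mem_iSup_of_mem a hv)
  by_cases h0 : w - v = 0
  · exact h0 ▸ zero_mem _
  obtain ⟨b, hba, hb, hwb⟩ := exists_mem_wordSpan_Iic hwv h0
  exact ih b hb hba _ (sub_mem hK hvK) hwb

end NSRep.Vacuum

namespace NSRep

variable {M : NSRep}

lemma e_mem_annihilated {n m : ℤ} (hn : 0 ≤ n) (hm : 0 ≤ m) {v : M.carrier}
    (hv : v ∈ M.annihilated n) : M.e m v ∈ M.annihilated n := by
  rw [mem_annihilated] at hv ⊢
  intro k hk
  rw [e_e, hv k hk, hv (k + m) (by lia), centralConst_of_add_ne_zero (by lia)]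
  simp only [map_zero, smul_zero, zero_smul, add_zero]

lemma C_mem_annihilated {n : ℤ} {v : M.carrier} (hv : v ∈ M.annihilated n) :
    M.C v ∈ M.annihilated n :=
  mem_annihilated.2 fun m hm ↦ by rw [← C_e, mem_annihilated.1 hv m hm, map_zero]

lemma sq_e_eq_zero_of_odd {n : ℤ} (hn : 0 < n) (hodd : ¬ Even n) {v : M.carrier}
    (hv : v ∈ M.annihilated n) : M.e n (M.e n v) = 0 := by
  have h := M.e_e n n v
  rw [superSign, if_neg (by simpa using hodd), mem_annihilated.1 hv (n + n) (by lia),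
    centralConst_of_add_ne_zero (by lia)] at h
  linear_combination (norm := module) (1 / 2 : ℂ) • h

lemma isRestricted_iff_exists_mem_annihilated :
    M.IsRestricted ↔ ∀ v, ∃ n, v ∈ M.annihilated n := by
  refine forall_congr' fun v ↦ ⟨fun ⟨N, hN⟩ ↦ ⟨2 * N, mem_annihilated.2 fun m hm ↦ ?_⟩,
    fun ⟨n, hn⟩ ↦ ⟨max n 2, fun i hi ↦ ⟨?_, ?_⟩⟩⟩
  · rw [e]
    split_ifs
    · exact (hN _ (by lia)).1
    · exact (hN _ (by lia)).2
  · rw [← e_two_mul]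
    exact mem_annihilated.1 hn _ (by lia)
  · rw [← e_two_mul_sub_one]
    exact mem_annihilated.1 hn _ (by lia)

lemma e_mem_annihilated_add_abs {n : ℤ} (hn : 0 ≤ n) {v : M.carrier} (hv : v ∈ M.annihilated n)
    (k : ℤ) : M.e k v ∈ M.annihilated (n + |k|) := by
  rw [mem_annihilated] at hv ⊢
  intro m hm
  have := neg_abs_le k
  have := abs_nonneg k
  rw [e_e, hv m (by lia), hv (m + k) (by lia), centralConst_of_add_ne_zero (by lia)]
  simp only [map_zero, smul_zero, zero_smul, add_zero]

namespace IsSimple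

lemma eq_top (hM : M.IsSimple) {p : Submodule ℂ M.carrier} (hp : M.Invariant p) {v : M.carrier}
    (hv : v ∈ p) (h0 : v ≠ 0) : p = ⊤ :=
  (hM.2 p hp).resolve_left fun h ↦ h0 ((Submodule.mem_bot ℂ).1 (h ▸ hv))

lemma isRestricted (hM : M.IsSimple) {n : ℤ} {v : M.carrier} (hv : v ∈ M.annihilated n)
    (h0 : v ≠ 0) : M.IsRestricted := by
  let p : Submodule ℂ M.carrier := ⨆ n : ℕ, M.annihilated n
  have mem_p {w : M.carrier} : w ∈ p ↔ ∃ n : ℕ, w ∈ M.annihilated n :=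
    Submodule.mem_iSup_of_directed _
      (M.annihilated_mono.comp Nat.mono_cast).directed_le
  have hp : M.Invariant p := by
    refine invariant_of_e (fun k w hw ↦ ?_) fun w hw ↦ ?_ <;>
      obtain ⟨n, hn⟩ := mem_p.1 hw
    · exact mem_p.2 ⟨n + k.natAbs, by simpa using e_mem_annihilated_add_abs n.cast_nonneg hn k⟩
    · exact mem_p.2 ⟨n, C_mem_annihilated hn⟩
  have hvp : v ∈ p := mem_p.2 ⟨n.toNat, M.annihilated_mono n.self_le_toNat hv⟩
  rw [isRestricted_iff_exists_mem_annihilated]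
  intro w
  obtain ⟨n, hn⟩ := mem_p.1 (hM.eq_top hp hvp h0 ▸ Submodule.mem_top : w ∈ p)
  exact ⟨n, hn⟩

end IsSimple

end NSRep

/-! ### Induced modules -/

/-- The integral weighting for `T ≥ 2` in which `e 0, …, e T` have weight zero. -/
noncomputable def Weighting.ofTwoLe {T : ℤ} (hT : 2 ≤ T) : Weighting ℤ T where
  deg m := if m < 0 then 1 - m else if m ≤ T then 0 else T - 1 - m
  cone := AddSubmonoid.nonneg ℤ
  isWF_cone := BddBelow.isWF ⟨0, fun _ h ↦ h⟩
  deg_mem_cone hk := by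
    rw [if_pos hk, AddSubmonoid.mem_nonneg]
    lia
  deg_add_le := by grind
  deg_add_lt := by grind
  deg_add_eq := by grind
  deg_zero_nonneg := by grind
  deg_add_neg_pos := by grind

namespace NSRep

/-- `M.IsVacuum T W` says that `W` is a submodule for the nonnegative generators and for `c` on
which the generators `e m` with `m > T` vanish. -/
structure IsVacuum (M : NSRep) (T : ℤ) (W : Submodule ℂ M.carrier) : Prop where
  le_annihilated : W ≤ M.annihilated T
  e_mem : ∀ {m v}, 0 ≤ m → v ∈ W → M.e m v ∈ W
  C_mem : ∀ {v}, v ∈ W → M.C v ∈ W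

lemma isVacuum_annihilated (M : NSRep) {T : ℤ} (hT : 0 ≤ T) : M.IsVacuum T (M.annihilated T) :=
  ⟨le_rfl, fun hm hv ↦ e_mem_annihilated hT hm hv, C_mem_annihilated⟩

namespace IsVacuum

variable {M : NSRep} {T : ℤ} {W : Submodule ℂ M.carrier} (hW : M.IsVacuum T W) (hT : 2 ≤ T)

/-- A vacuum submodule, placed in weight zero. -/
noncomputable def toVacuum : M.Vacuum (Weighting.ofTwoLe hT) where
  space a := if a = 0 then W else ⊥
  mem_cone {a v} hv h0 := by
    split_ifs at hv with ha
    · exact ha.ge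
    · exact absurd ((Submodule.mem_bot ℂ).1 hv) h0
  e_mem {m a v} hm hmT hv := by
    rw [show (Weighting.ofTwoLe hT).deg m = 0 by simp [Weighting.ofTwoLe, hm.not_gt, hmT], add_zero]
    split_ifs at hv ⊢
    · exact hW.e_mem hm hv
    · rw [(Submodule.mem_bot ℂ).1 hv, map_zero]
      exact zero_mem _
  e_eq_zero {m a v} hm hv := by
    split_ifs at hv
    · exact mem_annihilated.1 (hW.le_annihilated hv) m hm
    · rw [(Submodule.mem_bot ℂ).1 hv, map_zero]
  C_mem {a v} hv := by
    split_ifs at hv ⊢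
    · exact hW.C_mem hv
    · rw [(Submodule.mem_bot ℂ).1 hv, map_zero]
      exact zero_mem _

lemma toVacuum_space (a : ℤ) : (hW.toVacuum hT).space a = if a = 0 then W else ⊥ := rfl

lemma le_wordSpan : W ≤ (hW.toVacuum hT).wordSpan Set.univ := fun _ hv ↦
  Vacuum.mem_wordSpan_of_mem_space (a := 0) (by rwa [toVacuum_space, if_pos rfl]) trivial

lemma eq_zero_of_mem_wordSpan {A : Set ℤ} (hA : ∀ a ∈ A, a < 0) {w : M.carrier}
    (hw : w ∈ (hW.toVacuum hT).wordSpan A) : w = 0 := by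
  by_contra h0
  obtain ⟨a, ha, hac, -⟩ := Vacuum.exists_mem_wordSpan_Iic hw h0
  exact (hA a ha).not_ge hac

lemma mem_of_mem_annihilated (hTe : Even T) (hinj : ∀ v ∈ W, M.e T v = 0 → v = 0) {w : M.carrier}
    (hw : w ∈ (hW.toVacuum hT).wordSpan Set.univ) (hwT : w ∈ M.annihilated T) : w ∈ W := by
  suffices w ∈ ⨆ a, (hW.toVacuum hT).space a by
    refine (iSup_le fun a ↦ ?_ : ⨆ a, (hW.toVacuum hT).space a ≤ W) this
    rw [toVacuum_space]
    split_ifs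
    exacts [le_rfl, bot_le]
  refine Vacuum.mem_iSup_space (by lia) hTe (fun a v hv hTv ↦ ?_) hw hwT
  rw [show (Weighting.ofTwoLe hT).deg T = 0 by simp [Weighting.ofTwoLe, (by lia : ¬ T < 0)],
    add_zero] at hTv
  suffices v = 0 from this ▸ zero_mem _
  rw [toVacuum_space] at hv
  split_ifs at hv with ha
  · subst ha
    exact hinj v hv (hW.eq_zero_of_mem_wordSpan hT (fun _ ↦ id) hTv)
  · exact (Submodule.mem_bot ℂ).1 hv

lemma e_mem_wordSpan_Iic_sub_one {m : ℤ} (hm : T < m) {a : ℤ} {w : M.carrier}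
    (hw : w ∈ (hW.toVacuum hT).wordSpan (Set.Iic a)) :
    M.e m w ∈ (hW.toVacuum hT).wordSpan (Set.Iic (a - 1)) := by
  refine Vacuum.wordSpan_mono (Set.Iic_subset_Iic.2 ?_) (Vacuum.e_mem_wordSpan_Iic m hw)
  simp only [Weighting.ofTwoLe]
  grind

lemma eq_bot_of_disjoint {N : Submodule ℂ M.carrier} (hN : ∀ m, T < m → ∀ v ∈ N, M.e m v ∈ N)
    (hNW : N ≤ (hW.toVacuum hT).wordSpan Set.univ) (hd : Disjoint N (M.annihilated T)) : N = ⊥ := by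
  have eq_zero (n : ℕ) : ∀ w ∈ N,
      w ∈ (hW.toVacuum hT).wordSpan (Set.Iic ((n : ℤ) - 1)) → w = 0 := by
    induction n with
    | zero =>
      intro w _ hw
      exact hW.eq_zero_of_mem_wordSpan hT (fun a ha ↦ by simpa using ha.trans_lt neg_one_lt_zero) hw
    | succ n ih =>
      intro w hwN hw
      refine Submodule.disjoint_def.1 hd w hwN
        (mem_annihilated.2 fun m hm ↦ ih _ (hN m hm w hwN) ?_)
      simpa using hW.e_mem_wordSpan_Iic_sub_one hT hm hw
  refine (Submodule.eq_bot_iff _).2 fun w hw ↦ by_contra fun h0 ↦ h0 ?_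
  obtain ⟨a, -, -, hwa⟩ := Vacuum.exists_mem_wordSpan_Iic (hNW hw) h0
  exact eq_zero (a + 1).toNat w hw (Vacuum.wordSpan_mono (Set.Iic_subset_Iic.2 (by lia)) hwa)

end IsVacuum

end NSRep

namespace NSRep

/-- The direct sum of two modules. -/
def prod (M N : NSRep) : NSRep where
  carrier := M.carrier × N.carrier
  L m := (M.L m).prodMap (N.L m)
  G j := (M.G j).prodMap (N.G j)
  C := M.C.prodMap N.C
  commC_L m v := Prod.ext (M.commC_L m v.1) (N.commC_L m v.2)
  commC_G j v := Prod.ext (M.commC_G j v.1) (N.commC_G j v.2)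
  rel_LL m n v := Prod.ext (M.rel_LL m n v.1) (N.rel_LL m n v.2)
  rel_LG m j v := Prod.ext (M.rel_LG m j v.1) (N.rel_LG m j v.2)
  rel_GG j k v := Prod.ext (M.rel_GG j k v.1) (N.rel_GG j k v.2)

/-- The first projection of a direct sum of modules. -/
def prodFst (M N : NSRep) : (M.prod N).carrier →ₗ[ℂ] M.carrier :=
  LinearMap.fst ℂ M.carrier N.carrier

/-- The space of vectors killed by all `e m` with `m > n`, as a module over `b`. -/
noncomputable def annihilatedRep (M : NSRep) (n : ℕ) : BRep where
  carrier := M.annihilated n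
  L i := (M.L i).restrict fun v hv ↦ by
    rw [← e_two_mul]
    exact e_mem_annihilated n.cast_nonneg (by lia) hv
  G j := (M.G (j + 1)).restrict fun v hv ↦ by
    rw [← e_two_mul_sub_one]
    exact e_mem_annihilated n.cast_nonneg (by lia) hv
  rel_LL m k v := Subtype.ext <| by
    have hC : (if (m : ℤ) + k = 0 then (((m : ℤ) : ℂ) ^ 3 - (m : ℤ)) / 12 else 0) = 0 := by
      split_ifs with h
      · simp [(by lia : m = 0)]
      · rfl
    have h := M.rel_LL m k v.1
    rwa [hC, zero_smul, add_zero] at h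
  rel_LG m j v := Subtype.ext <| by
    have h := M.rel_LG m (j + 1) v.1
    rwa [← add_assoc, show (((m : ℤ) : ℂ) - 2 * ((j + 1 : ℤ) : ℂ) + 1) / 2 = (m - 2 * j - 1) / 2 by
      push_cast; ring] at h
  rel_GG j k v := Subtype.ext <| by
    have h := M.rel_GG (j + 1) (k + 1) v.1
    rwa [if_neg (by lia), zero_smul, add_zero,
      show (j : ℤ) + 1 + (k + 1) - 1 = (j + k + 1 : ℕ) by push_cast; ring] at h

/-- The inclusion of `annihilatedRep` into the ambient module. -/
noncomputable def annihilatedVal (M : NSRep) (n : ℕ) :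
    (M.annihilatedRep n).carrier →ₗ[ℂ] M.carrier :=
  (M.annihilated n).subtype

end NSRep

/-- The counterpart of `NSRep.e` for the generators of `b`. -/
noncomputable def BRep.e (V : BRep) (k : ℕ) : Module.End ℂ V.carrier :=
  if Even k then V.L (k / 2) else V.G (k / 2)

lemma BRep.Invariant.e_mem {V : BRep} {p : Submodule ℂ V.carrier} (hp : V.Invariant p) (k : ℕ)
    {v : V.carrier} (hv : v ∈ p) : V.e k v ∈ p := by
  rw [e]
  split_ifs
  · exact hp.1 _ v hv
  · exact hp.2 _ v hv

namespace IsBLinear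

variable {V : BRep} {M N : NSRep} {f : V.carrier →ₗ[ℂ] M.carrier} {g : V.carrier →ₗ[ℂ] N.carrier}

lemma map_e (hf : IsBLinear V M f) (k : ℕ) (v : V.carrier) : f (V.e k v) = M.e k (f v) := by
  rw [BRep.e]
  obtain ⟨i, rfl | rfl⟩ := k.even_or_odd'
  · rw [if_pos (even_two_mul i), show 2 * i / 2 = i by lia, hf.1]
    exact congrArg (· (f v)) (M.e_two_mul i).symm
  · rw [if_neg (by grind), show (2 * i + 1) / 2 = i by lia, hf.2, ← M.e_two_mul_sub_one]
    push_cast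
    ring_nf

lemma prod (hf : IsBLinear V M f) (hg : IsBLinear V N g) : IsBLinear V (M.prod N) (f.prod g) :=
  ⟨fun i v ↦ Prod.ext (hf.1 i v) (hg.1 i v), fun j v ↦ Prod.ext (hf.2 j v) (hg.2 j v)⟩

end IsBLinear

namespace IsNSHom

variable {M N : NSRep} {F : M.carrier →ₗ[ℂ] N.carrier} (hF : IsNSHom M N F)
include hF

lemma map_e (m : ℤ) (v : M.carrier) : F (M.e m v) = N.e m (F v) := by
  rw [NSRep.e, NSRep.e]
  split_ifs
  exacts [hF.1 _ v, hF.2.1 _ v]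

lemma invariant_map {p : Submodule ℂ M.carrier} (hp : M.Invariant p) : N.Invariant (p.map F) := by
  refine ⟨?_, ?_, ?_⟩
  · rintro m _ ⟨v, hv, rfl⟩
    exact ⟨_, hp.1 m v hv, hF.1 m v⟩
  · rintro j _ ⟨v, hv, rfl⟩
    exact ⟨_, hp.2.1 j v hv, hF.2.1 j v⟩
  · rintro _ ⟨v, hv, rfl⟩
    exact ⟨_, hp.2.2 v hv, hF.2.2 v⟩

end IsNSHom

namespace NSRep

variable {M N : NSRep} {n : ℕ} {ℓ : ℂ}

lemma isNSHom_prodFst (M N : NSRep) : IsNSHom (M.prod N) M (M.prodFst N) :=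
  ⟨fun _ _ ↦ rfl, fun _ _ ↦ rfl, fun _ ↦ rfl⟩

lemma isNSHom_of_invariant_graph {F : M.carrier →ₗ[ℂ] N.carrier}
    (h : (M.prod N).Invariant F.graph) : IsNSHom M N F :=
  ⟨fun m v ↦ (h.1 m (v, F v) rfl).symm, fun j v ↦ (h.2.1 j (v, F v) rfl).symm,
    fun v ↦ (h.2.2 (v, F v) rfl).symm⟩

lemma IsSimple.hom_ext (hM : M.IsSimple) {F F' : M.carrier →ₗ[ℂ] N.carrier} (hF : IsNSHom M N F)
    (hF' : IsNSHom M N F') {v : M.carrier} (h0 : v ≠ 0) (hv : F v = F' v) : F = F' := by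
  refine LinearMap.eqLocus_eq_top.1 (hM.eq_top ⟨?_, ?_, ?_⟩ hv h0)
  · intro m w hw
    rw [LinearMap.mem_eqLocus] at hw ⊢
    rw [hF.1, hF'.1, hw]
  · intro j w hw
    rw [LinearMap.mem_eqLocus] at hw ⊢
    rw [hF.2.1, hF'.2.1, hw]
  · intro w hw
    rw [LinearMap.mem_eqLocus] at hw ⊢
    rw [hF.2.2, hF'.2.2, hw]

lemma HasCentralCharge.prod (hM : M.HasCentralCharge ℓ) (hN : N.HasCentralCharge ℓ) :
    (M.prod N).HasCentralCharge ℓ :=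
  fun v ↦ Prod.ext (hM v.1) (hN v.2)

lemma isBLinear_annihilatedVal (M : NSRep) (n : ℕ) :
    IsBLinear (M.annihilatedRep n) M (M.annihilatedVal n) :=
  ⟨fun _ _ ↦ rfl, fun _ _ ↦ rfl⟩

lemma annihilatedVal_mem (v : (M.annihilatedRep n).carrier) :
    M.annihilatedVal n v ∈ M.annihilated n :=
  (v : M.annihilated n).2

lemma annihilatedVal_injective : Function.Injective (M.annihilatedVal n) :=
  (M.annihilated n).subtype_injective

lemma annihilatedRep_e_eq_zero {k : ℕ} (hk : n < k) (v : (M.annihilatedRep n).carrier) :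
    (M.annihilatedRep n).e k v = 0 := by
  apply annihilatedVal_injective
  rw [(isBLinear_annihilatedVal M n).map_e, map_zero]
  exact mem_annihilated.1 (annihilatedVal_mem v) k (by exact_mod_cast hk)

lemma isVacuum_map {p : Submodule ℂ (M.annihilatedRep n).carrier}
    (hp : (M.annihilatedRep n).Invariant p) {f : (M.annihilatedRep n).carrier →ₗ[ℂ] N.carrier}
    (hf : IsBLinear (M.annihilatedRep n) N f) (hN : N.HasCentralCharge ℓ) :
    N.IsVacuum n (p.map f) where
  le_annihilated := by
    rintro _ ⟨v, -, rfl⟩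
    refine mem_annihilated.2 fun m hm ↦ ?_
    lift m to ℕ using by lia
    rw [← hf.map_e, annihilatedRep_e_eq_zero (by exact_mod_cast hm), map_zero]
  e_mem {m _} hm := by
    rintro ⟨v, hv, rfl⟩
    lift m to ℕ using hm
    exact ⟨_, hp.e_mem m hv, hf.map_e m v⟩
  C_mem hv := by
    rw [hN]
    exact Submodule.smul_mem _ ℓ hv

namespace IsSimple

variable (hM : M.IsSimple) (h2 : 2 ≤ n) (heven : Even n) (hC : M.HasCentralCharge ℓ)
  (hne : M.annihilated n ≠ ⊥) (hinj : ∀ v ∈ M.annihilated n, M.e n v = 0 → v = 0)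
include hM h2 heven hC hne hinj

lemma annihilatedRep_isSimple : (M.annihilatedRep n).IsSimple := by
  obtain ⟨v, hv, h0⟩ := Submodule.exists_mem_ne_zero_of_ne_bot hne
  refine ⟨⟨⟨v, hv⟩, fun h ↦ h0 (congrArg Subtype.val h)⟩,
    fun p hp ↦ or_iff_not_imp_left.2 fun hpb ↦ Submodule.eq_top_iff'.2 fun w ↦ ?_⟩
  obtain ⟨u, hu, hu0⟩ := Submodule.exists_mem_ne_zero_of_ne_bot hpb
  have hW := isVacuum_map hp (isBLinear_annihilatedVal M n) hC
  have h2' : (2 : ℤ) ≤ n := by exact_mod_cast h2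
  have htop := hM.eq_top Vacuum.invariant_wordSpan_univ (hW.le_wordSpan h2' ⟨u, hu, rfl⟩)
    fun h ↦ hu0 (annihilatedVal_injective (h.trans (map_zero _).symm))
  obtain ⟨w', hw', hww'⟩ := hW.mem_of_mem_annihilated h2' (by exact_mod_cast heven)
    (fun v hv ↦ hinj v (hW.le_annihilated hv)) (htop.ge trivial) (annihilatedVal_mem w)
  exact annihilatedVal_injective hww' ▸ hw'

lemma exists_hom_extending (hN : N.HasCentralCharge ℓ)
    {f : (M.annihilatedRep n).carrier →ₗ[ℂ] N.carrier} (hf : IsBLinear (M.annihilatedRep n) N f) :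
    ∃ F : M.carrier →ₗ[ℂ] N.carrier, IsNSHom M N F ∧ F.comp (M.annihilatedVal n) = f := by
  have h2' : (2 : ℤ) ≤ n := by exact_mod_cast h2
  have hfst := isNSHom_prodFst M N
  set g : (M.annihilatedRep n).carrier →ₗ[ℂ] (M.prod N).carrier := (M.annihilatedVal n).prod f
  have hg (u) : M.prodFst N (g u) = M.annihilatedVal n u := rfl
  have hgb : IsBLinear _ _ g := (isBLinear_annihilatedVal M n).prod hf
  have hW := isVacuum_map (p := ⊤) ⟨fun _ _ _ ↦ trivial, fun _ _ _ ↦ trivial⟩ hgb (hC.prod hN)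
  set p := (hW.toVacuum h2').wordSpan Set.univ
  have hp : (M.prod N).Invariant p := Vacuum.invariant_wordSpan_univ
  have g_mem (u) : g u ∈ p := hW.le_wordSpan h2' ⟨u, trivial, rfl⟩
  have surj : p.map (M.prodFst N) = ⊤ := by
    obtain ⟨v, hv, h0⟩ := Submodule.exists_mem_ne_zero_of_ne_bot hne
    exact hM.eq_top (hfst.invariant_map hp) ⟨_, g_mem ⟨v, hv⟩, rfl⟩ h0
  have inj : p ⊓ LinearMap.ker (M.prodFst N) = ⊥ := by
    refine hW.eq_bot_of_disjoint h2' (fun m _ w hw ↦ Submodule.mem_inf.2 ⟨hp.e_mem m hw.1, ?_⟩)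
      inf_le_left (Submodule.disjoint_def.2 fun w hwN hw ↦ ?_)
    · rw [LinearMap.mem_ker, hfst.map_e, LinearMap.mem_ker.1 hw.2, map_zero]
    · obtain ⟨u, -, rfl⟩ := hW.mem_of_mem_annihilated h2' (by exact_mod_cast heven) (by
        rintro _ ⟨u, -, rfl⟩ hu
        have hu0 := hinj _ (annihilatedVal_mem u) (by rw [← hg, ← hfst.map_e, hu, map_zero])
        rw [annihilatedVal_injective (hu0.trans (map_zero _).symm), map_zero]) hwN.1 hw
      rw [annihilatedVal_injective ((LinearMap.mem_ker.1 hwN.2).trans (map_zero _).symm), map_zero]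
  obtain ⟨F, hF⟩ := Submodule.exists_eq_graph (G := p) ⟨
    (injective_iff_map_eq_zero ((M.prodFst N).comp p.subtype)).2 fun w hw ↦
      Subtype.ext ((Submodule.eq_bot_iff _).1 inj w ⟨w.2, hw⟩), fun w ↦ by
    obtain ⟨u, hu, rfl⟩ := surj.ge (trivial : w ∈ ⊤)
    exact ⟨⟨u, hu⟩, rfl⟩⟩
  exact ⟨F, isNSHom_of_invariant_graph (hF ▸ hp), LinearMap.ext fun u ↦
    ((LinearMap.mem_graph_iff F _).1 (hF ▸ g_mem u)).symm⟩

theorem isInduced_annihilatedRep :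
    IsInduced ℓ (M.annihilatedRep n) M (M.annihilatedVal n) := by
  obtain ⟨v, hv, h0⟩ := Submodule.exists_mem_ne_zero_of_ne_bot hne
  refine ⟨isBLinear_annihilatedVal M n, hC, fun N hN f hf ↦ ?_⟩
  obtain ⟨F, hF, hFf⟩ := hM.exists_hom_extending h2 heven hC hne hinj hN hf
  refine ⟨F, ⟨hF, hFf⟩, fun F' ⟨hF', hFf'⟩ ↦ hM.hom_ext hF' hF h0 ?_⟩
  exact LinearMap.congr_fun (hFf'.trans hFf.symm) ⟨v, hv⟩

end IsSimple

end NSRep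

/-! ### Modules over `m^(t)` -/

namespace NSRep

variable {M : NSRep} {t : ℕ}

lemma IsVacuum.mLocallyNilpotent {T : ℕ} {W : Submodule ℂ M.carrier} (hW : M.IsVacuum T W)
    (hT : (2 : ℤ) ≤ T) (htop : (hW.toVacuum hT).wordSpan Set.univ = ⊤) : M.MLocallyNilpotent T := by
  intro v
  rcases eq_or_ne v 0 with rfl | h0
  · exact ⟨1, one_pos, fun ops hops _ ↦ by
      obtain ⟨f, rfl⟩ := List.length_eq_one_iff.1 hops
      exact map_zero f⟩
  obtain ⟨a, -, -, hva⟩ := Vacuum.exists_mem_wordSpan_Iic (htop.ge (trivial : v ∈ ⊤)) h0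
  have foldr_mem (ops : List (M.carrier →ₗ[ℂ] M.carrier)) (hops : ∀ f ∈ ops, f ∈ M.mOps T) :
      ops.foldr (fun f x ↦ f x) v ∈ (hW.toVacuum hT).wordSpan (Set.Iic (a - ops.length)) := by
    induction ops with
    | nil => simpa using hva
    | cons f ops ih =>
      rw [List.foldr_cons, List.length_cons, Nat.cast_succ, ← sub_sub]
      have hv := ih fun g hg ↦ hops g (List.mem_cons_of_mem f hg)
      obtain ⟨m, hm, rfl | rfl⟩ := hops f List.mem_cons_self
      · rw [← e_two_mul]
        exact hW.e_mem_wordSpan_Iic_sub_one hT (by lia) hv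
      · rw [← e_two_mul_sub_one]
        exact hW.e_mem_wordSpan_Iic_sub_one hT (by lia) hv
  refine ⟨a.toNat + 1, Nat.succ_pos _, fun ops hlen hops ↦
    hW.eq_zero_of_mem_wordSpan hT (fun b hb ↦ ?_) (foldr_mem ops hops)⟩
  rw [Set.mem_Iic, hlen] at hb
  lia

theorem IsSimple.exists_mLocallyNilpotent (hM : M.IsSimple) (hR : M.IsRestricted) :
    ∃ t : ℕ, 0 < t ∧ M.MLocallyNilpotent t := by
  obtain ⟨v, h0⟩ := hM.1
  obtain ⟨n, hn⟩ := isRestricted_iff_exists_mem_annihilated.1 hR v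
  have hT : (2 : ℤ) ≤ (n.toNat + 2 : ℕ) := by lia
  have hW := M.isVacuum_annihilated (zero_le_two.trans hT)
  have hv : v ∈ M.annihilated (n.toNat + 2 : ℕ) :=
    M.annihilated_mono (by lia : n ≤ (n.toNat + 2 : ℕ)) hn
  exact ⟨n.toNat + 2, Nat.succ_pos _, hW.mLocallyNilpotent hT
    (hM.eq_top Vacuum.invariant_wordSpan_univ (hW.le_wordSpan hT hv) h0)⟩

/-- The `m^(t)`-submodule generated by a vector. -/
def mSpan (M : NSRep) (t : ℕ) (v : M.carrier) : Submodule ℂ M.carrier :=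
  Submodule.span ℂ {w | ∃ ops : List (M.carrier →ₗ[ℂ] M.carrier),
    (∀ f ∈ ops, f ∈ M.mOps t) ∧ w = ops.foldr (fun f x ↦ f x) v}

lemma mSpan_le (v : M.carrier) :
    M.mSpan t v ≤ Submodule.span ℂ {v} ⊔ ⨆ f ∈ M.mOps t, M.mSpan t (f v) := by
  refine Submodule.span_le.2 ?_
  rintro _ ⟨ops, hops, rfl⟩
  rcases ops.eq_nil_or_concat with rfl | ⟨ops, f, rfl⟩
  · exact Submodule.mem_sup_left (Submodule.mem_span_singleton_self v)
  · rw [List.concat_eq_append] at hops ⊢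
    rw [List.foldr_append, List.foldr_cons, List.foldr_nil]
    refine Submodule.mem_sup_right (Submodule.mem_iSup_of_mem f (Submodule.mem_iSup_of_mem
      (hops f (by simp)) (Submodule.subset_span ⟨ops, fun g hg ↦ hops g (by simp [hg]), rfl⟩)))

lemma mSpan_zero : M.mSpan t 0 = ⊥ := by
  rw [mSpan, Submodule.span_eq_bot]
  rintro _ ⟨ops, -, rfl⟩
  induction ops with
  | nil => rfl
  | cons f ops ih => rw [List.foldr_cons, ih, map_zero]

lemma IsRestricted.fg_mSpan (hR : M.IsRestricted) (n : ℕ) {v : M.carrier}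
    (hv : ∀ ops : List (M.carrier →ₗ[ℂ] M.carrier), ops.length = n →
      (∀ f ∈ ops, f ∈ M.mOps t) → ops.foldr (fun f x ↦ f x) v = 0) : (M.mSpan t v).FG := by
  induction n generalizing v with
  | zero =>
    rw [show v = 0 from hv [] rfl (by simp), mSpan_zero]
    exact Submodule.fg_bot
  | succ n ih =>
    have hfg (f) (hf : f ∈ M.mOps t) : (M.mSpan t (f v)).FG := ih fun ops hlen hops ↦ by
      have h := hv (ops ++ [f]) (by simp [hlen]) (by simpa [or_imp, forall_and] using ⟨hops, hf⟩)
      rwa [List.foldr_append, List.foldr_cons, List.foldr_nil] at h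
    obtain ⟨N, hN⟩ := hR v
    set X := ⨆ m ∈ Finset.Ioo (t : ℤ) N, M.mSpan t (M.L m v) ⊔ M.mSpan t (M.G m v)
    have hXfg : X.FG := Submodule.fg_biSup _ _ fun m hm ↦
      have hm := (Finset.mem_Ioo.1 hm).1
      (hfg _ ⟨m, hm, .inl rfl⟩).sup (hfg _ ⟨m, hm, .inr rfl⟩)
    refine ((Submodule.fg_span_singleton v).sup hXfg).of_le ((mSpan_le v).trans
      (sup_le_sup_left (iSup₂_le fun f hf ↦ ?_) _))
    obtain ⟨m, hm, hfm⟩ := hf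
    rcases lt_or_ge m N with hmN | hmN
    · refine le_trans ?_ (le_biSup _ (Finset.mem_Ioo.2 ⟨hm, hmN⟩))
      rcases hfm with rfl | rfl
      exacts [le_sup_left, le_sup_right]
    · have : f v = 0 := by
        rcases hfm with rfl | rfl
        exacts [(hN m hmN).1, (hN m hmN).2]
      rw [this, mSpan_zero]
      exact bot_le

theorem MLocallyNilpotent.mLocallyFinite (h : M.MLocallyNilpotent t) (hR : M.IsRestricted) :
    M.MLocallyFinite t := fun v ↦ by
  obtain ⟨n, -, hn⟩ := h v
  refine Module.Finite.iff_fg.2 ((hR.fg_mSpan n hn).of_le (Submodule.span_mono ?_))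
  rintro w ⟨ops, -, hops, rfl⟩
  exact ⟨ops, hops, rfl⟩

end NSRep

/-! ### Highest weight modules -/

open Polynomial in
lemma exists_eigenvector_or_linearIndependent_pow {K V : Type*} [Field K] [IsAlgClosed K]
    [AddCommGroup V] [Module K V] (f : Module.End K V) {v : V} (hv : v ≠ 0) :
    (∃ w ≠ 0, ∃ μ : K, f w = μ • w) ∨ LinearIndependent K fun n : ℕ ↦ (f ^ n) v := by
  refine or_iff_not_imp_left.2 fun no_eigenvector ↦ ?_
  push Not at no_eigenvector
  have eq_zero (s : Multiset K) : aeval f (s.map fun μ ↦ X - C μ).prod v ≠ 0 := by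
    induction s using Multiset.induction with
    | empty => simpa using hv
    | cons μ s ih =>
      rw [Multiset.map_cons, Multiset.prod_cons, map_mul, Module.End.mul_apply, map_sub, aeval_X,
        aeval_C, LinearMap.sub_apply, Module.algebraMap_end_apply]
      exact sub_ne_zero.2 (no_eigenvector _ ih μ)
  let φ : K[X] →ₗ[K] V := (LinearMap.applyₗ v).comp (aeval f).toLinearMap
  have ker_φ : LinearMap.ker φ = ⊥ := by
    refine (Submodule.eq_bot_iff _).2 fun p hp ↦ by_contra fun hp0 ↦ eq_zero p.roots ?_
    have h : aeval f p v = 0 := hp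
    rw [(IsAlgClosed.splits p).eq_prod_roots, map_mul, aeval_C, Module.End.mul_apply,
      Module.algebraMap_end_apply] at h
    exact (smul_eq_zero.1 h).resolve_left (leadingCoeff_ne_zero.2 hp0)
  have h := (basisMonomials K).linearIndependent.map' φ ker_φ
  rwa [show φ ∘ basisMonomials K = fun n ↦ (f ^ n) v by ext n; simp [φ]] at h

/-- The lexicographic weighting for `T = 0`, whose first component is the negative of the index. -/
noncomputable def Weighting.lex : Weighting (ℤ ×ₗ ℤ) 0 where
  deg m := toLex (-m, if m = 0 then 2 else 1 - m)
  cone := {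
    carrier := toLex '' (Set.Ici 0 ×ˢ Set.Ici 0)
    zero_mem' := ⟨0, ⟨le_rfl, le_rfl⟩, rfl⟩
    add_mem' := by
      rintro _ _ ⟨a, ha, rfl⟩ ⟨b, hb, rfl⟩
      exact ⟨a + b, ⟨add_nonneg (α := ℤ) ha.1 hb.1, add_nonneg (α := ℤ) ha.2 hb.2⟩, rfl⟩ }
  isWF_cone := by
    have hIci : (Set.Ici (0 : ℤ)).IsPWO := (BddBelow.isWF bddBelow_Ici).isPWO
    exact ((hIci.prod hIci).image_of_monotone Prod.Lex.toLex_mono).isWF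
  deg_mem_cone {k} hk := ⟨_, ⟨by simpa using hk.le, by simp only [Set.mem_Ici]; grind⟩, rfl⟩
  deg_add_le hl := by
    rw [← toLex_add, Prod.mk_add_mk, Prod.Lex.toLex_le_toLex]
    grind
  deg_add_lt _ _ hkl := by
    rw [← toLex_add, Prod.mk_add_mk, Prod.Lex.toLex_lt_toLex]
    grind
  deg_add_eq hl hkl := by
    rw [← toLex_add, Prod.mk_add_mk, neg_zero]
    grind
  deg_zero_nonneg := by
    rw [← toLex_zero, Prod.Lex.toLex_le_toLex]
    simp
  deg_add_neg_pos _ := by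
    rw [← toLex_add, ← toLex_zero, Prod.mk_add_mk, ← Prod.mk_zero_zero, Prod.Lex.toLex_lt_toLex]
    grind

namespace NSRep

variable {M : NSRep} {v : M.carrier} {ℓ : ℂ} (hC : M.HasCentralCharge ℓ)
  (hv : v ∈ M.annihilated 0)

omit hC in
include hv in
lemma pow_L_zero_mem_annihilated (n : ℕ) : (M.L 0 ^ n) v ∈ M.annihilated 0 := by
  induction n with
  | zero => exact hv
  | succ n ih =>
    rw [pow_succ', Module.End.mul_apply, ← e_two_mul]
    exact e_mem_annihilated le_rfl le_rfl ih

/-- The vectors `L_0 v, L_0² v, …`, placed in the weights `deg (L_0), 2 deg (L_0), …` shifted so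
that the first weight is zero. -/
noncomputable def lexVacuum : M.Vacuum Weighting.lex where
  space a := Submodule.span ℂ {w | ∃ i : ℕ, a = toLex (0, 2 * (i : ℤ)) ∧ w = (M.L 0 ^ (i + 1)) v}
  mem_cone {a w} hw h0 := by
    by_contra ha
    refine h0 ((Submodule.mem_bot ℂ).1 (Submodule.span_le.2 ?_ hw))
    rintro _ ⟨i, rfl, rfl⟩
    exact absurd ⟨(0, 2 * (i : ℤ)), by simp, rfl⟩ ha
  e_mem {m a w} hm hm0 hw := by
    obtain rfl := le_antisymm hm hm0
    refine (Submodule.span_le (p := (Submodule.span ℂ _).comap (M.e 0))).2 ?_ hw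
    rintro _ ⟨i, rfl, rfl⟩
    refine Submodule.subset_span ⟨i + 1, ?_, ?_⟩
    · simp only [Weighting.lex, ← toLex_add, Prod.mk_add_mk]
      grind
    · rw [pow_succ' _ (i + 1), Module.End.mul_apply, ← e_two_mul, mul_zero]
  e_eq_zero {m a w} hm hw := by
    refine (Submodule.span_le (p := LinearMap.ker (M.e m))).2 ?_ hw
    rintro _ ⟨i, -, rfl⟩
    exact mem_annihilated.1 (pow_L_zero_mem_annihilated hv _) m hm
  C_mem {a w} hw := by
    rw [hC]
    exact Submodule.smul_mem _ ℓ hw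

omit hv in
lemma Vacuum.IsWord.mem_space_of_fst_le_zero {V : M.Vacuum Weighting.lex} {a : ℤ ×ₗ ℤ}
    {w : M.carrier} (h : V.IsWord a w) (ha : (ofLex a).1 ≤ 0) : w ∈ V.space a := by
  cases h with
  | base _ hw => exact hw
  | step hk h =>
    obtain ⟨b, hb, rfl⟩ := h.mem_cone
    have h1 : (0 : ℤ) ≤ b.1 := hb.1
    have h2 : b.1 + -_ ≤ 0 := ha
    lia

lemma exists_of_mem_lexVacuum_space {a : ℤ ×ₗ ℤ} {w : M.carrier}
    (hw : w ∈ (lexVacuum hC hv).space a) (h0 : w ≠ 0) :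
    ∃ (i : ℕ) (c : ℂ), a = toLex (0, 2 * (i : ℤ)) ∧ c • (M.L 0 ^ (i + 1)) v = w := by
  obtain ⟨i, rfl⟩ : ∃ i : ℕ, a = toLex (0, 2 * (i : ℤ)) := by
    by_contra! ha
    refine h0 ((Submodule.mem_bot ℂ).1 (Submodule.span_le.2 ?_ hw))
    rintro _ ⟨i, rfl, -⟩
    exact absurd rfl (ha i)
  obtain ⟨c, hc⟩ := Submodule.mem_span_singleton.1 (Submodule.span_mono (t := {_}) (by
    rintro _ ⟨j, hj, rfl⟩
    rw [toLex_inj, Prod.mk.injEq] at hj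
    rw [show j = i by lia]
    exact rfl) hw)
  exact ⟨i, c, rfl, hc⟩

lemma wordSpan_lexVacuum_le (n : ℕ) :
    (lexVacuum hC hv).wordSpan (Set.Iio (toLex (0, 2 * (n : ℤ)))) ≤
      Submodule.span ℂ ((fun i ↦ (M.L 0 ^ i) v) '' Set.Iio (n + 1)) := by
  refine Submodule.span_le.2 ?_
  rintro w ⟨a, ha, hw⟩
  have ha' := Prod.Lex.lt_iff.1 ha
  rcases eq_or_ne w 0 with rfl | h0
  · exact zero_mem _
  obtain ⟨i, c, rfl, rfl⟩ := exists_of_mem_lexVacuum_space hC hv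
    (hw.mem_space_of_fst_le_zero (Prod.Lex.monotone_fst a _ (le_of_lt ha))) h0
  refine Submodule.smul_mem _ c (Submodule.subset_span ⟨i + 1, ?_, rfl⟩)
  simp only [ofLex_toLex, lt_self_iff_false, false_or, true_and] at ha'
  exact Set.mem_Iio.2 (by lia)

include hC hv in
lemma IsSimple.not_linearIndependent_pow_L_zero (hM : M.IsSimple) :
    ¬ LinearIndependent ℂ fun n : ℕ ↦ (M.L 0 ^ n) v := by
  intro hli
  have h1 : M.L 0 v ≠ 0 := by simpa using hli.ne_zero 1
  have mem_space : M.L 0 v ∈ (lexVacuum hC hv).space 0 := Submodule.subset_span ⟨0, rfl, by simp⟩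
  have htop := hM.eq_top Vacuum.invariant_wordSpan_univ
    (Vacuum.mem_wordSpan_of_mem_space mem_space trivial) h1
  have hv_mem := Vacuum.mem_iSup_space le_rfl Even.zero (fun a w hw hLw ↦ ?_)
    (htop.ge (trivial : v ∈ ⊤)) hv
  · refine hli.notMem_span_image (s := Set.Ioi 0) (x := 0) (by simp)
      ((iSup_le fun a ↦ Submodule.span_le.2 ?_ : _ ≤ Submodule.span ℂ _) hv_mem)
    rintro _ ⟨i, -, rfl⟩
    exact Submodule.subset_span ⟨i + 1, i.succ_pos, rfl⟩
  · by_contra hwa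
    obtain ⟨i, c, rfl, rfl⟩ := exists_of_mem_lexVacuum_space hC hv hw fun h ↦ hwa (h ▸ zero_mem _)
    have hc : c ≠ 0 := by
      rintro rfl
      exact hwa (by rw [zero_smul]; exact zero_mem _)
    rw [map_smul, Submodule.smul_mem_iff _ hc,
      show toLex (0, 2 * (i : ℤ)) + Weighting.lex.deg 0 = toLex (0, 2 * ((i + 1 : ℕ) : ℤ)) by
        simp only [Weighting.lex, ← toLex_add, Prod.mk_add_mk]; grind,
      show M.e 0 = M.L 0 from M.e_two_mul 0, ← Module.End.mul_apply, ← pow_succ'] at hLw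
    exact hli.notMem_span_image (s := Set.Iio (i + 2)) (x := i + 2) (by simp)
      (wordSpan_lexVacuum_le hC hv (i + 1) hLw)

include hC hv in
theorem IsSimple.isHighestWeight (hM : M.IsSimple) (h0 : v ≠ 0) : M.IsHighestWeight := by
  let f : Module.End ℂ (M.annihilated 0) := (M.L 0).restrict fun w hw ↦ by
    simpa using pow_L_zero_mem_annihilated hw 1
  rcases exists_eigenvector_or_linearIndependent_pow f (v := ⟨v, hv⟩)
    fun h ↦ h0 (congrArg Subtype.val h) with ⟨w, hw0, h, hw⟩ | hli
  · refine ⟨w, h, ℓ, fun h ↦ hw0 (Subtype.ext h), congrArg Subtype.val hw, hC w, fun n hn ↦ ?_,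
      fun j hj ↦ ?_, fun p hp hwp ↦ hM.eq_top hp hwp fun h ↦ hw0 (Subtype.ext h)⟩
    · rw [← e_two_mul]
      exact mem_annihilated.1 w.2 _ (by lia)
    · rw [← e_two_mul_sub_one]
      exact mem_annihilated.1 w.2 _ (by lia)
  · refine absurd ?_ (hM.not_linearIndependent_pow_L_zero hC hv)
    have coe_pow (n : ℕ) : (M.annihilated 0).subtype ((f ^ n) ⟨v, hv⟩) = (M.L 0 ^ n) v := by
      rw [Module.End.pow_restrict]
      rfl
    have h := hli.map' (M.annihilated 0).subtype (Submodule.ker_subtype _)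
    simpa only [Function.comp_def, coe_pow] using h

end NSRep

/-! ### Central charge -/

open Polynomial in
lemma linearIndependent_of_apply_sub_smul_eq {K V : Type*} [Field K] [AddCommGroup V] [Module K V]
    {f : Module.End K V} {v : V} (hv : LinearIndependent K fun n : ℕ ↦ (f ^ n) v) {u : K → V}
    (hu : ∀ c, f (u c) - c • u c = v) : LinearIndependent K u := by
  classical
  have eq_zero {p : K[X]} (hp : aeval f p v = 0) : p = 0 := by
    rw [aeval_eq_sum_range, LinearMap.sum_apply] at hp
    ext n
    rcases le_or_gt n p.natDegree with hn | hn
    · exact linearIndependent_iff'.1 hv _ p.coeff hp n (Finset.mem_range_succ_iff.2 hn)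
    · exact coeff_eq_zero_of_natDegree_lt hn
  have aeval_mul (c : K) (q : K[X]) : aeval f ((X - C c) * q) (u c) = aeval f q v := by
    rw [mul_comm, map_mul, Module.End.mul_apply, map_sub, aeval_X, aeval_C, LinearMap.sub_apply,
      Module.algebraMap_end_apply, hu]
  rw [linearIndependent_iff']
  intro s g hg i hi
  have hsum : ∑ j ∈ s, g j • ∏ k ∈ s.erase j, (X - C k) = 0 := eq_zero <| by
    rw [map_sum, LinearMap.sum_apply, ← map_zero (aeval f (∏ k ∈ s, (X - C k))), ← hg, map_sum]
    refine Finset.sum_congr rfl fun j hj ↦ ?_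
    rw [map_smul, map_smul, LinearMap.smul_apply, ← Finset.mul_prod_erase s _ hj, aeval_mul]
  have heval := congrArg (eval i) hsum
  rw [eval_finsetSum, eval_zero, Finset.sum_eq_single_of_mem i hi fun j _ hji ↦ ?_, eval_smul,
    smul_eq_zero, eval_prod] at heval
  · refine heval.resolve_right (Finset.prod_ne_zero_iff.2 fun k hk ↦ ?_)
    rw [eval_sub, eval_X, eval_C]
    exact sub_ne_zero.2 (Finset.ne_of_mem_erase hk).symm
  · rw [eval_smul, eval_prod, Finset.prod_eq_zero (Finset.mem_erase.2 ⟨hji.symm, hi⟩) (by simp),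
      smul_zero]

universe u in
theorem spectrum_nonempty_of_rank_lt {K V : Type u} [Field K] [IsAlgClosed K] [AddCommGroup V]
    [Module K V] [Nontrivial V] (h : Module.rank K V < Cardinal.mk K) (f : Module.End K V) :
    (spectrum K f).Nonempty := by
  by_contra! hempty
  have hbij (c : K) : Function.Bijective (algebraMap K (Module.End K V) c - f) := by
    have := (hempty ▸ Set.notMem_empty c : c ∉ spectrum K f)
    rwa [spectrum.notMem_iff, Module.End.isUnit_iff] at this
  obtain ⟨v, hv⟩ := exists_ne (0 : V)
  rcases exists_eigenvector_or_linearIndependent_pow f hv with ⟨w, hw, μ, hfw⟩ | hli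
  · refine hw ((hbij μ).injective ?_)
    simp [hfw]
  · choose u hu using fun c ↦ (hbij c).surjective (-v)
    refine h.not_ge
      (linearIndependent_of_apply_sub_smul_eq hli (u := u) fun c ↦ ?_).cardinal_le_rank
    rw [← neg_inj, ← hu c]
    simp

namespace NSRep

variable {M : NSRep}

namespace IsSimple

variable (hM : M.IsSimple)
include hM

lemma rank_le_aleph0 : Module.rank ℂ M.carrier ≤ Cardinal.aleph0 := by
  obtain ⟨v, hv⟩ := hM.1
  let operator (o : Option ℤ) : Module.End ℂ M.carrier := o.elim M.C M.e
  let word (l : List (Option ℤ)) : M.carrier := l.foldr (fun o x ↦ operator o x) v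
  have operator_mem (o) : ∀ w ∈ Submodule.span ℂ (Set.range word),
      operator o w ∈ Submodule.span ℂ (Set.range word) := by
    refine (Submodule.span_le (p := (Submodule.span ℂ _).comap (operator o))).2 ?_
    rintro _ ⟨l, rfl⟩
    exact Submodule.subset_span ⟨o :: l, rfl⟩
  have htop := hM.eq_top (invariant_of_e (fun m ↦ operator_mem (some m)) (operator_mem none))
    (Submodule.subset_span ⟨[], rfl⟩) hv
  rw [← rank_top, ← htop]
  exact (rank_span_le _).trans (Set.countable_range word).le_aleph0

theorem exists_hasCentralCharge : ∃ ℓ : ℂ, M.HasCentralCharge ℓ := by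
  obtain ⟨v, hv⟩ := hM.1
  have : Nontrivial M.carrier := ⟨v, 0, hv⟩
  obtain ⟨ℓ, hℓ⟩ := spectrum_nonempty_of_rank_lt
    (hM.rank_le_aleph0.trans_lt (Cardinal.mk_complex ▸ Cardinal.aleph0_lt_continuum)) M.C
  refine ⟨ℓ, fun v ↦ by_contra fun hvℓ ↦ hℓ ?_⟩
  let g := algebraMap ℂ (Module.End ℂ M.carrier) ℓ - M.C
  have g_e (k w) : g (M.e k w) = M.e k (g w) := by simp [g, C_e]
  have g_C (w) : g (M.C w) = M.C (g w) := by simp [g]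
  have hgv : g v ≠ 0 := fun h ↦ hvℓ (sub_eq_zero.1 h).symm
  refine (Module.End.isUnit_iff g).2 ⟨?_, ?_⟩
  · rw [← LinearMap.ker_eq_bot]
    refine (hM.2 (LinearMap.ker g) (invariant_of_e (fun k w hw ↦ ?_) fun w hw ↦ ?_)).resolve_right
      fun h ↦ hgv (h.ge trivial)
    · rw [LinearMap.mem_ker, g_e, LinearMap.mem_ker.1 hw, map_zero]
    · rw [LinearMap.mem_ker, g_C, LinearMap.mem_ker.1 hw, map_zero]
  · rw [← LinearMap.range_eq_top]
    refine hM.eq_top (invariant_of_e ?_ ?_) (LinearMap.mem_range_self g v) hgv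
    · rintro k _ ⟨w, rfl⟩
      exact ⟨M.e k w, g_e k w⟩
    · rintro _ ⟨w, rfl⟩
      exact ⟨M.C w, g_C w⟩

end IsSimple

end NSRep

/-! ### Restricted simple modules -/

lemma BRep.G_eq_zero {V : BRep} {t : ℕ} (ht : 0 < t)
    (hL : ∀ i, t < i → ∀ w : V.carrier, V.L i w = 0) {m : ℕ} (hm : t < m)
    (v : V.carrier) : V.G m v = 0 := by
  have h := V.rel_LG m 0 v
  rw [hL m hm, hL m hm, map_zero, sub_zero, add_zero] at h
  refine (smul_eq_zero.1 h.symm).resolve_left (div_ne_zero ?_ two_ne_zero)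
  rw [Nat.cast_zero, mul_zero, sub_zero, sub_ne_zero, Nat.cast_ne_one]
  lia

namespace NSRep

variable {S : NSRep}

/-- The second alternative in condition (5): for some `t > 0`, `S` is induced from a simple
`b`-module on which `L t` is injective and `L i` vanishes for all `i > t`. -/
def IsWhittakerType (S : NSRep) : Prop :=
  ∃ (ℓ : ℂ) (t : ℕ) (V : BRep) (ι : V.carrier →ₗ[ℂ] S.carrier), 0 < t ∧
    V.IsSimple ∧ Function.Injective (V.L t) ∧
    (∀ i : ℕ, t < i → ∀ v : V.carrier, V.L i v = 0) ∧
    IsInduced ℓ V S ι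

lemma eq_zero_of_e_eq_zero {n : ℤ} (h : S.annihilated (n - 1) = ⊥) {v : S.carrier}
    (hv : v ∈ S.annihilated n) (hnv : S.e n v = 0) : v = 0 := by
  refine (Submodule.eq_bot_iff _).1 h v (mem_annihilated.2 fun m hm ↦ ?_)
  rcases (Int.sub_one_lt_iff.1 hm).eq_or_lt with rfl | hm
  · exact hnv
  · exact mem_annihilated.1 hv m hm

lemma even_of_e_injective {n : ℤ} (hn : 0 < n) (hne : S.annihilated n ≠ ⊥)
    (hinj : ∀ v ∈ S.annihilated n, S.e n v = 0 → v = 0) : Even n := by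
  obtain ⟨v, hv, h0⟩ := Submodule.exists_mem_ne_zero_of_ne_bot hne
  by_contra hodd
  exact h0 (hinj v hv (hinj _ (e_mem_annihilated hn.le hn.le hv) (sq_e_eq_zero_of_odd hn hodd hv)))

lemma annihilatedRep_L_eq_zero {t i : ℕ} (hi : t < i) (v : (S.annihilatedRep (2 * t)).carrier) :
    (S.annihilatedRep (2 * t)).L i v = 0 := by
  apply annihilatedVal_injective
  rw [(isBLinear_annihilatedVal S _).1, map_zero, ← e_two_mul]
  exact mem_annihilated.1 (annihilatedVal_mem v) _ (by push_cast; lia)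

lemma annihilatedRep_L_injective {t : ℕ}
    (hinj : ∀ v ∈ S.annihilated (2 * t : ℕ), S.e (2 * t : ℕ) v = 0 → v = 0) :
    Function.Injective ((S.annihilatedRep (2 * t)).L t) := by
  refine (injective_iff_map_eq_zero _).2 fun v hv ↦ annihilatedVal_injective ?_
  rw [map_zero]
  refine hinj _ (annihilatedVal_mem v) ?_
  rw [Nat.cast_mul, Nat.cast_two, e_two_mul, ← (isBLinear_annihilatedVal S _).1, hv, map_zero]

theorem IsSimple.isHighestWeight_or_isWhittakerType (hS : S.IsSimple) (hR : S.IsRestricted) :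
    S.IsHighestWeight ∨ S.IsWhittakerType := by
  classical
  obtain ⟨ℓ, hC⟩ := hS.exists_hasCentralCharge
  have hex : ∃ n : ℕ, S.annihilated n ≠ ⊥ := by
    obtain ⟨v, h0⟩ := hS.1
    obtain ⟨n, hn⟩ := isRestricted_iff_exists_mem_annihilated.1 hR v
    exact ⟨n.toNat, (Submodule.ne_bot_iff _).2 ⟨v, S.annihilated_mono n.self_le_toNat hn, h0⟩⟩
  obtain ⟨n, hne, hmin⟩ : ∃ n : ℕ, S.annihilated n ≠ ⊥ ∧ ∀ m < n, S.annihilated m = ⊥ :=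
    ⟨Nat.find hex, Nat.find_spec hex, fun m hm ↦ not_not.1 (Nat.find_min hex hm)⟩
  rcases n.eq_zero_or_pos with rfl | hn
  · obtain ⟨v, hv, h0⟩ := Submodule.exists_mem_ne_zero_of_ne_bot hne
    exact .inl (hS.isHighestWeight hC hv h0)
  have hinj : ∀ v ∈ S.annihilated n, S.e n v = 0 → v = 0 := fun v ↦
    eq_zero_of_e_eq_zero (by simpa [Nat.cast_pred hn] using hmin (n - 1) (by lia))
  obtain ⟨t, rfl⟩ := even_iff_two_dvd.1
    ((Int.even_coe_nat n).1 (even_of_e_injective (by exact_mod_cast hn) hne hinj))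
  exact .inr ⟨ℓ, t, S.annihilatedRep (2 * t), S.annihilatedVal (2 * t), by lia,
    hS.annihilatedRep_isSimple (by lia) (even_two_mul t) hC hne hinj,
    annihilatedRep_L_injective hinj, fun _ hi ↦ annihilatedRep_L_eq_zero hi,
    hS.isInduced_annihilatedRep (by lia) (even_two_mul t) hC hne hinj⟩

lemma IsHighestWeight.exists_mem_annihilated (h : S.IsHighestWeight) :
    ∃ v ∈ S.annihilated 0, v ≠ 0 := by
  obtain ⟨v, -, -, h0, -, -, hL, hG, -⟩ := h
  refine ⟨v, mem_annihilated.2 fun m hm ↦ ?_, h0⟩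
  rw [e]
  split_ifs
  · exact hL _ (by grind)
  · exact hG _ (by lia)

lemma exists_ne_zero_of_isInduced {ℓ : ℂ} {V : BRep} {ι : V.carrier →ₗ[ℂ] S.carrier}
    (hι : IsInduced ℓ V S ι) (hS : ∃ v : S.carrier, v ≠ 0) : ∃ v, ι v ≠ 0 := by
  by_contra! h
  obtain rfl : ι = 0 := LinearMap.ext h
  obtain ⟨w, hw⟩ := hS
  refine hw (LinearMap.congr_fun ((hι.2.2 S hι.2.1 0 hι.1).unique (y₁ := LinearMap.id) (y₂ := 0)
    ⟨⟨fun _ _ ↦ rfl, fun _ _ ↦ rfl, fun _ ↦ rfl⟩, rfl⟩ ⟨⟨?_, ?_, ?_⟩, rfl⟩) w) <;>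
  simp

lemma IsWhittakerType.exists_mem_annihilated (h : S.IsWhittakerType)
    (hS : ∃ v : S.carrier, v ≠ 0) : ∃ n, ∃ v ∈ S.annihilated n, v ≠ 0 := by
  obtain ⟨ℓ, t, V, ι, ht, -, -, hL, hι⟩ := h
  obtain ⟨v, hv⟩ := exists_ne_zero_of_isInduced hι hS
  refine ⟨2 * t + 1, ι v, mem_annihilated.2 fun m hm ↦ ?_, hv⟩
  lift m to ℕ using by lia
  have hVm : V.e m v = 0 := by
    rw [BRep.e]
    split_ifs
    · exact hL _ (by lia) v
    · exact BRep.G_eq_zero ht hL (by lia) v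
  rw [← hι.1.map_e, hVm, map_zero]

theorem IsSimple.isRestricted_of_isHighestWeight_or_isWhittakerType (hS : S.IsSimple)
    (h : S.IsHighestWeight ∨ S.IsWhittakerType) : S.IsRestricted := by
  rcases h with h | h
  · obtain ⟨v, hv, h0⟩ := h.exists_mem_annihilated
    exact hS.isRestricted hv h0
  · obtain ⟨n, v, hv, h0⟩ := h.exists_mem_annihilated hS.1
    exact hS.isRestricted hv h0

end NSRep

lemma foldr_replicate_eq_pow_apply {V : Type} [AddCommGroup V] [Module ℂ V] (f : Module.End ℂ V)
    (n : ℕ) (v : V) : (List.replicate n f).foldr (fun g w ↦ g w) v = (f ^ n) v := by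
  induction n with
  | zero => rfl
  | succ n ih => rw [List.replicate_succ, List.foldr_cons, ih, pow_succ', Module.End.mul_apply]

lemma LocallyNilpotentEnd.locallyFiniteEnd {V : Type} [AddCommGroup V] [Module ℂ V]
    {f : V →ₗ[ℂ] V} (h : LocallyNilpotentEnd f) : LocallyFiniteEnd f := by
  intro v
  obtain ⟨n, -, hn⟩ := h v
  refine FiniteDimensional.span_of_finite ℂ (((Set.finite_lt_nat n).image
    fun k ↦ ((f : Module.End ℂ V) ^ k) v).insert 0 |>.subset ?_)
  rintro _ ⟨k, -, rfl⟩
  rcases lt_or_ge k n with hk | hk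
  · exact .inr ⟨k, hk, rfl⟩
  · exact .inl (Module.End.pow_map_zero_of_le hk hn)

namespace NSRep

variable {M : NSRep} {t : ℕ} {f : M.carrier →ₗ[ℂ] M.carrier}

lemma MLocallyNilpotent.locallyNilpotentEnd (h : M.MLocallyNilpotent t) (hf : f ∈ M.mOps t) :
    LocallyNilpotentEnd f := by
  intro v
  obtain ⟨n, hn, hv⟩ := h v
  refine ⟨n, hn, foldr_replicate_eq_pow_apply f n v ▸ hv _ List.length_replicate fun g hg ↦ ?_⟩
  rwa [List.eq_of_mem_replicate hg]

lemma MLocallyFinite.locallyFiniteEnd (h : M.MLocallyFinite t) (hf : f ∈ M.mOps t) :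
    LocallyFiniteEnd f := by
  intro v
  have := h v
  refine Submodule.finiteDimensional_of_le (Submodule.span_mono ?_) (S₂ := Submodule.span ℂ
    {w | ∃ ops : List (M.carrier →ₗ[ℂ] M.carrier), ops ≠ [] ∧ (∀ f ∈ ops, f ∈ M.mOps t) ∧
      w = ops.foldr (fun f x => f x) v})
  rintro _ ⟨n, hn, rfl⟩
  refine ⟨List.replicate n f, ?_, fun g hg ↦ ?_, (foldr_replicate_eq_pow_apply f n v).symm⟩
  · exact mt (List.replicate_eq_nil_iff f).1 hn.ne'
  · rwa [List.eq_of_mem_replicate hg]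

lemma L_mem_mOps {i : ℤ} (hi : t < i) : M.L i ∈ M.mOps t := ⟨i, hi, .inl rfl⟩

lemma G_mem_mOps {i : ℤ} (hi : t < i) : M.G i ∈ M.mOps t := ⟨i, hi, .inr rfl⟩

end NSRep

/-! ### Locally finite actions -/

section LocallyFinite

variable {V : Type} [AddCommGroup V] [Module ℂ V] {f : Module.End ℂ V}

lemma LocallyFiniteEnd.exists_fg_map_le (hf : LocallyFiniteEnd f) {E : Submodule ℂ V}
    (hE : E.FG) : ∃ F : Submodule ℂ V, F.FG ∧ E ≤ F ∧ F.map f ≤ F := by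
  induction E, hE using Submodule.fg_induction with
  | singleton v =>
    let X := Submodule.span ℂ {w | ∃ n : ℕ, 0 < n ∧ w = (f ^ n) v}
    refine ⟨Submodule.span ℂ {v} ⊔ X, (Submodule.fg_span_singleton v).sup
      (Submodule.fg_iff_finiteDimensional X |>.2 (hf v)), le_sup_left,
      Submodule.map_le_iff_le_comap.2 (sup_le ?_ (Submodule.span_le.2 ?_))⟩
    · rw [Submodule.span_singleton_le_iff_mem]
      exact Submodule.mem_sup_right (Submodule.subset_span ⟨1, one_pos, by rw [pow_one]⟩)
    · rintro _ ⟨n, -, rfl⟩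
      refine Submodule.mem_sup_right (Submodule.subset_span ⟨n + 1, n.succ_pos, ?_⟩)
      rw [pow_succ', Module.End.mul_apply]
  | sup E₁ E₂ _ _ ih₁ ih₂ =>
    obtain ⟨F₁, hF₁, h₁, hf₁⟩ := ih₁
    obtain ⟨F₂, hF₂, h₂, hf₂⟩ := ih₂
    exact ⟨F₁ ⊔ F₂, hF₁.sup hF₂, sup_le_sup h₁ h₂, Submodule.map_sup F₁ F₂ f ▸ sup_le_sup hf₁ hf₂⟩

lemma LocallyFiniteEnd.exists_fg_forall_map_le (hf : LocallyFiniteEnd f) {E : Submodule ℂ V}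
    (hE : E.FG) (hfE : E.map f ≤ E) {A : ℕ → Module.End ℂ V} {d : ℕ} (hd : 0 < d)
    (hA : ∀ j, ∃ c : ℂ, c ≠ 0 ∧ ∀ v, f (A j v) - A j (f v) = c • A (j + d) v) :
    ∃ F : Submodule ℂ V, F.FG ∧ ∀ j, E.map (A j) ≤ F := by
  obtain ⟨F, hF, hbase, hfF⟩ := hf.exists_fg_map_le (E := (Finset.range d).sup fun j ↦ E.map (A j))
    (Submodule.fg_finset_sup _ _ fun j _ ↦ hE.map (A j))
  refine ⟨F, hF, fun j ↦ ?_⟩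
  induction j using Nat.strong_induction_on with | _ j ih
  rcases lt_or_ge j d with hj | hj
  · exact (Finset.le_sup (f := fun j ↦ E.map (A j)) (Finset.mem_range.2 hj)).trans hbase
  · obtain ⟨k, rfl⟩ := Nat.exists_eq_add_of_le' hj
    obtain ⟨c, hc, hk⟩ := hA k
    have hEk := ih k (by lia)
    rintro _ ⟨v, hv, rfl⟩
    rw [← F.smul_mem_iff hc, ← hk]
    exact F.sub_mem (hfF ⟨_, hEk ⟨v, hv, rfl⟩, rfl⟩) (hEk ⟨f v, hfE ⟨v, hv, rfl⟩, rfl⟩)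

end LocallyFinite

/-- The operators `T i` with `i > 0` represent the positive part of the Witt algebra. -/
def IsPositiveWittAction {V : Type} [AddCommGroup V] [Module ℂ V] (T : ℕ → Module.End ℂ V) : Prop :=
  ∀ i j, 0 < i → 0 < j → ∀ v, T i (T j v) - T j (T i v) = ((i : ℂ) - j) • T (i + j) v

namespace IsPositiveWittAction

variable {V : Type} [AddCommGroup V] [Module ℂ V] {T : ℕ → Module.End ℂ V}
  (hT : IsPositiveWittAction T)
include hT

lemma exists_fg_forall_map_le {t : ℕ} (ht : 0 < t) (hf : LocallyFiniteEnd (T t))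
    {E : Submodule ℂ V} (hE : E.FG) :
    ∃ F : Submodule ℂ V, F.FG ∧ E ≤ F ∧ ∀ i, t ≤ i → E.map (T i) ≤ F := by
  obtain ⟨E', hE', hEE', hTE'⟩ := hf.exists_fg_map_le hE
  obtain ⟨F, hF, hTF⟩ := hf.exists_fg_forall_map_le hE' hTE' (A := fun j ↦ T (j + t + 1)) ht
    fun j ↦ ⟨t - (j + t + 1 : ℕ), sub_ne_zero.2 (Nat.cast_injective.ne (by lia)), fun v ↦ by
      rw [hT t (j + t + 1) ht (by lia), show t + (j + t + 1) = j + t + t + 1 by ring]⟩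
  refine ⟨E' ⊔ F, hE'.sup hF, hEE'.trans le_sup_left, fun i hi ↦ (Submodule.map_mono hEE').trans ?_⟩
  rcases hi.eq_or_lt with rfl | hi
  · exact hTE'.trans le_sup_left
  · obtain ⟨j, rfl⟩ := Nat.exists_eq_add_of_lt hi
    rw [add_comm t j]
    exact (hTF j).trans le_sup_right

lemma sum_bracket_eq_zero {E F : Submodule ℂ V} (hEF : E ≤ F) {n j : ℕ} (hn : 0 < n) (hj : 0 < j)
    (hjE : E.map (T j) ≤ F) {s : Finset ℕ} {a : ℕ → ℂ}
    (h : ∀ v ∈ F, ∑ i ∈ s, a i • T (i + n) v = 0) {v : V} (hv : v ∈ E) :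
    ∑ i ∈ s, (a i * (j - (i + n))) • T (i + (n + j)) v = 0 :=
  calc
    _ = ∑ i ∈ s, a i • (T j (T (i + n) v) - T (i + n) (T j v)) := by
      refine Finset.sum_congr rfl fun i _ ↦ ?_
      rw [hT j (i + n) hj (by lia), smul_smul, Nat.cast_add, show j + (i + n) = i + (n + j) by ring]
    _ = T j (∑ i ∈ s, a i • T (i + n) v) - ∑ i ∈ s, a i • T (i + n) (T j v) := by
      simp only [smul_sub, Finset.sum_sub_distrib, map_sum, map_smul]
    _ = 0 := by rw [h v (hEF hv), h _ (hjE ⟨v, hv, rfl⟩), map_zero, sub_zero]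

/- Bracketing the relation with `T j` and `T (n - j)` produces coefficients quadratic in `j` whose
second difference is the constant `-4`. -/
lemma sum_shift_eq_zero {E E₁ E₂ : Submodule ℂ V} {t : ℕ} (ht : 0 < t) (h₁ : E ≤ E₁)
    (hT₁ : ∀ i, t ≤ i → E.map (T i) ≤ E₁) (h₂ : E₁ ≤ E₂) (hT₂ : ∀ i, t ≤ i → E₁.map (T i) ≤ E₂)
    {s : Finset ℕ} {a : ℕ → ℂ} (h : ∀ v ∈ E₂, ∑ i ∈ s, a i • T (i + t) v = 0)
    {n : ℕ} (hn : 3 * t + 2 ≤ n) {v : V} (hv : v ∈ E) : ∑ i ∈ s, a i • T (i + n) v = 0 := by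
  have hsum (j l : ℕ) (hj : t ≤ j) (hl : t ≤ l) (hjl : t + j + l = n) :
      ∑ i ∈ s, (a i * (j - (i + t)) * (l - (i + (t + j)))) • T (i + n) v = 0 := by
    have h' := hT.sum_bracket_eq_zero h₁ (n := t + j) (by lia) (ht.trans_le hl) (hT₁ l hl)
      (fun w hw ↦ hT.sum_bracket_eq_zero h₂ ht (ht.trans_le hj) (hT₂ j hj) h hw) hv
    rw [← hjl]
    exact_mod_cast h'
  obtain ⟨k, rfl⟩ := Nat.exists_eq_add_of_le' hn
  have h0 := hsum t (t + 2 + k) le_rfl (by lia) (by ring)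
  have h1 := hsum (t + 1) (t + 1 + k) (by lia) (by lia) (by ring)
  have h2 := hsum (t + 2) (t + k) (by lia) (by lia) (by ring)
  have hdiff : (-4 : ℂ) • ∑ i ∈ s, a i • T (i + (k + (3 * t + 2))) v = 0 := by
    have h := congrArg₂ (· + ·) (congrArg₂ (· - ·) h0 (congrArg ((2 : ℂ) • ·) h1)) h2
    simp only [Finset.smul_sum, ← Finset.sum_sub_distrib, ← Finset.sum_add_distrib, smul_zero,
      sub_zero, add_zero] at h
    rw [Finset.smul_sum, ← h]
    refine Finset.sum_congr rfl fun i _ ↦ ?_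
    push_cast
    module
  exact (smul_eq_zero.1 hdiff).resolve_left (by norm_num)

lemma eventually_eq_zero_of_sum_eq_zero {E : Submodule ℂ V} {t : ℕ} (ht : 0 < t)
    (htE : E.map (T t) ≤ E) {s : Finset ℕ} (hs : s.Nonempty) {a : ℕ → ℂ} (ha : ∀ i ∈ s, a i ≠ 0)
    {b : ℕ} (h : ∀ n, b ≤ n → ∀ v ∈ E, ∑ i ∈ s, a i • T (i + n) v = 0) :
    ∃ q, ∀ i, q ≤ i → ∀ v ∈ E, T i v = 0 := by
  induction hs using Finset.Nonempty.cons_induction generalizing a b with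
  | singleton p =>
    refine ⟨p + b, fun i hi v hv ↦ ?_⟩
    obtain ⟨n, rfl⟩ := Nat.exists_eq_add_of_le hi
    have hp := h (b + n) (by lia) v hv
    rw [Finset.sum_singleton, ← add_assoc] at hp
    exact (smul_eq_zero.1 hp).resolve_left (ha p (Finset.mem_singleton_self p))
  | cons p s hp _ ih =>
    refine ih (a := fun i ↦ a i * (p - i)) (b := b + t + 1) (fun i hi ↦ ?_) fun n hn v hv ↦ ?_
    · refine mul_ne_zero (ha i (Finset.mem_cons_of_mem hi)) (sub_ne_zero.2 ?_)
      exact Nat.cast_injective.ne fun hpi ↦ hp (hpi ▸ hi)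
    · obtain ⟨k, rfl⟩ := Nat.exists_eq_add_of_le' (show t ≤ n by lia)
      have hbr := hT.sum_bracket_eq_zero le_rfl (by lia) ht htE (h k (by lia)) hv
      have hk := h (k + t) (by lia) v hv
      rw [Finset.sum_cons] at hbr hk
      calc
        _ = ∑ i ∈ s, (a i * (t - (i + k))) • T (i + (k + t)) v -
            ((t : ℂ) - (p + k)) • ∑ i ∈ s, a i • T (i + (k + t)) v := by
          rw [Finset.smul_sum, ← Finset.sum_sub_distrib]
          exact Finset.sum_congr rfl fun i _ ↦ by module
        _ = 0 := by linear_combination (norm := module) hbr - ((t : ℂ) - (p + k)) • hk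

theorem eventually_eq_zero {t : ℕ} (ht : 0 < t) (hf : LocallyFiniteEnd (T t))
    {E : Submodule ℂ V} (hE : E.FG) : ∃ q, ∀ i, q ≤ i → ∀ v ∈ E, T i v = 0 := by
  obtain ⟨E₀, hE₀, hEE₀, htE₀⟩ := hf.exists_fg_map_le hE
  obtain ⟨E₁, hE₁, h₁, hT₁⟩ := hT.exists_fg_forall_map_le ht hf hE₀
  obtain ⟨E₂, hE₂, h₂, hT₂⟩ := hT.exists_fg_forall_map_le ht hf hE₁
  obtain ⟨E₃, hE₃, -, hT₃⟩ := hT.exists_fg_forall_map_le ht hf hE₂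
  have := Module.Finite.of_fg hE₂
  have := Module.Finite.of_fg hE₃
  let φ (i : ℕ) : E₂ →ₗ[ℂ] E₃ :=
    (T (i + t)).restrict fun v hv ↦ hT₃ (i + t) (by lia) ⟨v, hv, rfl⟩
  have hφ : ¬ LinearIndependent ℂ φ := fun h ↦ not_finite_iff_infinite.2 inferInstance h.finite
  obtain ⟨s, a, hsum, hne⟩ := not_linearIndependent_iff.1 hφ
  have hrel (v) (hv : v ∈ E₂) : ∑ i ∈ s with a i ≠ 0, a i • T (i + t) v = 0 := by
    have hv' := congrArg Subtype.val (LinearMap.congr_fun hsum ⟨v, hv⟩)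
    rw [LinearMap.sum_apply, AddSubmonoidClass.coe_finsetSum] at hv'
    refine (Finset.sum_filter_of_ne fun i _ ↦ mt ?_).trans hv'
    rintro h
    rw [h, zero_smul]
  obtain ⟨q, hq⟩ := hT.eventually_eq_zero_of_sum_eq_zero ht htE₀
    (s := s.filter (a · ≠ 0)) (a := a) (b := 3 * t + 2) (by simpa [Finset.Nonempty] using hne)
    (by simp) fun n hn v hv ↦ hT.sum_shift_eq_zero ht h₁ hT₁ h₂ hT₂ hrel hn hv
  exact ⟨q, fun i hi v hv ↦ hq i hi v (hEE₀ hv)⟩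

end IsPositiveWittAction

namespace NSRep

variable {M : NSRep}

lemma isPositiveWittAction_L (M : NSRep) : IsPositiveWittAction fun i : ℕ ↦ M.L i := by
  intro i j hi _ v
  have h := M.rel_LL i j v
  rw [if_neg (by lia), zero_smul, add_zero] at h
  exact_mod_cast h

lemma exists_ne_zero_L_bracket_G (M : NSRep) {i j : ℤ} (h : i - 2 * j + 1 ≠ 0) :
    ∃ c : ℂ, c ≠ 0 ∧ ∀ v, M.L i (M.G j v) - M.G j (M.L i v) = c • M.G (i + j) v :=
  ⟨(i - 2 * j + 1) / 2, div_ne_zero (by exact_mod_cast h) two_ne_zero, M.rel_LG i j⟩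

theorem isRestricted_of_locallyFiniteEnd_L {t : ℕ} (ht : 0 < t)
    (hf : LocallyFiniteEnd (M.L t)) : M.IsRestricted := by
  intro v
  obtain ⟨E, hE, hvE, hLE⟩ := hf.exists_fg_map_le (Submodule.fg_span_singleton v)
  obtain ⟨F, hF, hGF⟩ := hf.exists_fg_forall_map_le hE hLE (A := fun j ↦ M.G (t + 1 + j)) ht
    fun j ↦ by
      have h := M.exists_ne_zero_L_bracket_G (i := t) (j := t + 1 + j) (by lia)
      rwa [show (t : ℤ) + (t + 1 + j) = t + 1 + (j + t : ℕ) by lia] at h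
  obtain ⟨q, hq⟩ := M.isPositiveWittAction_L.eventually_eq_zero ht hf (hE.sup hF)
  have hv : v ∈ E := hvE (Submodule.mem_span_singleton_self v)
  have hL (i : ℤ) (hi : q ≤ i) : ∀ w ∈ E ⊔ F, M.L i w = 0 := by
    lift i to ℕ using by lia
    exact hq i (by exact_mod_cast hi)
  refine ⟨q + 3 * t + 3, fun i hi ↦ ⟨hL i (by lia) v (Submodule.mem_sup_left hv), ?_⟩⟩
  obtain ⟨c, hc, h⟩ := M.exists_ne_zero_L_bracket_G (i := i - (t + 1)) (j := t + 1) (by lia)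
  have hGv := hGF 0 ⟨v, hv, rfl⟩
  rw [Nat.cast_zero, add_zero] at hGv
  specialize h v
  rw [hL _ (by lia) v (Submodule.mem_sup_left hv), hL _ (by lia) _ (Submodule.mem_sup_right hGv),
    map_zero, sub_zero, sub_add_cancel] at h
  exact (smul_eq_zero.1 h.symm).resolve_left hc

end NSRep

/-- For a simple Neveu–Schwarz module `S` the following are equivalent:
(1) for some `t ∈ ℤ_+` the actions of `L_i` and `G_{i-1/2}`, `i ≥ t`, are locally finite;
(2) for some `t ∈ ℤ_+` these actions are locally nilpotent;
(3) for some `t ∈ ℤ_+`, `S` is a locally finite `m^{(t)}`-module;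
(4) for some `t ∈ ℤ_+`, `S` is a locally nilpotent `m^{(t)}`-module;
(5) `S` is a highest weight module, or `S ≅ Ind_ℓ(V)` for some `ℓ ∈ ℂ`, `t ∈ ℤ_+` and some
simple `b`-module `V` with `L_t` acting injectively and `L_i V = 0` for `i > t`. -/
theorem simple_module_locally_finite_tfae (S : NSRep) (hS : S.IsSimple) :
    List.TFAE
      [ ∃ t : ℕ, 0 < t ∧ ∀ i : ℤ, (t : ℤ) ≤ i →
          LocallyFiniteEnd (S.L i) ∧ LocallyFiniteEnd (S.G i),
        ∃ t : ℕ, 0 < t ∧ ∀ i : ℤ, (t : ℤ) ≤ i →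
          LocallyNilpotentEnd (S.L i) ∧ LocallyNilpotentEnd (S.G i),
        ∃ t : ℕ, 0 < t ∧ S.MLocallyFinite t,
        ∃ t : ℕ, 0 < t ∧ S.MLocallyNilpotent t,
        S.IsHighestWeight ∨
          ∃ (ℓ : ℂ) (t : ℕ) (V : BRep) (ι : V.carrier →ₗ[ℂ] S.carrier), 0 < t ∧
            V.IsSimple ∧ Function.Injective (V.L t) ∧
            (∀ i : ℕ, t < i → ∀ v : V.carrier, V.L i v = 0) ∧
            IsInduced ℓ V S ι ] := by
  tfae_have 1 → 5 := fun ⟨_, ht, h⟩ ↦ hS.isHighestWeight_or_isWhittakerType <|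
    NSRep.isRestricted_of_locallyFiniteEnd_L ht (h _ le_rfl).1
  tfae_have 5 → 4 := fun h ↦
    hS.exists_mLocallyNilpotent (hS.isRestricted_of_isHighestWeight_or_isWhittakerType h)
  tfae_have 5 → 3 := fun h ↦ by
    have hR := hS.isRestricted_of_isHighestWeight_or_isWhittakerType h
    obtain ⟨t, ht, hnil⟩ := hS.exists_mLocallyNilpotent hR
    exact ⟨t, ht, hnil.mLocallyFinite hR⟩
  tfae_have 4 → 2 := fun ⟨t, _, h⟩ ↦ ⟨t + 1, t.succ_pos, fun _ hi ↦
    ⟨h.locallyNilpotentEnd (NSRep.L_mem_mOps (by lia)),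
      h.locallyNilpotentEnd (NSRep.G_mem_mOps (by lia))⟩⟩
  tfae_have 3 → 1 := fun ⟨t, _, h⟩ ↦ ⟨t + 1, t.succ_pos, fun _ hi ↦
    ⟨h.locallyFiniteEnd (NSRep.L_mem_mOps (by lia)),
      h.locallyFiniteEnd (NSRep.G_mem_mOps (by lia))⟩⟩
  tfae_have 2 → 1 := fun ⟨t, ht, h⟩ ↦ ⟨t, ht, fun i hi ↦
    ⟨(h i hi).1.locallyFiniteEnd, (h i hi).2.locallyFiniteEnd⟩⟩
  tfae_finish
end

section
/- Let ℓ ∈ ℂ. Every simple restricted N-module of central charge ℓ is isomorphic either to a simple highest weight module, or to a module of the form Ind_ℓ(V), where, for some t ∈ ℤ_+, V is a simple b-module annihilated by m^(t) (equivalently, a simple module over the quotient Lie superalgebra b^(t) = b/m^(t)) on which the action of L_t is injective. -/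
/-!
Let `S` be simple and restricted and let `t` be least such that the space `V` of vectors killed by
`m^(t)` is non-zero. If `t > 0`, minimality forces `L_t` to be injective on `V`: when `L_t v = 0`,
first `G_{t-1/2} v` and then `v` itself is killed by `m^(t-1)`. Injectivity of `L_t` implies that
the Poincaré–Birkhoff–Witt monomials in the lowering operators, applied to `V`, satisfy no relation
in `S`: raising operators strip letters off the monomials and turn a relation into one of lower
degree. Hence `S` is induced from `V`, and `V` is simple since a non-zero `b`-submodule of `V` also
generates `S`. If `t = 0` and no non-zero vector of `V` is an eigenvector of `L_0`, then for
`v ≠ 0` in `V` the same argument embeds the module induced from `ℂ[L_0] v ≅ ℂ[X]` in `S`, but that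
module is not simple; so `V` contains an eigenvector of `L_0`, which is a highest weight vector.
-/

namespace NeveuSchwarz

open Submodule

section ModeFamily

variable {K A B V : Type*} [Field K] [AddCommGroup A] [Module K A] [AddCommGroup B] [Module K B]
  [AddCommGroup V] [Module K V]

/-- Operators `e k`, `k ∈ ℤ`, representing the homogeneous basis of a centrally extended
`ℤ`-graded Lie superalgebra whose graded pieces are lines: the parity of `e k` is that of `k`,
`c` gives the structure constants, and the central term of `[e j, e (-j)]` acts as the
scalar `z j`. -/
def IsModeFamily (c : ℤ → ℤ → K) (z : ℤ → K) (e : ℤ → Module.End K A) : Prop :=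
  ∀ j k, e j * e k = (-1 : K) ^ (j * k) • (e k * e j) + c j k • e (j + k)
    + (if j + k = 0 then z j else 0) • 1

/-- The lowering monomial `e (-a₁) ⋯ e (-aₙ)` of the word `[a₁, …, aₙ]`. -/
def lowering (e : ℤ → Module.End K A) (w : List ℕ+) : Module.End K A :=
  (w.map fun a : ℕ+ => e (-(a : ℤ))).prod

/-- The degree `a₁ + ⋯ + aₙ` of the word `[a₁, …, aₙ]`. -/
def degree (w : List ℕ+) : ℕ := (w.map PNat.val).sum

/-- The relation between consecutive letters of a Poincaré–Birkhoff–Witt monomial: letters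
increase, and only even ones (those of commuting type) may be repeated. -/
def PBWOrder (a b : ℕ+) : Prop := a < b ∨ a = b ∧ Even (a : ℕ)

/-- The words indexing the Poincaré–Birkhoff–Witt basis of the enveloping algebra of the
negative part. -/
abbrev PBWWord : Type := {w : List ℕ+ // w.Pairwise PBWOrder}

/-- The map `U(N_-) ⊗ V → A` determined by `f : V → A`, with `U(N_-)` written in its
Poincaré–Birkhoff–Witt basis. -/
noncomputable def pbw (e : ℤ → Module.End K A) (f : V →ₗ[K] A) : (PBWWord →₀ V) →ₗ[K] A :=
  Finsupp.lsum K fun w => lowering e w ∘ₗ f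

/-- The vectors killed by all modes of degree greater than `T`. -/
def killedAbove (e : ℤ → Module.End K A) (T : ℤ) : Submodule K A :=
  ⨅ k ∈ Set.Ioi T, LinearMap.ker (e k)

/-- The submodule `U` is stable under the modes of non-negative degree. -/
def IsNonnegStable (e : ℤ → Module.End K A) (U : Submodule K A) : Prop :=
  ∀ k, 0 ≤ k → U ≤ U.comap (e k)

/-- The piece of the lexicographic filtration of `U(N_-) V` spanned by the monomials of degree
less than `d` applied to `V` and those of degree `d` applied to `X`. -/
def lexSpan (e : ℤ → Module.End K A) (V X : Submodule K A) (d : ℤ) : Submodule K A :=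
  span K {x | ∃ w, ∃ v ∈ V, (degree w < d ∨ degree w = d ∧ v ∈ X) ∧ lowering e w v = x}

variable {c : ℤ → ℤ → K} {z : ℤ → K} {e : ℤ → Module.End K A}

@[simp]
lemma lowering_nil : lowering e [] = 1 := rfl

@[simp]
lemma lowering_cons (a : ℕ+) (w : List ℕ+) :
    lowering e (a :: w) = e (-(a : ℤ)) * lowering e w := rfl

@[simp]
lemma degree_nil : degree [] = 0 := rfl

@[simp]
lemma degree_cons (a : ℕ+) (w : List ℕ+) : degree (a :: w) = a + degree w := by
  simp [degree]

lemma pbw_apply (f : V →ₗ[K] A) (x : PBWWord →₀ V) :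
    pbw e f x = x.sum fun w v => lowering e w (f v) := rfl

lemma degree_eq_zero {w : List ℕ+} : degree w = 0 ↔ w = [] := by
  cases w <;> simp

lemma PBWOrder.le {a b : ℕ+} (h : PBWOrder a b) : a ≤ b :=
  h.elim le_of_lt fun h => h.1.le

lemma PBWOrder.trans {a b b' : ℕ+} (h : PBWOrder a b) (h' : PBWOrder b b') : PBWOrder a b' := by
  rcases h with h | ⟨rfl, -⟩
  · exact .inl (h.trans_le h'.le)
  · exact h'

lemma cons_erase_of_forall_le {p : ℕ+} {w : List ℕ+} (hw : w.Pairwise PBWOrder) (hp : p ∈ w)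
    (hmin : ∀ a ∈ w, p ≤ a) : p :: w.erase p = w := by
  cases w with
  | nil => simp at hp
  | cons a w =>
    obtain rfl : p = a := by
      rcases List.mem_cons.1 hp with h | h
      · exact h
      · exact (hmin a (by simp)).antisymm ((List.pairwise_cons.1 hw).1 p h).le
    rw [List.erase_cons_head]

lemma exists_eq_neg_pnat {k : ℤ} (hk : k < 0) : ∃ a : ℕ+, k = -(a : ℤ) :=
  ⟨⟨k.natAbs, by omega⟩, by simp [abs_of_neg hk]⟩

@[simp]
lemma mem_killedAbove {T : ℤ} {v : A} : v ∈ killedAbove e T ↔ ∀ k, T < k → e k v = 0 := by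
  simp [killedAbove]

namespace IsModeFamily

lemma apply (he : IsModeFamily c z e) (j k : ℤ) (v : A) :
    e j (e k v) = (-1 : K) ^ (j * k) • e k (e j v) + c j k • e (j + k) v
      + (if j + k = 0 then z j else 0) • v := by
  simpa [ite_smul, apply_ite (fun f : Module.End K A => f v)] using LinearMap.congr_fun (he j k) v

lemma apply_self_of_odd [NeZero (2 : K)] (he : IsModeFamily c z e) {j : ℤ} (hj : Odd j) :
    e j * e j = (c j j / 2) • e (j + j) := by
  have h := he j j
  rw [(hj.mul hj).neg_one_zpow, if_neg (by obtain ⟨r, rfl⟩ := hj; omega)] at h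
  have h2 : (2 : K) • (e j * e j) = c j j • e (j + j) := by
    rw [two_smul]
    nth_rewrite 1 [h]
    module
  rw [div_eq_inv_mul, mul_smul, ← h2, inv_smul_smul₀ two_ne_zero]

lemma prodMap {e' : ℤ → Module.End K B} (he : IsModeFamily c z e) (he' : IsModeFamily c z e') :
    IsModeFamily c z fun k => (e k).prodMap (e' k) := fun j k =>
  LinearMap.ext fun v => Prod.ext (he.apply j k v.1) (he'.apply j k v.2)

lemma isNonnegStable_killedAbove (he : IsModeFamily c z e) {T : ℤ} (hT : 0 ≤ T) :
    IsNonnegStable e (killedAbove e T) := by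
  intro j hj v hv
  rw [mem_killedAbove] at hv
  refine mem_killedAbove.2 fun k hk => ?_
  rw [he.apply, hv k hk, hv (k + j) (by omega), if_neg (by omega)]
  simp

end IsModeFamily

section Lex

variable {V X X' : Submodule K A} {v : A} {w : List ℕ+} {d T : ℤ}

lemma lowering_mem_lexSpan (hv : v ∈ V) (h : degree w < d ∨ degree w = d ∧ v ∈ X) :
    lowering e w v ∈ lexSpan e V X d :=
  subset_span ⟨w, v, hv, h, rfl⟩

lemma lexSpan_le {P : Submodule K A} :
    lexSpan e V X d ≤ P ↔
      ∀ w, ∀ v ∈ V, degree w < d ∨ degree w = d ∧ v ∈ X → lowering e w v ∈ P := by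
  simp only [lexSpan, span_le, Set.subset_def, Set.mem_ofPred_eq, SetLike.mem_coe]
  grind

lemma lexSpan_zero_le : lexSpan e V X 0 ≤ X := by
  refine lexSpan_le.2 fun w v _ h => ?_
  cases w with
  | nil => simpa using h
  | cons a w => have := a.pos; simp at h; omega

lemma neg_lowering_mem_lexSpan {k : ℤ} (hk : k < 0) (hv : v ∈ V)
    (h : degree w - k < d ∨ degree w - k = d ∧ v ∈ X) :
    e k (lowering e w v) ∈ lexSpan e V X d := by
  obtain ⟨a, rfl⟩ := exists_eq_neg_pnat hk
  refine lowering_mem_lexSpan (w := a :: w) hv ?_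
  rw [degree_cons]
  grind

lemma neg_mem_lexSpan {a : ℕ+} {x : A} (hx : x ∈ lexSpan e V X (d - a)) :
    e (-(a : ℤ)) x ∈ lexSpan e V X d := by
  have : lexSpan e V X (d - a) ≤ (lexSpan e V X d).comap (e (-(a : ℤ))) :=
    lexSpan_le.2 fun w v hv h =>
      neg_lowering_mem_lexSpan (by simp) hv (by grind)
  exact this hx

lemma nonneg_lowering_mem_lexSpan (he : IsModeFamily c z e) (hV : IsNonnegStable e V)
    (hv : v ∈ V) {k : ℤ} (hk : 0 ≤ k) (hd : degree w < d) :
    e k (lowering e w v) ∈ lexSpan e V X d := by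
  induction w generalizing k d with
  | nil => exact lowering_mem_lexSpan (w := []) (hV k hk hv) (.inl hd)
  | cons a w ih =>
    rw [degree_cons] at hd
    rw [lowering_cons, Module.End.mul_apply, he.apply]
    refine add_mem (add_mem (smul_mem _ _ ?_) (smul_mem _ _ ?_)) (smul_mem _ _ ?_)
    · exact neg_mem_lexSpan (ih hk (by omega))
    · rcases lt_or_ge (k + -(a : ℤ)) 0 with h | h
      · exact neg_lowering_mem_lexSpan h hv (.inl (by omega))
      · exact ih h (by omega)
    · exact lowering_mem_lexSpan hv (.inl (by omega))

/-- This and the next lemma bound the two error terms produced by commuting `e (s + T)` past the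
letter `a`. They have degree `T` less than the leading term, which is no gain if `T = 0`: then
the filtration step `X` has to absorb them. -/
lemma bracket_lowering_mem_lexSpan (he : IsModeFamily c z e) (hV : IsNonnegStable e V)
    (hT : 0 ≤ T) {s : ℤ} {a : ℕ+} (hsa : s < a) (hv : v ∈ V)
    (h : degree w + a - s < d ∨ degree w + a - s = d ∧ (T = 0 → v ∈ X)) :
    e (s + T + -(a : ℤ)) (lowering e w v) ∈ lexSpan e V X d := by
  rcases lt_or_ge (s + T + -(a : ℤ)) 0 with hk | hk
  · exact neg_lowering_mem_lexSpan hk hv (by grind)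
  · exact nonneg_lowering_mem_lexSpan he hV hv hk (by omega)

lemma central_lowering_mem_lexSpan (hT : 0 ≤ T) {s : ℤ} {a : ℕ+} (hv : v ∈ V)
    (h : degree w + a - s < d ∨ degree w + a - s = d ∧ (T = 0 → v ∈ X)) (y : K) :
    (if s + T + -(a : ℤ) = 0 then y else 0) • lowering e w v ∈ lexSpan e V X d := by
  split_ifs with hs
  · exact smul_mem _ _ (lowering_mem_lexSpan hv (by grind))
  · simp

lemma raise_lowering_mem_lexSpan (he : IsModeFamily c z e) (hV : IsNonnegStable e V)
    (hVT : V ≤ killedAbove e T) (hT : 0 ≤ T) (hX : X ≤ X'.comap (e T)) (h0 : T = 0 → X ≤ X')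
    (hv : v ∈ V) {s : ℤ} (hs : 0 ≤ s) (hd : degree w < d ∨ degree w = d ∧ v ∈ X) :
    e (s + T) (lowering e w v) ∈ lexSpan e V X' (d - s) := by
  induction w generalizing s d with
  | nil =>
    rcases hs.eq_or_lt with rfl | hs
    · rw [zero_add]
      exact lowering_mem_lexSpan (w := []) (hV T hT hv)
        (by simpa using hd.imp_right (.imp_right (@hX v)))
    · rw [lowering_nil, Module.End.one_apply, mem_killedAbove.1 (hVT hv) _ (by omega)]
      exact zero_mem _
  | cons a w ih =>
    rw [degree_cons] at hd
    rw [lowering_cons, Module.End.mul_apply, he.apply]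
    have herr : degree w + a - s < d - s ∨ degree w + a - s = d - s ∧ (T = 0 → v ∈ X') :=
      hd.imp (fun h => by omega) fun h => ⟨by omega, fun hT => h0 hT h.2⟩
    have hw : degree w < d - a ∨ degree w = d - a ∧ v ∈ X := by grind
    refine add_mem (add_mem (smul_mem _ _ ?_) (smul_mem _ _ ?_))
      (central_lowering_mem_lexSpan hT hv herr _)
    · refine neg_mem_lexSpan ?_
      convert ih hs hw using 1
      ring_nf
    · rcases lt_or_ge s a with hsa | hsa
      · exact bracket_lowering_mem_lexSpan he hV hT hsa hv herr
      · convert ih (sub_nonneg.2 hsa) hw using 2 <;> ring_nf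

lemma raise_mem_lexSpan (he : IsModeFamily c z e) (hV : IsNonnegStable e V)
    (hVT : V ≤ killedAbove e T) (hT : 0 ≤ T) (hX : X ≤ X'.comap (e T)) (h0 : T = 0 → X ≤ X')
    {s : ℤ} (hs : 0 ≤ s) {x : A} (hx : x ∈ lexSpan e V X d) :
    e (s + T) x ∈ lexSpan e V X' (d - s) := by
  have : lexSpan e V X d ≤ (lexSpan e V X' (d - s)).comap (e (s + T)) :=
    lexSpan_le.2 fun _ _ hv h => raise_lowering_mem_lexSpan he hV hVT hT hX h0 hv hs h
  exact this hx

lemma commutator_lowering_mem_lexSpan (he : IsModeFamily c z e) (hV : IsNonnegStable e V)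
    (hT : 0 ≤ T) (hTe : Even T) (hv : v ∈ V) (h0 : T = 0 → v ∈ X) :
    e T (lowering e w v) - lowering e w (e T v) ∈ lexSpan e V X (degree w) := by
  induction w with
  | nil => simp
  | cons a w ih =>
    have herr : (degree w + a - 0 : ℤ) < degree (a :: w) ∨
        (degree w + a - 0 : ℤ) = degree (a :: w) ∧ (T = 0 → v ∈ X) :=
      .inr ⟨by rw [degree_cons]; push_cast; ring, h0⟩
    have hbr := bracket_lowering_mem_lexSpan he hV hT (by simp) hv herr
    have hcen := central_lowering_mem_lexSpan (e := e) hT hv herr (z T)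
    have hcomm : e (-(a : ℤ)) (e T (lowering e w v) - lowering e w (e T v)) ∈
        lexSpan e V X (degree (a :: w)) := neg_mem_lexSpan (by simpa using ih)
    rw [zero_add] at hbr hcen
    rw [map_sub] at hcomm
    rw [lowering_cons, Module.End.mul_apply, Module.End.mul_apply, he.apply,
      (hTe.mul_right _).neg_one_zpow, one_smul]
    convert add_mem (add_mem hcomm (smul_mem _ (c T (-a)) hbr)) hcen using 1
    abel

lemma raise_lowering_mem_lexSpan_of_forall_lt (he : IsModeFamily c z e) (hV : IsNonnegStable e V)
    (hVT : V ≤ killedAbove e T) (hT : 0 ≤ T) (hv : v ∈ V) (h0 : T = 0 → v ∈ X) {p : ℕ+}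
    (hp : ∀ a ∈ w, p < a) : e (p + T) (lowering e w v) ∈ lexSpan e V X (degree w - p) := by
  induction w with
  | nil => simp [mem_killedAbove.1 (hVT hv) (p + T) (by simp)]
  | cons a w ih =>
    have hpa : (p : ℤ) < a := by exact_mod_cast hp a (by simp)
    have hdeg : (degree w + a - p : ℤ) = degree (a :: w) - p := by rw [degree_cons]; lia
    rw [lowering_cons, Module.End.mul_apply, he.apply]
    refine add_mem (add_mem (smul_mem _ _ (neg_mem_lexSpan ?_)) (smul_mem _ _
      (bracket_lowering_mem_lexSpan he hV hT hpa hv (.inr ⟨hdeg, h0⟩))))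
      (central_lowering_mem_lexSpan hT hv (.inr ⟨hdeg, h0⟩) _)
    rw [show (degree (a :: w) - p - a : ℤ) = degree w - p by lia]
    exact ih fun b hb => hp b (by simp [hb])

/-- The sign produced by moving the letter `p` into an ordered word is invisible: it is `1` if `p`
may be repeated, and otherwise `p` does not occur a second time. -/
lemma smul_count_smul_neg_lowering_erase {p : ℕ+} (hw : (p :: w).Pairwise PBWOrder) (j : ℤ)
    (y : K) (x : A) :
    (-1 : K) ^ (j * -p) • (w.count p * y) • e (-p) (lowering e (w.erase p) x) =
      (w.count p * y) • lowering e w x := by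
  obtain ⟨hpw, hw⟩ := List.pairwise_cons.1 hw
  by_cases hmem : p ∈ w
  · have heven : Even (-(p : ℤ)) := by simpa [PBWOrder] using hpw p hmem
    rw [(heven.mul_left _).neg_one_zpow, one_smul, ← Module.End.mul_apply, ← lowering_cons,
      cons_erase_of_forall_le hw hmem fun b hb => (hpw b hb).le]
  · simp [List.count_eq_zero_of_not_mem hmem]

lemma raise_sub_leading_mem_lexSpan (he : IsModeFamily c z e) (hV : IsNonnegStable e V)
    (hVT : V ≤ killedAbove e T) (hT : 0 ≤ T) (hTe : Even T) (hv : v ∈ V) (h0 : T = 0 → v ∈ X)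
    {p : ℕ+} (hw : w.Pairwise PBWOrder) (hp : ∀ a ∈ w, p ≤ a) :
    e (p + T) (lowering e w v) -
      (w.count p * c (p + T) (-p)) • lowering e (w.erase p) (e T v) ∈
        lexSpan e V X (degree w - p) := by
  induction w with
  | nil => simp [mem_killedAbove.1 (hVT hv) (p + T) (by simp)]
  | cons a w ih =>
    rcases (hp a (by simp)).eq_or_lt with rfl | hpa
    · have hdeg : (degree (p :: w) - p : ℤ) = degree w := by rw [degree_cons]; lia
      have hlead := neg_mem_lexSpan (ih hw.of_cons fun b hb => hp b (by simp [hb]))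
      have hcomm := commutator_lowering_mem_lexSpan (w := w) he hV hT hTe hv h0
      have hcen := central_lowering_mem_lexSpan (e := e) (w := w) (s := p) (a := p) (d := degree w)
        hT hv (.inr ⟨by lia, h0⟩) (z (p + T))
      rw [hdeg, lowering_cons, Module.End.mul_apply, he.apply]
      convert add_mem (add_mem (smul_mem _ ((-1 : K) ^ (((p : ℤ) + T) * -p)) hlead)
        (smul_mem _ (c (p + T) (-p)) hcomm)) hcen using 1
      rw [map_sub, map_smul, smul_sub, smul_count_smul_neg_lowering_erase hw, List.erase_cons_head,
        List.count_cons_self, show (p : ℤ) + T + -p = T by ring]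
      push_cast
      module
    · have hlt : ∀ b ∈ a :: w, p < b := by
        simpa [hpa] using fun b hb => hpa.trans_le ((List.pairwise_cons.1 hw).1 b hb).le
      simpa [List.count_eq_zero_of_not_mem fun h => (hlt p h).false] using
        raise_lowering_mem_lexSpan_of_forall_lt he hV hVT hT hv h0 hlt

/-- An exhaustive filtration `0 = F 0 ≤ F 1 ≤ ⋯` of `V` which `φ` shifts by `s` and on whose
graded pieces `φ` is injective. -/
structure IsStrictFiltration (φ : Module.End K A) (V : Submodule K A) (F : ℕ → Submodule K A)
    (s : ℕ) : Prop where
  mono : Monotone F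
  zero : F 0 = ⊥
  le : ∀ n, F n ≤ V
  exhaustive : ∀ v ∈ V, ∃ n, v ∈ F n
  shift : ∀ n, F n ≤ (F (n + s)).comap φ
  strict : ∀ n, ∀ v ∈ F (n + 1), φ v ∈ F (n + s) → v ∈ F n

variable {F : ℕ → Submodule K A} {s : ℕ} {ι : Type*} {J : Finset ι} {u : ι → List ℕ+} {x : ι → A}

lemma sum_lowering_erase_mem_lexSpan (he : IsModeFamily c z e) (hV : IsNonnegStable e V)
    (hVT : V ≤ killedAbove e T) (hT : 0 ≤ T) (hTe : Even T) (hF : IsStrictFiltration (e T) V F s)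
    (hs : T = 0 → 0 < s) {d n : ℕ} (hu : ∀ i ∈ J, (u i).Pairwise PBWOrder)
    (hd : ∀ i ∈ J, degree (u i) = d) (hx : ∀ i ∈ J, x i ∈ F (n + 1)) {p : ℕ+}
    (hp : ∀ i ∈ J, ∀ a ∈ u i, p ≤ a)
    (h : ∑ i ∈ J, lowering e (u i) (x i) ∈ lexSpan e V (F n) d) :
    ∑ i ∈ J with p ∈ u i,
      lowering e ((u i).erase p) (((u i).count p * c (p + T) (-p)) • e T (x i)) ∈
        lexSpan e V (F (n + s)) (d - p) := by
  have hraise := raise_mem_lexSpan he hV hVT hT (hF.shift n)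
    (fun _ => hF.mono (Nat.le_add_right n s)) (Int.natCast_nonneg p) h
  have hlead : ∑ i ∈ J, (e (p + T) (lowering e (u i) (x i)) -
      lowering e ((u i).erase p) (((u i).count p * c (p + T) (-p)) • e T (x i))) ∈
        lexSpan e V (F (n + s)) (d - p) := sum_mem fun i hi => by
    rw [map_smul, ← hd i hi]
    exact raise_sub_leading_mem_lexSpan he hV hVT hT hTe (hF.le _ (hx i hi))
      (fun hT0 => hF.mono (by have := hs hT0; omega) (hx i hi)) (hu i hi) (hp i hi)
  rw [Finset.sum_sub_distrib, ← map_sum] at hlead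
  rw [Finset.sum_filter_of_ne fun i _ hi => ?_]
  · simpa using sub_mem hraise hlead
  · contrapose! hi
    simp [List.count_eq_zero_of_not_mem hi]

lemma exists_min_letter (hne : J.Nonempty) (hu : ∀ i ∈ J, u i ≠ []) :
    ∃ i ∈ J, ∃ p ∈ u i, ∀ j ∈ J, ∀ a ∈ u j, p ≤ a := by
  obtain ⟨i, hi⟩ := hne
  obtain ⟨a, ha⟩ := List.exists_mem_of_ne_nil _ (hu i hi)
  obtain ⟨p, ⟨j, hj, hp⟩, hmin⟩ := wellFounded_lt.has_min {a | ∃ i ∈ J, a ∈ u i} ⟨a, i, hi, ha⟩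
  exact ⟨j, hj, p, hp, fun k hk b hb => not_lt.1 (hmin b ⟨k, hk, hb⟩)⟩

lemma eq_empty_of_sum_lowering_mem_lexSpan [CharZero K] (he : IsModeFamily c z e)
    (hV : IsNonnegStable e V) (hVT : V ≤ killedAbove e T) (hT : 0 ≤ T) (hTe : Even T)
    (hc : ∀ p : ℕ+, c (p + T) (-p) ≠ 0) (hF : IsStrictFiltration (e T) V F s)
    (hs : T = 0 → 0 < s) {d n : ℕ} (hinj : Set.InjOn u J)
    (hu : ∀ i ∈ J, (u i).Pairwise PBWOrder) (hd : ∀ i ∈ J, degree (u i) = d)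
    (hx : ∀ i ∈ J, x i ∈ F (n + 1)) (hxn : ∀ i ∈ J, x i ∉ F n)
    (h : ∑ i ∈ J, lowering e (u i) (x i) ∈ lexSpan e V (F n) d) : J = ∅ := by
  induction d using Nat.strong_induction_on generalizing n J u x with
  | _ d ih =>
  by_contra hJ
  replace hJ := Finset.nonempty_iff_ne_empty.2 hJ
  by_cases hnil : ∃ i ∈ J, u i = []
  · obtain ⟨i, hi, hui⟩ := hnil
    obtain rfl : d = 0 := by rw [← hd i hi, hui, degree_nil]
    have hJ : J = {i} := Finset.eq_singleton_iff_unique_mem.2 ⟨hi, fun j hj =>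
      hinj hj hi ((degree_eq_zero.1 (hd j hj)).trans hui.symm)⟩
    rw [hJ, Finset.sum_singleton, hui] at h
    exact hxn i hi (lexSpan_zero_le h)
  · push Not at hnil
    obtain ⟨i, hi, p, hpi, hp⟩ := exists_min_letter hJ hnil
    have hcons : ∀ j ∈ J, p ∈ u j → p :: (u j).erase p = u j := fun j hj hpj =>
      cons_erase_of_forall_le (hu j hj) hpj (hp j hj)
    have hdp : ∀ j ∈ J, p ∈ u j → p + degree ((u j).erase p) = d := fun j hj hpj => by
      rw [← degree_cons, hcons j hj hpj, hd j hj]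
    have hsum := sum_lowering_erase_mem_lexSpan he hV hVT hT hTe hF hs hu hd hx hp h
    rw [← Nat.cast_sub (by have := hdp i hi hpi; omega)] at hsum
    have hempty := ih (d - p) (by have := hdp i hi hpi; have := p.pos; omega) ?_ ?_ ?_ ?_ ?_ hsum
    · exact Finset.notMem_empty i (hempty ▸ Finset.mem_filter.2 ⟨hi, hpi⟩)
    all_goals simp only [Set.InjOn, Finset.coe_filter, Set.mem_ofPred_eq, Finset.mem_filter,
      and_imp]
    · exact fun j hj hpj k hk hpk hjk => hinj hj hk (by
        rw [← hcons j hj hpj, hjk, hcons k hk hpk])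
    · exact fun j hj _ => (hu j hj).erase p
    · exact fun j hj hpj => by have := hdp j hj hpj; omega
    · exact fun j hj _ => smul_mem _ _ (by simpa [add_right_comm] using hF.shift _ (hx j hj))
    · refine fun j hj hpj hmem => hxn j hj (hF.strict n _ (hx j hj) ?_)
      refine (smul_mem_iff _ (mul_ne_zero ?_ (hc p))).1 hmem
      exact Nat.cast_ne_zero.2 (List.count_pos_iff.2 hpj).ne'

open scoped Classical in
lemma sum_lowering_mem_lexSpan_of_pbw_eq_zero {x : PBWWord →₀ V} {d : ℕ}
    (hx : pbw e V.subtype x = 0) (hd : ∀ w ∈ x.support, degree w ≤ d) :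
    ∑ w ∈ x.support.filter fun w : PBWWord => degree w = d ∧ (x w : A) ∉ X,
      lowering e w (x w) ∈ lexSpan e V X d := by
  rw [pbw_apply, Finsupp.sum, ← Finset.sum_filter_add_sum_filter_not _
    fun w : PBWWord => degree w = d ∧ (x w : A) ∉ X] at hx
  simp only [subtype_apply] at hx
  rw [eq_neg_of_add_eq_zero_left hx]
  refine neg_mem (sum_mem fun w hw => lowering_mem_lexSpan (x w).2 ?_)
  obtain ⟨hw, hwd⟩ := Finset.mem_filter.1 hw
  by_cases hX : (x w : A) ∈ X
  · exact (hd w hw).lt_or_eq.imp Nat.cast_lt.2 fun h => ⟨congrArg _ h, hX⟩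
  · exact .inl (Nat.cast_lt.2 ((hd w hw).lt_of_ne fun h => hwd ⟨h, hX⟩))

/-- Acting by `e (p + T)`, for `p` the least letter that occurs, strips one letter `p` off the
monomials of top degree and applies `e T` to their coefficients, up to lower terms. Iterating, a
relation among monomials would give one among coefficients, on which `e T` acts strictly. -/
theorem pbw_injective [CharZero K] (he : IsModeFamily c z e)
    (hV : IsNonnegStable e V) (hVT : V ≤ killedAbove e T) (hT : 0 ≤ T) (hTe : Even T)
    (hc : ∀ p : ℕ+, c (p + T) (-p) ≠ 0) (hF : IsStrictFiltration (e T) V F s)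
    (hs : T = 0 → 0 < s) : Function.Injective (pbw e V.subtype) := by
  classical
  refine (injective_iff_map_eq_zero _).2 fun x hx => ?_
  by_contra hne
  obtain ⟨w₀, hw₀, hmax⟩ :=
    Finset.exists_max_image x.support (fun w => degree w) (Finsupp.support_nonempty_iff.2 hne)
  let top := x.support.filter fun w : PBWWord => degree w = degree w₀
  have hbound : ∃ n, ∀ w ∈ top, (x w : A) ∈ F n := by
    choose n hn using fun w => hF.exhaustive (x w) (x w).2
    exact ⟨top.sup n, fun w hw => hF.mono (Finset.le_sup hw) (hn w)⟩
  obtain ⟨m, hm⟩ : ∃ m, Nat.find hbound = m + 1 := by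
    refine Nat.exists_eq_succ_of_ne_zero fun h0 => Finsupp.mem_support_iff.1 hw₀ ?_
    have hzero := Nat.find_spec hbound w₀ (Finset.mem_filter.2 ⟨hw₀, rfl⟩)
    rw [h0, hF.zero] at hzero
    simpa using hzero
  have hempty : (x.support.filter fun w : PBWWord => degree w = degree w₀ ∧ (x w : A) ∉ F m) =
      ∅ := by
    refine eq_empty_of_sum_lowering_mem_lexSpan (x := fun w : PBWWord => (x w : A)) (n := m)
      he hV hVT hT hTe hc hF hs Subtype.val_injective.injOn (fun w _ => w.2)
      (fun w hw => (Finset.mem_filter.1 hw).2.1) (fun w hw => ?_)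
      (fun w hw => (Finset.mem_filter.1 hw).2.2) (sum_lowering_mem_lexSpan_of_pbw_eq_zero hx hmax)
    obtain ⟨hw, hdeg, -⟩ := Finset.mem_filter.1 hw
    exact hm ▸ Nat.find_spec hbound w (Finset.mem_filter.2 ⟨hw, hdeg⟩)
  refine Nat.find_min hbound (by omega : m < _) fun w hw => by_contra fun hxw => ?_
  obtain ⟨hw, hdeg⟩ := Finset.mem_filter.1 hw
  exact Finset.notMem_empty w (hempty ▸ Finset.mem_filter.2 ⟨hw, hdeg, hxw⟩)

end Lex

section Straightening

/-- The operators spanned by the lowering monomials in fewer than `n` letters. -/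
def shorterSpan (e : ℤ → Module.End K A) (n : ℕ) : Submodule K (Module.End K A) :=
  span K (lowering e '' {w | w.length < n})

lemma lowering_mem_shorterSpan {w : List ℕ+} {n : ℕ} (h : w.length < n) :
    lowering e w ∈ shorterSpan e n :=
  subset_span ⟨w, h, rfl⟩

lemma neg_mul_mem_shorterSpan (a : ℕ+) {n : ℕ} {x : Module.End K A} (hx : x ∈ shorterSpan e n) :
    e (-(a : ℤ)) * x ∈ shorterSpan e (n + 1) := by
  have : shorterSpan e n ≤ (shorterSpan e (n + 1)).comap (LinearMap.mulLeft K (e (-a))) := by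
    rw [shorterSpan, span_le]
    rintro _ ⟨w, hw, rfl⟩
    exact lowering_mem_shorterSpan (w := a :: w) (Nat.succ_lt_succ hw)
  exact this hx

lemma lowering_swap_sub_mem_shorterSpan (he : IsModeFamily c z e) (a b : ℕ+) (w : List ℕ+) :
    lowering e (a :: b :: w) - (-1 : K) ^ (-(a : ℤ) * -b) • lowering e (b :: a :: w) ∈
      shorterSpan e (w.length + 2) := by
  have hab : -(a : ℤ) + -b = -((a + b : ℕ+) : ℤ) := by push_cast; ring
  have h0 : -((a + b : ℕ+) : ℤ) ≠ 0 := neg_ne_zero.2 (Int.natCast_ne_zero.2 (a + b).ne_zero)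
  have hmem : lowering e ((a + b) :: w) ∈ shorterSpan e (w.length + 2) :=
    lowering_mem_shorterSpan (by simp)
  convert smul_mem _ (c (-a) (-b)) hmem using 1
  rw [lowering_cons, lowering_cons, ← mul_assoc, he (-a) (-b), hab, if_neg h0]
  simp [add_mul, mul_assoc]

lemma exists_lowering_sub_smul_mem_shorterSpan (he : IsModeFamily c z e) {w w' : List ℕ+}
    (h : w.Perm w') : ∃ σ : K, lowering e w - σ • lowering e w' ∈ shorterSpan e w.length := by
  induction h with
  | nil => exact ⟨1, by simp⟩
  | cons a _ ih =>
    obtain ⟨σ, hσ⟩ := ih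
    exact ⟨σ, by simpa [mul_sub] using neg_mul_mem_shorterSpan a hσ⟩
  | swap a b w => exact ⟨_, lowering_swap_sub_mem_shorterSpan he b a w⟩
  | trans h _ ih ih' =>
    obtain ⟨σ, hσ⟩ := ih
    obtain ⟨τ, hτ⟩ := ih'
    refine ⟨σ * τ, ?_⟩
    rw [← h.length_eq] at hτ
    simpa [smul_sub, smul_smul] using add_mem hσ (smul_mem _ σ hτ)

lemma pairwise_or_lowering_mem_shorterSpan [NeZero (2 : K)] (he : IsModeFamily c z e) {w : List ℕ+}
    (h : w.Pairwise (· ≤ ·)) : w.Pairwise PBWOrder ∨ lowering e w ∈ shorterSpan e w.length := by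
  induction w with
  | nil => simp
  | cons a w ih =>
    rcases ih h.of_cons with hw | hw
    · cases w with
      | nil => simp
      | cons b w =>
        by_cases hab : PBWOrder a b
        · refine .inl (List.pairwise_cons.2 ⟨fun b' hb' => ?_, hw⟩)
          rcases List.mem_cons.1 hb' with rfl | hb'
          · exact hab
          · exact hab.trans ((List.pairwise_cons.1 hw).1 b' hb')
        · obtain ⟨rfl, hodd⟩ : a = b ∧ Odd (a : ℤ) := by
            have := (List.pairwise_cons.1 h).1 b (by simp)
            simp only [PBWOrder, not_or, not_and, Nat.not_even_iff_odd] at hab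
            have hab' := this.antisymm (not_lt.1 hab.1)
            exact ⟨hab', by exact_mod_cast hab.2 hab'⟩
          have hmem : lowering e ((a + a) :: w) ∈ shorterSpan e (w.length + 2) :=
            lowering_mem_shorterSpan (by simp)
          have hsq : lowering e (a :: a :: w) =
              (c (-a) (-a) / 2) • lowering e ((a + a) :: w) := by
            rw [lowering_cons, lowering_cons, ← mul_assoc, he.apply_self_of_odd hodd.neg,
              smul_mul_assoc, lowering_cons, PNat.add_coe, Nat.cast_add, neg_add]
          exact .inr (hsq ▸ smul_mem _ _ hmem)
    · exact .inr (neg_mul_mem_shorterSpan a hw)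

theorem lowering_mem_span_pairwise [NeZero (2 : K)] (he : IsModeFamily c z e) (w : List ℕ+) :
    lowering e w ∈ span K (Set.range fun u : PBWWord => lowering e u) := by
  induction hn : w.length using Nat.strong_induction_on generalizing w with
  | _ n ih =>
  subst hn
  have hshort : shorterSpan e w.length ≤ span K (Set.range fun u : PBWWord => lowering e u) := by
    rw [shorterSpan, span_le]
    rintro _ ⟨u, hu, rfl⟩
    exact ih _ hu u rfl
  have hperm := (List.perm_insertionSort (· ≤ ·) w).symm
  obtain ⟨σ, hσ⟩ := exists_lowering_sub_smul_mem_shorterSpan he hperm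
  rw [← sub_add_cancel (lowering e w) (σ • _)]
  refine add_mem (hshort hσ) (smul_mem _ _ ?_)
  rcases pairwise_or_lowering_mem_shorterSpan he (List.pairwise_insertionSort (· ≤ ·) w) with h | h
  · exact subset_span ⟨⟨_, h⟩, rfl⟩
  · exact hshort (by rwa [← hperm.length_eq] at h)

lemma lowering_mem_range_pbw [NeZero (2 : K)] (he : IsModeFamily c z e) (f : V →ₗ[K] A)
    (w : List ℕ+) (v : V) : lowering e w (f v) ∈ LinearMap.range (pbw e f) := by
  have : span K (Set.range fun u : PBWWord => lowering e u) ≤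
      (LinearMap.range (pbw e f)).comap (LinearMap.applyₗ (f v)) := by
    rw [span_le]
    rintro _ ⟨u, rfl⟩
    exact ⟨.single u v, by simp [pbw]⟩
  exact this (lowering_mem_span_pairwise he w)

theorem range_pbw_le_comap [NeZero (2 : K)] (he : IsModeFamily c z e) {f : V →ₗ[K] A}
    (hf : IsNonnegStable e (LinearMap.range f)) (k : ℤ) :
    LinearMap.range (pbw e f) ≤ (LinearMap.range (pbw e f)).comap (e k) := by
  rintro _ ⟨x, rfl⟩
  rw [pbw_apply, Finsupp.sum, mem_comap, map_sum]
  refine sum_mem fun w _ => ?_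
  rcases lt_or_ge k 0 with hk | hk
  · obtain ⟨a, rfl⟩ := exists_eq_neg_pnat hk
    exact lowering_mem_range_pbw he f (a :: w) (x w)
  · have hle : lexSpan e (LinearMap.range f) ⊥ (degree w + 1) ≤ LinearMap.range (pbw e f) := by
      refine lexSpan_le.2 ?_
      rintro u _ ⟨v, rfl⟩ -
      exact lowering_mem_range_pbw he f u v
    exact hle (nonneg_lowering_mem_lexSpan he hf ⟨x w, rfl⟩ hk (by simp))

end Straightening

section Induction

/-- `A` has no proper non-zero submodule stable under all the modes `e k`. -/
def IsIrreducibleFamily (e : ℤ → Module.End K A) : Prop :=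
  ∀ U : Submodule K A, (∀ k, U ≤ U.comap (e k)) → U = ⊥ ∨ U = ⊤

lemma map_lowering {e' : ℤ → Module.End K B} {F : A →ₗ[K] B}
    (hF : ∀ k v, F (e k v) = e' k (F v)) (w : List ℕ+) (v : A) :
    F (lowering e w v) = lowering e' w (F v) := by
  induction w with
  | nil => rfl
  | cons a w ih => rw [lowering_cons, lowering_cons, Module.End.mul_apply, hF, ih]; rfl

lemma map_pbw {e' : ℤ → Module.End K B} {F : A →ₗ[K] B} (hF : ∀ k v, F (e k v) = e' k (F v))
    (f : V →ₗ[K] A) (x : PBWWord →₀ V) : F (pbw e f x) = pbw e' (F ∘ₗ f) x := by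
  simp [pbw_apply, map_finsuppSum, map_lowering hF]

lemma pbw_single_nil (f : V →ₗ[K] A) (v : V) : pbw e f (.single ⟨[], .nil⟩ v) = f v := by
  simp [pbw]

lemma pbw_mapRange {U : Type*} [AddCommGroup U] [Module K U] (f : V →ₗ[K] A) (g : U →ₗ[K] V)
    (x : PBWWord →₀ U) : pbw e f (Finsupp.mapRange.linearMap g x) = pbw e (f ∘ₗ g) x := by
  simp [pbw_apply, Finsupp.sum_mapRange_index]

theorem pbw_surjective [NeZero (2 : K)] (he : IsModeFamily c z e) (hirr : IsIrreducibleFamily e)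
    {f : V →ₗ[K] A} (hf : IsNonnegStable e (LinearMap.range f)) (hf0 : LinearMap.range f ≠ ⊥) :
    Function.Surjective (pbw e f) := by
  rw [← LinearMap.range_eq_top]
  refine (hirr _ (range_pbw_le_comap he hf)).resolve_left fun hbot => hf0 ?_
  rw [eq_bot_iff, ← hbot]
  rintro _ ⟨v, rfl⟩
  exact ⟨_, pbw_single_nil f v⟩

theorem eq_of_le_of_isNonnegStable [NeZero (2 : K)] (he : IsModeFamily c z e)
    (hirr : IsIrreducibleFamily e) {U V : Submodule K A}
    (hinj : Function.Injective (pbw e V.subtype)) (hUV : U ≤ V) (hU : IsNonnegStable e U)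
    (hU0 : U ≠ ⊥) : U = V := by
  refine hUV.antisymm fun v hv => ?_
  obtain ⟨x, hx⟩ := pbw_surjective he hirr (f := U.subtype) (by rwa [range_subtype])
    (by rwa [range_subtype]) v
  have hcoeff : Finsupp.mapRange.linearMap (inclusion hUV) x = .single ⟨[], .nil⟩ ⟨v, hv⟩ :=
    hinj (by rw [pbw_mapRange, subtype_comp_inclusion, hx, pbw_single_nil, subtype_apply])
  have hv' := congrArg Subtype.val (DFunLike.congr_fun hcoeff ⟨[], .nil⟩)
  simp only [Finsupp.mapRange.linearMap_apply, Finsupp.mapRange_apply, coe_inclusion,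
    Finsupp.single_eq_same] at hv'
  exact hv' ▸ (x _).2

/-- The graph of the extension of `g` is the submodule of `A × B` generated by the graph of
`f v ↦ g v`, which is stable under the modes because it is spanned by lowering monomials. -/
theorem existsUnique_extension [NeZero (2 : K)] (he : IsModeFamily c z e)
    {e' : ℤ → Module.End K B} (he' : IsModeFamily c z e') {f : V →ₗ[K] A}
    (hf : Function.Bijective (pbw e f)) {g : V →ₗ[K] B}
    (hfg : ∀ k, 0 ≤ k → ∀ v, ∃ v', e k (f v) = f v' ∧ e' k (g v) = g v') :
    ∃! F : A →ₗ[K] B, (∀ k v, F (e k v) = e' k (F v)) ∧ F ∘ₗ f = g := by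
  let E := fun k => (e k).prodMap (e' k)
  have hfst : ∀ x, (pbw E (f.prod g) x).1 = pbw e f x := fun x => by
    rw [← LinearMap.fst_apply (R := K), map_pbw (e' := e) fun _ _ => rfl, LinearMap.fst_prod]
  have hsnd : ∀ x, (pbw E (f.prod g) x).2 = pbw e' g x := fun x => by
    rw [← LinearMap.snd_apply (R := K), map_pbw (e' := e') fun _ _ => rfl, LinearMap.snd_prod]
  have hstable : IsNonnegStable E (LinearMap.range (f.prod g)) := by
    rintro k hk _ ⟨v, rfl⟩
    obtain ⟨v', hf', hg'⟩ := hfg k hk v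
    exact ⟨v', Prod.ext hf'.symm hg'.symm⟩
  let eqv := LinearEquiv.ofBijective (pbw e f) hf
  have heqv : ∀ x, eqv.symm (pbw e f x) = x := eqv.symm_apply_apply
  refine ⟨pbw e' g ∘ₗ eqv.symm, ⟨fun k v => ?_, ?_⟩, fun F ⟨hF, hFf⟩ => ?_⟩
  · obtain ⟨x, rfl⟩ := hf.2 v
    obtain ⟨y, hy⟩ := range_pbw_le_comap (he.prodMap he') hstable k ⟨x, rfl⟩
    have hy₁ : pbw e f y = e k (pbw e f x) := by rw [← hfst, ← hfst, hy]; rfl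
    have hy₂ : pbw e' g y = e' k (pbw e' g x) := by rw [← hsnd, ← hsnd, hy]; rfl
    simp [← hy₁, heqv, hy₂]
  · ext v
    rw [LinearMap.comp_apply, LinearMap.comp_apply, ← pbw_single_nil (e := e) f v]
    exact (congrArg (pbw e' g) (heqv _)).trans (pbw_single_nil g v)
  · ext v
    obtain ⟨x, rfl⟩ := hf.2 v
    simp [map_pbw hF, hFf, heqv]

end Induction

section PositiveLevel

variable {T : ℤ} {v : A}

/-- If `e T v = 0`, then `e (T - 1) v` is killed by all modes of degree at least `T - 1`. -/
lemma eq_zero_of_mem_killedAbove_of_apply_eq_zero [NeZero (2 : K)] (he : IsModeFamily c z e)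
    (hT : 0 < T) (hTe : Even T) (hbot : killedAbove e (T - 2) = ⊥) (hv : v ∈ killedAbove e T)
    (h : e T v = 0) : v = 0 := by
  have hkill : ∀ k, T ≤ k → e k v = 0 := fun k hk =>
    hk.eq_or_lt.elim (fun hk => hk ▸ h) (mem_killedAbove.1 hv k)
  have hT2 : 2 ≤ T := by obtain ⟨r, rfl⟩ := hTe; omega
  have hodd : Odd (T - 1) := hTe.sub_odd odd_one
  have hpred : e (T - 1) v ∈ killedAbove e (T - 2) := by
    refine mem_killedAbove.2 fun k hk => ?_
    rcases eq_or_ne k (T - 1) with rfl | hne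
    · rw [← Module.End.mul_apply, he.apply_self_of_odd hodd, LinearMap.smul_apply,
        hkill _ (by omega), smul_zero]
    · rw [he.apply, hkill k (by omega), hkill (k + (T - 1)) (by omega), if_neg (by omega)]
      simp
  rw [hbot, mem_bot] at hpred
  have hv2 : v ∈ killedAbove e (T - 2) := by
    refine mem_killedAbove.2 fun k hk => ?_
    rcases eq_or_ne k (T - 1) with rfl | hne
    · exact hpred
    · exact hkill k (by omega)
  simpa [hbot] using hv2

lemma isStrictFiltration_of_injOn {φ : Module.End K A} {V : Submodule K A} (hV : V ≤ V.comap φ)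
    (hφ : ∀ v ∈ V, φ v = 0 → v = 0) :
    IsStrictFiltration φ V (fun n => if n = 0 then ⊥ else V) 0 where
  mono := monotone_nat_of_le_succ fun n => by cases n <;> simp
  zero := rfl
  le n := by cases n <;> simp
  exhaustive v hv := ⟨1, hv⟩
  shift n := by cases n <;> simp [hV]
  strict n v hv h := by
    cases n with
    | zero => exact hφ v hv h
    | succ n => exact hv

theorem pbw_killedAbove_injective [CharZero K] (he : IsModeFamily c z e) (hT : 0 < T)
    (hTe : Even T) (hc : ∀ p : ℕ+, c (p + T) (-p) ≠ 0) (hbot : killedAbove e (T - 2) = ⊥) :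
    Function.Injective (pbw e (killedAbove e T).subtype) :=
  have hstable := he.isNonnegStable_killedAbove hT.le
  pbw_injective he hstable le_rfl hT.le hTe hc
    (isStrictFiltration_of_injOn (hstable T hT.le) fun _ =>
      eq_zero_of_mem_killedAbove_of_apply_eq_zero he hT hTe hbot)
    fun hT0 => absurd hT0 hT.ne'

end PositiveLevel

section LevelZero

open Polynomial

lemma X_mul_mem_degreeLT {p : K[X]} {n : ℕ} :
    X * p ∈ degreeLT K (n + 1) ↔ p ∈ degreeLT K n := by
  simp only [mem_degreeLT, degree_lt_iff_coeff_zero]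
  refine ⟨fun h i hi => by simpa using h (i + 1) (by omega), fun h i hi => ?_⟩
  obtain ⟨j, rfl⟩ : ∃ j, i = j + 1 := ⟨i - 1, by omega⟩
  simpa using h j (by omega)

lemma isStrictFiltration_map_degreeLT {φ : Module.End K A} {Φ : K[X] →ₗ[K] A}
    (hinj : Function.Injective Φ) (hΦ : ∀ p, φ (Φ p) = Φ (X * p)) :
    IsStrictFiltration φ (LinearMap.range Φ) (fun n => (degreeLT K n).map Φ) 1 where
  mono _ _ h := map_mono (degreeLT_mono h)
  zero := (Submodule.eq_bot_iff _).2 <| by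
    rintro _ ⟨p, hp, rfl⟩
    rw [degree_eq_bot.1 (Nat.WithBot.lt_zero_iff.1 (mem_degreeLT.1 hp)), map_zero]
  le _ := LinearMap.map_le_range
  exhaustive := by
    rintro _ ⟨p, rfl⟩
    refine ⟨p.natDegree + 1, mem_map_of_mem (mem_degreeLT.2 ?_)⟩
    exact degree_le_natDegree.trans_lt (by exact_mod_cast p.natDegree.lt_succ_self)
  shift n := by
    rintro _ ⟨p, hp, rfl⟩
    exact ⟨X * p, X_mul_mem_degreeLT.2 hp, (hΦ p).symm⟩
  strict n := by
    rintro _ ⟨p, -, rfl⟩ ⟨q, hq, hqp⟩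
    rw [hΦ] at hqp
    exact mem_map_of_mem (X_mul_mem_degreeLT.1 (hinj hqp ▸ hq))

lemma eq_zero_of_aeval_apply_eq_zero [IsAlgClosed K] {φ : Module.End K A} {W : Submodule K A}
    (hW : W ≤ W.comap φ) (hφ : ∀ v ∈ W, ∀ μ : K, φ v = μ • v → v = 0) {p : K[X]} (hp : p ≠ 0)
    {v : A} (hv : v ∈ W) (h : aeval φ p v = 0) : v = 0 := by
  induction hn : p.natDegree generalizing p with
  | zero =>
    obtain ⟨a, rfl⟩ := natDegree_eq_zero.1 hn
    have ha : a ≠ 0 := by simpa using hp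
    simpa [ha] using h
  | succ n ih =>
    obtain ⟨r, hr⟩ := IsAlgClosed.exists_root p fun h0 => by
      simp [natDegree_eq_of_degree_eq_some h0] at hn
    obtain ⟨q, rfl⟩ := dvd_iff_isRoot.2 hr
    have hq : q ≠ 0 := right_ne_zero_of_mul hp
    refine ih hq (hφ _ (aeval_apply_smul_mem_of_le_comap hv q φ hW) r ?_) ?_
    · simpa [sub_eq_zero] using h
    · rw [natDegree_mul (X_sub_C_ne_zero r) hq, natDegree_X_sub_C] at hn
      omega

lemma isNonnegStable_of_le_killedAbove_zero {U : Submodule K A} (h : U ≤ killedAbove e 0)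
    (h0 : U ≤ U.comap (e 0)) : IsNonnegStable e U := by
  intro k hk v hv
  rcases hk.eq_or_lt with rfl | hk
  · exact h0 hv
  · simp [mem_killedAbove.1 (h hv) k hk]

/-- Otherwise the powers of `e 0` applied to a singular vector `v` are linearly independent. They
span the universal Verma module `K[e 0] v`, in which `e 0` generates a proper submodule. -/
theorem exists_eigenvector_of_killedAbove_zero_ne_bot [CharZero K] [IsAlgClosed K]
    (he : IsModeFamily c z e) (hirr : IsIrreducibleFamily e) (hc : ∀ p : ℕ+, c p (-p) ≠ 0)
    (h : killedAbove e 0 ≠ ⊥) : ∃ v ∈ killedAbove e 0, v ≠ 0 ∧ ∃ μ : K, e 0 v = μ • v := by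
  by_contra! hcon
  obtain ⟨v, hv, hv0⟩ := exists_mem_ne_zero_of_ne_bot h
  have hW := he.isNonnegStable_killedAbove le_rfl 0 le_rfl
  let Φ : K[X] →ₗ[K] A := LinearMap.applyₗ v ∘ₗ (aeval (e 0)).toLinearMap
  have hΦ : ∀ p, e 0 (Φ p) = Φ (X * p) := fun p => by simp [Φ]
  have hinj : Function.Injective Φ := (injective_iff_map_eq_zero Φ).2 fun p hp => by
    by_contra hp0
    exact hv0 (eq_zero_of_aeval_apply_eq_zero hW
      (fun w hw μ hμ => by_contra fun hw0 => hcon w hw hw0 μ hμ) hp0 hv hp)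
  have hV : LinearMap.range Φ ≤ killedAbove e 0 := by
    rintro _ ⟨p, rfl⟩
    exact aeval_apply_smul_mem_of_le_comap hv p (e 0) hW
  have hV0 : LinearMap.range Φ ≤ (LinearMap.range Φ).comap (e 0) := by
    rintro _ ⟨p, rfl⟩
    exact ⟨X * p, (hΦ p).symm⟩
  have hUV := map_le_iff_le_comap.2 hV0
  have hpbw := pbw_injective he (isNonnegStable_of_le_killedAbove_zero hV hV0) hV le_rfl Even.zero
    (by simpa using hc) (isStrictFiltration_map_degreeLT hinj hΦ) fun _ => one_pos
  have hU := eq_of_le_of_isNonnegStable he hirr hpbw hUV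
    (isNonnegStable_of_le_killedAbove_zero (hUV.trans hV) (map_le_iff_le_comap.1 (map_mono hUV)))
    fun hbot => X_ne_zero (R := K) (hinj ?_)
  · obtain ⟨_, ⟨p, rfl⟩, hp⟩ := hU.ge ⟨1, rfl⟩
    exact not_isUnit_X (.of_mul_eq_one p (hinj (by rw [← hΦ, hp])))
  · rw [map_zero, ← mul_one X, ← hΦ]
    exact (mem_bot K).1 (hbot ▸ mem_map_of_mem ⟨1, rfl⟩)

end LevelZero

end ModeFamily

section Modes

/-- The operators by which the homogeneous basis of the Neveu–Schwarz algebra acts on `M`, with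
degrees doubled to be integers: `L_m` is the mode of degree `2 * m` and `G_r`, which is `M.G j` for
`r = j - 1/2`, the mode of degree `2 * j - 1`. -/
noncomputable def mode (M : NSRep) (k : ℤ) : Module.End ℂ M.carrier :=
  if Even k then M.L (k / 2) else M.G ((k + 1) / 2)

/-- The structure constants of the Neveu–Schwarz algebra, for the doubled degrees of `mode`. -/
noncomputable def nsCoeff (j k : ℤ) : ℂ :=
  if Even j then if Even k then (j - k) / 2 else (j - 2 * k) / 4
  else if Even k then (2 * j - k) / 4 else 2

/-- The scalar by which the central term of `[e_j, e_{-j}]` acts on a module of central charge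
`ℓ`, for the doubled degrees of `mode`. -/
noncomputable def nsCentral (ℓ : ℂ) (j : ℤ) : ℂ :=
  if Even j then ((j / 2) ^ 3 - j / 2) / 12 * ℓ
  else (((j + 1) / 2) ^ 2 - (j + 1) / 2) / 3 * ℓ

lemma forall_int_iff_even_odd {P : ℤ → Prop} :
    (∀ k, P k) ↔ (∀ m, P (2 * m)) ∧ ∀ j, P (2 * j - 1) := by
  refine ⟨fun h => ⟨fun _ => h _, fun _ => h _⟩, fun h k => ?_⟩
  obtain ⟨m, rfl | rfl⟩ := k.even_or_odd'
  · exact h.1 m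
  · simpa [mul_add, add_sub_assoc] using h.2 (m + 1)

lemma forall_nonneg_iff_even_odd {P : ℤ → Prop} :
    (∀ k, 0 ≤ k → P k) ↔ (∀ i : ℕ, P (2 * i)) ∧ ∀ j : ℕ, P (2 * (j + 1) - 1) := by
  refine ⟨fun h => ⟨fun _ => h _ (by omega), fun _ => h _ (by omega)⟩, fun h k hk => ?_⟩
  lift k to ℕ using hk
  obtain ⟨m, rfl | rfl⟩ := k.even_or_odd'
  · simpa using h.1 m
  · simpa [mul_add, add_sub_assoc] using h.2 m

lemma not_even_two_mul_sub_one (j : ℤ) : ¬Even (2 * j - 1) :=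
  Int.not_even_iff_odd.2 ((even_two_mul j).sub_odd odd_one)

variable {M : NSRep}

@[simp]
lemma mode_two_mul (m : ℤ) : mode M (2 * m) = M.L m := by
  simp [mode]

@[simp]
lemma mode_two_mul_sub_one (j : ℤ) : mode M (2 * j - 1) = M.G j := by
  simp [mode]

lemma nsCoeff_add_neg_ne_zero {T : ℤ} (hT : 0 ≤ T) (hTe : Even T) (p : ℕ+) :
    nsCoeff (p + T) (-p) ≠ 0 := by
  unfold nsCoeff
  have hp := p.pos
  by_cases h : Even (p : ℤ)
  · rw [if_pos (h.add hTe), if_pos h.neg]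
    exact div_ne_zero (by exact_mod_cast (by omega : (p : ℤ) + T - -p ≠ 0)) two_ne_zero
  · rw [if_neg (by simpa [Int.even_add, hTe] using h), if_neg (by simpa using h)]
    exact two_ne_zero

variable {ℓ : ℂ}

theorem isModeFamily_mode (hM : M.HasCentralCharge ℓ) :
    IsModeFamily nsCoeff (nsCentral ℓ) (mode M) := by
  have hodd := not_even_two_mul_sub_one
  rw [IsModeFamily, forall_int_iff_even_odd]
  simp only [forall_int_iff_even_odd (P := fun k => mode M _ * mode M k = _)]
  refine ⟨fun a => ⟨fun b => ?_, fun b => ?_⟩, fun a => ⟨fun b => ?_, fun b => ?_⟩⟩ <;>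
    ext v
  · have h := eq_add_of_sub_eq (M.rel_LL a b v)
    have hsign : (-1 : ℂ) ^ (2 * a * (2 * b)) = 1 := Even.neg_one_zpow (by simp)
    have hc : nsCoeff (2 * a) (2 * b) = a - b := by
      rw [nsCoeff, if_pos (by simp), if_pos (by simp)]; push_cast; ring
    have hz : nsCentral ℓ (2 * a) = (a ^ 3 - a) / 12 * ℓ := by simp [nsCentral]
    rw [hM] at h
    simp only [Module.End.mul_apply, LinearMap.add_apply, LinearMap.smul_apply,
      Module.End.one_apply, hsign, hc, hz, ← mul_add, mode_two_mul, h, mul_eq_zero, two_ne_zero,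
      false_or]
    split_ifs <;> module
  · have h := eq_add_of_sub_eq (M.rel_LG a b v)
    have hsign : (-1 : ℂ) ^ (2 * a * (2 * b - 1)) = 1 := Even.neg_one_zpow (by simp)
    have hc : nsCoeff (2 * a) (2 * b - 1) = (a - 2 * b + 1) / 2 := by
      rw [nsCoeff, if_pos (by simp), if_neg (hodd b)]; push_cast; ring
    simp only [Module.End.mul_apply, LinearMap.add_apply, LinearMap.smul_apply,
      Module.End.one_apply, hsign, hc, ← add_sub_assoc, ← mul_add, mode_two_mul,
      mode_two_mul_sub_one, h, if_neg (show 2 * (a + b) - 1 ≠ 0 by omega)]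
    module
  · have h := eq_add_of_sub_eq (M.rel_LG b a v)
    have hsign : (-1 : ℂ) ^ ((2 * a - 1) * (2 * b)) = 1 := Even.neg_one_zpow (by simp)
    have hc : nsCoeff (2 * a - 1) (2 * b) = -((b - 2 * a + 1) / 2) := by
      rw [nsCoeff, if_neg (hodd a), if_pos (by simp)]; push_cast; ring
    simp only [Module.End.mul_apply, LinearMap.add_apply, LinearMap.smul_apply,
      Module.End.one_apply, hsign, hc, sub_add_eq_add_sub, ← mul_add, mode_two_mul,
      mode_two_mul_sub_one, h, add_comm b, if_neg (show 2 * (a + b) - 1 ≠ 0 by omega)]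
    module
  · have h := eq_sub_of_add_eq (M.rel_GG a b v)
    have hsign : (-1 : ℂ) ^ ((2 * a - 1) * (2 * b - 1)) = -1 := Odd.neg_one_zpow (by grind)
    have hc : nsCoeff (2 * a - 1) (2 * b - 1) = 2 := by simp [nsCoeff, hodd]
    have hz : nsCentral ℓ (2 * a - 1) = (a ^ 2 - a) / 3 * ℓ := by simp [nsCentral, hodd]
    have hdeg : 2 * a - 1 + (2 * b - 1) = 2 * (a + b - 1) := by ring
    rw [hM] at h
    simp only [Module.End.mul_apply, LinearMap.add_apply, LinearMap.smul_apply,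
      Module.End.one_apply, hsign, hc, hz, hdeg, mode_two_mul, mode_two_mul_sub_one, h,
      mul_eq_zero, two_ne_zero, false_or, sub_eq_zero]
    split_ifs <;> module

lemma isIrreducibleFamily_mode (hM : M.HasCentralCharge ℓ) (hsimple : M.IsSimple) :
    IsIrreducibleFamily (mode M) := fun U hU =>
  hsimple.2 U ⟨fun m _ hv => mode_two_mul (M := M) m ▸ hU (2 * m) hv,
    fun j _ hv => mode_two_mul_sub_one (M := M) j ▸ hU (2 * j - 1) hv,
    fun v hv => hM v ▸ U.smul_mem ℓ hv⟩

lemma isNSHom_iff_mode {W : NSRep} (hM : M.HasCentralCharge ℓ) (hW : W.HasCentralCharge ℓ)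
    {F : M.carrier →ₗ[ℂ] W.carrier} :
    IsNSHom M W F ↔ ∀ k v, F (mode M k v) = mode W k (F v) := by
  rw [forall_int_iff_even_odd]
  simp [IsNSHom, hM _, hW _]

lemma exists_killedAbove_mode_ne_bot (hM : M.IsRestricted) (h : ∃ v : M.carrier, v ≠ 0) :
    ∃ t : ℕ, killedAbove (mode M) (2 * t) ≠ ⊥ := by
  obtain ⟨v, hv⟩ := h
  obtain ⟨N, hN⟩ := hM v
  refine ⟨N.toNat, (Submodule.ne_bot_iff _).2 ⟨v, mem_killedAbove.2 ?_, hv⟩⟩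
  rw [forall_int_iff_even_odd]
  exact ⟨fun m hm => by simpa using (hN m (by omega)).1,
    fun j hj => by simpa using (hN j (by omega)).2⟩

theorem isHighestWeight_of_killedAbove_zero_ne_bot (hM : M.HasCentralCharge ℓ)
    (hsimple : M.IsSimple) (h : killedAbove (mode M) 0 ≠ ⊥) : M.IsHighestWeight := by
  obtain ⟨v, hv, hv0, μ, hμ⟩ := exists_eigenvector_of_killedAbove_zero_ne_bot
    (isModeFamily_mode hM) (isIrreducibleFamily_mode hM hsimple)
    (fun p => by simpa using nsCoeff_add_neg_ne_zero le_rfl Even.zero p) h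
  rw [mem_killedAbove, forall_int_iff_even_odd] at hv
  refine ⟨v, μ, ℓ, hv0, ?_, hM v, fun n hn => ?_, fun j hj => ?_, fun p hp hvp => ?_⟩
  · rw [← hμ, ← mode_two_mul, mul_zero]
  · simpa using hv.1 n (by omega)
  · simpa using hv.2 j (by omega)
  · exact (hsimple.2 p hp).resolve_left ((Submodule.ne_bot_iff p).2 ⟨v, hvp, hv0⟩)

end Modes

section Restriction

variable {M : NSRep} {U : Submodule ℂ M.carrier}

lemma isNonnegStable_mode_iff : IsNonnegStable (mode M) U ↔
    (∀ i : ℕ, U ≤ U.comap (M.L i)) ∧ ∀ j : ℕ, U ≤ U.comap (M.G (j + 1)) := by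
  rw [IsNonnegStable, forall_nonneg_iff_even_odd]
  simp

/-- The `b`-module given by a subspace of `M` stable under the modes of non-negative degree, which
are those spanning `b`. -/
abbrev restrictB (U : Submodule ℂ M.carrier) (hU : IsNonnegStable (mode M) U) : BRep where
  carrier := U
  L i := (M.L i).restrict ((isNonnegStable_mode_iff.1 hU).1 i)
  G j := (M.G (j + 1)).restrict ((isNonnegStable_mode_iff.1 hU).2 j)
  rel_LL m n v := by
    have hcentral : (if (m : ℤ) + n = 0 then (((m : ℤ) : ℂ) ^ 3 - (m : ℤ)) / 12 else 0) = 0 :=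
      ite_eq_right_iff.2 fun h => by simp [show m = 0 by omega]
    ext
    have h := M.rel_LL m n v
    rw [hcentral, zero_smul, add_zero] at h
    simpa using h
  rel_LG m j v := by
    ext
    have h := M.rel_LG m (j + 1) v
    rw [show ((m : ℤ) : ℂ) - 2 * ((j + 1 : ℤ) : ℂ) + 1 = m - 2 * j - 1 by push_cast; ring] at h
    simpa [add_assoc] using h
  rel_GG j k v := by
    ext
    have h := M.rel_GG (j + 1) (k + 1) v
    rw [if_neg (by omega), show (j : ℤ) + 1 + (k + 1) - 1 = j + k + 1 by ring] at h
    simpa using h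

variable {hU : IsNonnegStable (mode M) U} {ℓ : ℂ}

lemma exists_mode_eq_of_isBLinear {W : NSRep} {g : U →ₗ[ℂ] W.carrier}
    (hg : IsBLinear (restrictB U hU) W g) (k : ℤ) (hk : 0 ≤ k) (v : U) :
    ∃ v' : U, mode M k v = v' ∧ mode W k (g v) = g v' := by
  revert k
  rw [forall_nonneg_iff_even_odd]
  simp only [mode_two_mul, mode_two_mul_sub_one]
  exact ⟨fun i => ⟨_, rfl, (hg.1 i v).symm⟩, fun j => ⟨_, rfl, (hg.2 j v).symm⟩⟩

theorem isInduced_restrictB (hM : M.HasCentralCharge ℓ)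
    (h : Function.Bijective (pbw (mode M) U.subtype)) :
    IsInduced ℓ (restrictB U hU) M U.subtype := by
  refine ⟨⟨fun _ _ => rfl, fun _ _ => rfl⟩, hM, fun W hW g hg => ?_⟩
  simpa only [isNSHom_iff_mode hM hW] using
    existsUnique_extension (isModeFamily_mode hM) (isModeFamily_mode hW) h
      (exists_mode_eq_of_isBLinear hg)

theorem isSimple_restrictB (hM : M.HasCentralCharge ℓ) (hsimple : M.IsSimple) (hU0 : U ≠ ⊥)
    (hinj : Function.Injective (pbw (mode M) U.subtype)) : (restrictB U hU).IsSimple := by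
  refine ⟨?_, fun p hp => or_iff_not_imp_left.2 fun hp0 => ?_⟩
  · obtain ⟨v, hv, hv0⟩ := exists_mem_ne_zero_of_ne_bot hU0
    exact ⟨⟨v, hv⟩, fun h => hv0 (congrArg Subtype.val h)⟩
  · have hstable : IsNonnegStable (mode M) (p.map U.subtype) := isNonnegStable_mode_iff.2
      ⟨fun i => map_le_iff_le_comap.2 fun v hv => ⟨_, hp.1 i v hv, rfl⟩,
        fun j => map_le_iff_le_comap.2 fun v hv => ⟨_, hp.2 j v hv, rfl⟩⟩
    have hmap := map_injective_of_injective U.injective_subtype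
    have hpU : p.map U.subtype = U := eq_of_le_of_isNonnegStable (isModeFamily_mode hM)
      (isIrreducibleFamily_mode hM hsimple) hinj (map_subtype_le U p) hstable
      fun hbot => hp0 (hmap (hbot.trans (Submodule.map_bot _).symm))
    exact hmap (hpU.trans (map_subtype_top U).symm)

lemma restrictB_L_eq_zero {t : ℕ} (hUt : U ≤ killedAbove (mode M) (2 * t)) {i : ℕ} (hi : t < i)
    (v : (restrictB U hU).carrier) : (restrictB U hU).L i v = 0 := by
  have h := mem_killedAbove.1 (hUt (Subtype.property v)) (2 * i) (by omega)
  exact Subtype.ext (by simpa using h)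

lemma restrictB_G_eq_zero {t : ℕ} (hUt : U ≤ killedAbove (mode M) (2 * t)) {j : ℕ} (hj : t ≤ j)
    (v : (restrictB U hU).carrier) : (restrictB U hU).G j v = 0 := by
  have h := mem_killedAbove.1 (hUt (Subtype.property v)) (2 * (j + 1) - 1) (by omega)
  exact Subtype.ext (by simpa using h)

lemma restrictB_L_injective {t : ℕ} (h : ∀ v ∈ U, M.L t v = 0 → v = 0) :
    Function.Injective ((restrictB U hU).L t) :=
  (injective_iff_map_eq_zero _).2 fun v hv =>
    Subtype.ext (h _ (Subtype.property v) (congrArg Subtype.val hv))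

theorem exists_isInduced_of_killedAbove_eq_bot (hM : M.HasCentralCharge ℓ)
    (hsimple : M.IsSimple) {t : ℕ} (ht : 0 < t) (hbot : killedAbove (mode M) (2 * t - 2) = ⊥)
    (hne : killedAbove (mode M) (2 * t) ≠ ⊥) :
    ∃ (V : BRep) (ι : V.carrier →ₗ[ℂ] M.carrier), V.IsSimple ∧ Function.Injective (V.L t) ∧
      (∀ i : ℕ, t < i → ∀ v : V.carrier, V.L i v = 0) ∧
      (∀ j : ℕ, t ≤ j → ∀ v : V.carrier, V.G j v = 0) ∧ IsInduced ℓ V M ι := by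
  have he := isModeFamily_mode hM
  have hT : (0 : ℤ) < 2 * t := by omega
  have hTe : Even (2 * t : ℤ) := even_two_mul _
  have hstable := he.isNonnegStable_killedAbove hT.le
  have hinj := pbw_killedAbove_injective he hT hTe (nsCoeff_add_neg_ne_zero hT.le hTe) hbot
  have hsurj := pbw_surjective he (isIrreducibleFamily_mode hM hsimple)
    (f := (killedAbove (mode M) (2 * t)).subtype) (by rwa [range_subtype])
    (by rwa [range_subtype])
  refine ⟨restrictB _ hstable, Submodule.subtype _, isSimple_restrictB hM hsimple hne hinj,
    restrictB_L_injective fun v hv h => ?_, fun _ => restrictB_L_eq_zero le_rfl,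
    fun _ => restrictB_G_eq_zero le_rfl, isInduced_restrictB hM ⟨hinj, hsurj⟩⟩
  exact eq_zero_of_mem_killedAbove_of_apply_eq_zero he hT hTe hbot hv (by rwa [mode_two_mul])

end Restriction
end NeveuSchwarz

/-- Every simple restricted Neveu–Schwarz module of central charge `ℓ` is
isomorphic either to a simple highest weight module, or to an induced module `Ind_ℓ(V)`
where, for some `t ∈ ℤ_+`, `V` is a simple `b`-module annihilated by `m^{(t)}`
(i.e. `L_i V = 0` for `i > t` and `G_{j-1/2} V = 0` for `j > t`, so `V` is a module over
`b^{(t)} = b / m^{(t)}`) on which the action of `L_t` is injective.  (Since `IsInduced`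
characterizes `Ind_ℓ(V)` up to isomorphism, `S ≅ Ind_ℓ(V)` is expressed by saying that `S`
itself, with a suitable `b`-module map `ι : V → S`, satisfies the universal property.) -/
theorem simple_restricted_classification
    (ℓ : ℂ) (S : NSRep) (hsimple : S.IsSimple) (hres : S.IsRestricted)
    (hcc : S.HasCentralCharge ℓ) :
    S.IsHighestWeight ∨
      ∃ (t : ℕ) (V : BRep) (ι : V.carrier →ₗ[ℂ] S.carrier), 0 < t ∧ V.IsSimple ∧
        Function.Injective (V.L t) ∧
        (∀ i : ℕ, t < i → ∀ v : V.carrier, V.L i v = 0) ∧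
        (∀ j : ℕ, t ≤ j → ∀ v : V.carrier, V.G j v = 0) ∧
        IsInduced ℓ V S ι := by
  classical
  have hex := NeveuSchwarz.exists_killedAbove_mode_ne_bot hres hsimple.1
  have hne := Nat.find_spec hex
  have hmin := fun s hs => not_not.1 (Nat.find_min hex (m := s) hs)
  generalize Nat.find hex = t at hne hmin
  rcases t.eq_zero_or_pos with rfl | ht
  · exact .inl <| NeveuSchwarz.isHighestWeight_of_killedAbove_zero_ne_bot hcc hsimple
      (by simpa using hne)
  · have hbot := hmin (t - 1) (Nat.sub_lt ht one_pos)
    rw [Nat.cast_pred ht, mul_sub_one] at hbot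
    obtain ⟨V, ι, hV⟩ :=
      NeveuSchwarz.exists_isInduced_of_killedAbove_eq_bot hcc hsimple ht hbot hne
    exact .inr ⟨t, V, ι, ht, hV⟩
end
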